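/- Fix an odd integer p ≥ 5 and C₀ > 0. Let u : ℝ × (0,∞) → ℝ be C² on {(t,r) : r > |t|} and satisfy ∂_t²u − ∂_r²u − (3/r)∂_r u = |u|^{p−1}u there, with data (u₀, u₁) = (u(0,·), ∂_t u(0,·)). Assume: (i) (u₀,u₁) ∈ H(R₀) for every R₀ > 0; (ii) ∫₀^∞ |u₀(r)|^{2(p−1)} r³ dr < ∞; (iii) for every R₀ > 0 and every ρ ≥ R₀, ‖u‖_{L²L⁸(ρ)} + ‖u‖_{L³L⁶(ρ)} + sup_{t∈ℝ} ‖(u(t,·), ∂_t u(t,·))‖_{H(ρ+|t|)} ≤ C₀‖(u₀,u₁)‖_{H(ρ)}; and (iv) for every R₀ > 0 the exterior energy of u on {r > R₀ + |t|} vanishes. Then there exist t₀ ∈ ℝ and R > 0 such that u(t₀, r) = 0 for all r > |t₀| + R. -/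

import Mathlib

open MeasureTheory Filter Set
open scoped ENNReal

/-- The exterior energy norm `‖(v,w)‖_{H(R)} = (∫_R^∞ (|v'|² + |w|²) r³ dr)^{1/2}`. -/
noncomputable def eH (R : ℝ) (v w : ℝ → ℝ) : ℝ≥0∞ :=
  ((∫⁻ r in Ioi R, ENNReal.ofReal ((deriv v r) ^ 2 * r ^ 3)) +
      ∫⁻ r in Ioi R, ENNReal.ofReal ((w r) ^ 2 * r ^ 3)) ^ (1 / 2 : ℝ)

/-- The exterior spacetime norm `‖u‖_{L^aL^b(R)}` over the region `{r > R + |t|}`. -/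
noncomputable def eLL (a b R : ℝ) (u : ℝ → ℝ → ℝ) : ℝ≥0∞ :=
  (∫⁻ t : ℝ,
      (∫⁻ r in Ioi (R + |t|), ENNReal.ofReal (|u t r| ^ b * r ^ 3)) ^ (a / b)) ^ (1 / a)

/-- The time derivative `∂_t u` of a function of `(t,r)`. -/
noncomputable def dtu (u : ℝ → ℝ → ℝ) (t r : ℝ) : ℝ := deriv (fun s => u s r) t

/-- `u` is an exterior solution of `∂_t²u - ∂_r²u - (3/r)∂_r u = |u|^{p-1}u`
on `{r > R + |t|}`, of smoothness class `C^n`. -/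
def IsExtSol (p : ℕ) (n : ℕ∞) (R : ℝ) (u : ℝ → ℝ → ℝ) : Prop :=
  ContDiffOn ℝ n (fun q : ℝ × ℝ => u q.1 q.2) {q : ℝ × ℝ | R + |q.1| < q.2} ∧
  ∀ t r : ℝ, R + |t| < r →
    deriv (fun s => dtu u s r) t - deriv (deriv (u t)) r - (3 / r) * deriv (u t) r
      = |u t r| ^ (p - 1) * u t r

/-- The exterior energy of `u` outside `{r > R + |t|}` vanishes as `t → ±∞`. -/
def ExtEnergyVanishes (R : ℝ) (u : ℝ → ℝ → ℝ) : Prop :=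
  Tendsto (fun t : ℝ => ∫ r in Ioi (R + |t|),
      ((dtu u t r) ^ 2 + (deriv (u t) r) ^ 2) * r ^ 3) atTop (nhds 0) ∧
  Tendsto (fun t : ℝ => ∫ r in Ioi (R + |t|),
      ((dtu u t r) ^ 2 + (deriv (u t) r) ^ 2) * r ^ 3) atBot (nhds 0)

/-- `sup_{t∈ℝ} ‖(u(t,·), ∂_t u(t,·))‖_{H(R+|t|)}`. -/
noncomputable def supH (R : ℝ) (u : ℝ → ℝ → ℝ) : ℝ≥0∞ :=
  ⨆ t : ℝ, eH (R + |t|) (u t) (fun r => dtu u t r)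

open scoped Asymptotics Topology

/-!
The X-ray transform `X w(s) = ∫₀^∞ w(√(s² + z²)) dz` turns the radial wave equation in `ℝ⁴` into
the one-dimensional one: if `v` solves the linear equation with source `F`, then `s · X v` solves
`∂ₜ² - ∂ₛ²` with source `s · X F`. When no energy is radiated, the two null derivatives of `s · X v`
are therefore integrals of the source along characteristics, and Abel inversion bounds `v` by `F`:
a bound `B r⁻⁵ e^{l/r}` on `F` gives `2 (B / l) r⁻² e^{l/r}` on `v`. For the difference of two
time translates of `u`, mollified in time so that the energy decay becomes pointwise decay, the
source is `O(r⁻⁴)` times the difference itself, so for `l` large the bound is a contraction and `u`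
is stationary. In the variables `y(s) = r^a u(r)`, `r = e^s`, `a = 2 / (p - 1)`, a stationary
solution solves a damped autonomous equation whose decreasing energy is nonnegative because
`y → 0` at `+∞`. If it were positive somewhere, a virial identity would force `y² → ∞` at `-∞`,
contradicting the finiteness of `∫ |y|^{2 (p - 1)} ds` near `-∞`, which is the `L^{2 (p - 1)}`
bound near `r = 0`. So the energy is zero, `y` is constant, and `y = 0`.
-/

/-! ### Lines at distance `s` from the origin -/

/-- The distance to the origin of the point at arclength `z` from the foot of the perpendicular on
a line at distance `s` from the origin. -/
noncomputable def lineRadius (s z : ℝ) : ℝ := √(s ^ 2 + z ^ 2)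

/-- The pointwise decay rate `r^{-3/2}` of a radial function on `ℝ⁴` which is square integrable
together with its gradient. -/
noncomputable def decayWeight (r : ℝ) : ℝ := r ^ (-(3 / 2) : ℝ)

/-- Half the X-ray transform of the radial profile `w` along a line at distance `s` from the
origin. On radial functions it intertwines the Laplacians of `ℝ⁴` and `ℝ³`. -/
noncomputable def xray (w : ℝ → ℝ) (s : ℝ) : ℝ := ∫ z in Ioi (0 : ℝ), w (lineRadius s z)

lemma lineRadius_sq (s z : ℝ) : lineRadius s z ^ 2 = s ^ 2 + z ^ 2 :=
  Real.sq_sqrt (by positivity)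

lemma le_lineRadius_left (s z : ℝ) : s ≤ lineRadius s z :=
  Real.le_sqrt_of_sq_le (by nlinarith [sq_nonneg z])

lemma le_lineRadius_right (s z : ℝ) : z ≤ lineRadius s z :=
  Real.le_sqrt_of_sq_le (by nlinarith [sq_nonneg s])

lemma lineRadius_pos {s : ℝ} (hs : 0 < s) (z : ℝ) : 0 < lineRadius s z :=
  hs.trans_le (le_lineRadius_left s z)

lemma continuous_lineRadius (s : ℝ) : Continuous (lineRadius s) := by
  unfold lineRadius; fun_prop

lemma lineRadius_le_lineRadius {s s' : ℝ} (hs : 0 ≤ s) (h : s ≤ s') (z : ℝ) :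
    lineRadius s z ≤ lineRadius s' z := by
  unfold lineRadius; gcongr

lemma tendsto_lineRadius_atTop (s : ℝ) : Tendsto (lineRadius s) atTop atTop :=
  tendsto_atTop_mono (le_lineRadius_right s) tendsto_id

lemma hasDerivAt_lineRadius_left {s : ℝ} (hs : 0 < s) (z : ℝ) :
    HasDerivAt (fun s => lineRadius s z) (s / lineRadius s z) s := by
  have h : HasDerivAt (fun s : ℝ => s ^ 2 + z ^ 2) (2 * s) s := by
    simpa using ((hasDerivAt_id s).pow 2).add_const (z ^ 2)
  exact (h.sqrt (by positivity)).congr_deriv (mul_div_mul_left _ _ two_ne_zero)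

lemma hasDerivAt_lineRadius_right {s : ℝ} (hs : 0 < s) (z : ℝ) :
    HasDerivAt (lineRadius s) (z / lineRadius s z) z := by
  have h : HasDerivAt (fun z : ℝ => s ^ 2 + z ^ 2) (2 * z) z := by
    simpa using ((hasDerivAt_id z).pow 2).const_add (s ^ 2)
  exact (h.sqrt (by positivity)).congr_deriv (mul_div_mul_left _ _ two_ne_zero)

lemma decayWeight_pos {r : ℝ} (hr : 0 < r) : 0 < decayWeight r := Real.rpow_pos_of_pos hr _

lemma decayWeight_le_decayWeight {r r' : ℝ} (hr : 0 < r) (h : r ≤ r') :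
    decayWeight r' ≤ decayWeight r :=
  Real.rpow_le_rpow_of_nonpos hr h (by norm_num)

lemma tendsto_decayWeight_atTop : Tendsto decayWeight atTop (𝓝 0) :=
  tendsto_rpow_neg_atTop (by norm_num)

lemma decayWeight_mul_sqrt {r : ℝ} (hr : 0 < r) : decayWeight r * √r = r⁻¹ := by
  rw [decayWeight, Real.sqrt_eq_rpow, ← Real.rpow_add hr, ← Real.rpow_neg_one]
  norm_num

lemma decayWeight_div_sqrt {r : ℝ} (hr : 0 < r) : decayWeight r / √r = (r ^ 2)⁻¹ := by
  rw [decayWeight, Real.sqrt_eq_rpow, ← Real.rpow_sub hr, ← Real.rpow_natCast,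
    ← Real.rpow_neg hr.le]
  norm_num

lemma nonneg_of_abs_le_mul_decayWeight {x C r : ℝ} (hr : 0 < r) (h : |x| ≤ C * decayWeight r) :
    0 ≤ C :=
  nonneg_of_mul_nonneg_left ((abs_nonneg _).trans h) (decayWeight_pos hr)

lemma min_one_mul_sqrt_le_lineRadius {s : ℝ} (hs : 0 < s) (z : ℝ) :
    min 1 s * √(1 + z ^ 2) ≤ lineRadius s z := by
  have hpos : 0 < min 1 s := lt_min one_pos hs
  apply Real.le_sqrt_of_sq_le
  rw [mul_pow, Real.sq_sqrt (by positivity)]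
  have hone : min 1 s ^ 2 ≤ 1 := pow_le_one₀ hpos.le (min_le_left _ _)
  have hself : min 1 s ^ 2 ≤ s ^ 2 := pow_le_pow_left₀ hpos.le (min_le_right _ _) 2
  nlinarith [sq_nonneg z]

lemma lineRadius_rpow_neg_le {s : ℝ} (hs : 0 < s) {a : ℝ} (ha : 0 ≤ a) (z : ℝ) :
    lineRadius s z ^ (-a) ≤ min 1 s ^ (-a) * (1 + ‖z‖ ^ 2) ^ (-a / 2) := by
  have hmin : 0 < min 1 s := lt_min one_pos hs
  have hsqrt : 0 < √(1 + z ^ 2) := Real.sqrt_pos.2 (by positivity)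
  calc lineRadius s z ^ (-a) ≤ (min 1 s * √(1 + z ^ 2)) ^ (-a) :=
        Real.rpow_le_rpow_of_nonpos (by positivity) (min_one_mul_sqrt_le_lineRadius hs z)
          (by linarith)
    _ = min 1 s ^ (-a) * (1 + ‖z‖ ^ 2) ^ (-a / 2) := by
        rw [Real.mul_rpow hmin.le hsqrt.le, Real.sqrt_eq_rpow, ← Real.rpow_mul (by positivity),
          Real.norm_eq_abs, sq_abs]
        ring_nf

lemma integrable_lineRadius_rpow_neg {s : ℝ} (hs : 0 < s) {a : ℝ} (ha : 1 < a) :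
    Integrable (fun z => lineRadius s z ^ (-a)) := by
  have hmaj := (integrable_rpow_neg_one_add_norm_sq (E := ℝ) (μ := volume) (r := a)
    (by simpa using ha)).const_mul (min 1 s ^ (-a))
  refine hmaj.mono' ?_ (Eventually.of_forall fun z => ?_)
  · exact ((continuous_lineRadius s).rpow_const
      fun z => Or.inl (lineRadius_pos hs z).ne').aestronglyMeasurable
  · rw [Real.norm_of_nonneg (Real.rpow_nonneg (lineRadius_pos hs z).le _)]
    exact lineRadius_rpow_neg_le hs (by linarith) z

lemma integrable_decayWeight_lineRadius {s : ℝ} (hs : 0 < s) :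
    Integrable (fun z => decayWeight (lineRadius s z)) :=
  integrable_lineRadius_rpow_neg hs (by norm_num)

lemma continuous_comp_lineRadius {w : ℝ → ℝ} {d s : ℝ} (hw : ContinuousOn w (Ioi d))
    (hs : d < s) : Continuous (fun z => w (lineRadius s z)) :=
  hw.comp_continuous (continuous_lineRadius s) fun z => hs.trans_le (le_lineRadius_left s z)

lemma integrable_comp_lineRadius {w : ℝ → ℝ} {d s C : ℝ} (hd : 0 ≤ d)
    (hw : ContinuousOn w (Ioi d)) (hs : d < s) (hb : ∀ r, d < r → |w r| ≤ C * decayWeight r) :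
    Integrable (fun z => w (lineRadius s z)) :=
  ((integrable_decayWeight_lineRadius (hd.trans_lt hs)).const_mul C).mono'
    (continuous_comp_lineRadius hw hs).aestronglyMeasurable
    (Eventually.of_forall fun z => hb _ (hs.trans_le (le_lineRadius_left s z)))

lemma integrable_comp_lineRadius_div {w : ℝ → ℝ} {d s C : ℝ} (hd : 0 ≤ d)
    (hw : ContinuousOn w (Ioi d)) (hs : d < s) (hb : ∀ r, d < r → |w r| ≤ C * decayWeight r) :
    Integrable (fun z => w (lineRadius s z) / lineRadius s z) := by
  have hs0 : 0 < s := hd.trans_lt hs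
  refine ((integrable_decayWeight_lineRadius hs0).const_mul (C / s)).mono'
    ((continuous_comp_lineRadius hw hs).div (continuous_lineRadius s)
      fun z => (lineRadius_pos hs0 z).ne').aestronglyMeasurable
    (Eventually.of_forall fun z => ?_)
  have hbz := hb _ (hs.trans_le (le_lineRadius_left s z))
  rw [norm_div, Real.norm_eq_abs, Real.norm_of_nonneg (lineRadius_pos hs0 z).le]
  calc |w (lineRadius s z)| / lineRadius s z ≤ C * decayWeight (lineRadius s z) / s :=
        div_le_div₀ ((abs_nonneg _).trans hbz) hbz hs0 (le_lineRadius_left s z)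
    _ = C / s * decayWeight (lineRadius s z) := by ring

/-! ### The X-ray transform -/

lemma abs_xray_le {w g : ℝ → ℝ} {s : ℝ} (hg : IntegrableOn (fun z => g (lineRadius s z)) (Ioi 0))
    (hb : ∀ r, s ≤ r → |w r| ≤ g r) : |xray w s| ≤ xray g s := by
  unfold xray
  exact norm_integral_le_of_norm_le (f := fun z => w (lineRadius s z)) hg
    (Eventually.of_forall fun z => hb _ (le_lineRadius_left s z))

lemma xray_decayWeight_le {d s : ℝ} (hd : 0 < d) (hs : d ≤ s) :
    xray decayWeight s ≤ xray decayWeight d :=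
  integral_mono (integrable_decayWeight_lineRadius (hd.trans_le hs)).integrableOn
    (integrable_decayWeight_lineRadius hd).integrableOn fun z =>
      decayWeight_le_decayWeight (lineRadius_pos hd z) (lineRadius_le_lineRadius hd.le hs z)

lemma xray_decayWeight_nonneg {s : ℝ} (hs : 0 < s) : 0 ≤ xray decayWeight s :=
  integral_nonneg fun z => (decayWeight_pos (lineRadius_pos hs z)).le

/-- `w` is a `C¹` profile on `(d, ∞)` with derivative `w'`, and both are bounded by `C r^{-3/2}`. -/
structure DecayingProfile (d C : ℝ) (w w' : ℝ → ℝ) : Prop where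
  hasDerivAt : ∀ r, d < r → HasDerivAt w (w' r) r
  continuousOn_deriv : ContinuousOn w' (Ioi d)
  abs_le : ∀ r, d < r → |w r| ≤ C * decayWeight r
  abs_deriv_le : ∀ r, d < r → |w' r| ≤ C * decayWeight r

/-- The derivative of `s ↦ s * xray w s` for a profile `w` with derivative `w'`. -/
noncomputable def xrayDeriv (w w' : ℝ → ℝ) (s : ℝ) : ℝ :=
  xray w s + s ^ 2 * xray (fun r => w' r / r) s

namespace DecayingProfile

variable {w w' : ℝ → ℝ} {d s C : ℝ}

lemma continuousOn (h : DecayingProfile d C w w') : ContinuousOn w (Ioi d) :=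
  fun r hr => (h.hasDerivAt r hr).continuousAt.continuousWithinAt

lemma nonneg (h : DecayingProfile d C w w') (hd : 0 ≤ d) : 0 ≤ C :=
  nonneg_of_abs_le_mul_decayWeight (by linarith) (h.abs_le (d + 1) (by linarith))

lemma integrable_comp_lineRadius (h : DecayingProfile d C w w') (hd : 0 ≤ d) (hs : d < s) :
    Integrable (fun z => w (lineRadius s z)) :=
  _root_.integrable_comp_lineRadius hd h.continuousOn hs h.abs_le

lemma integrable_deriv_comp_lineRadius_div (h : DecayingProfile d C w w') (hd : 0 ≤ d)
    (hs : d < s) : Integrable (fun z => w' (lineRadius s z) / lineRadius s z) :=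
  integrable_comp_lineRadius_div hd h.continuousOn_deriv hs h.abs_deriv_le

lemma hasDerivAt_xray (h : DecayingProfile d C w w') (hd : 0 < d) (hs : d < s) :
    HasDerivAt (xray w) (s * xray (fun r => w' r / r) s) s := by
  have hC : 0 ≤ C := h.nonneg hd.le
  have key := hasDerivAt_integral_of_dominated_loc_of_deriv_le (μ := volume.restrict (Ioi (0 : ℝ)))
    (F := fun s z => w (lineRadius s z))
    (F' := fun s z => s * (w' (lineRadius s z) / lineRadius s z)) (x₀ := s)
    (s := Ioi d) (bound := fun z => C * decayWeight (lineRadius d z)) (Ioi_mem_nhds hs)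
    (by
      filter_upwards [Ioi_mem_nhds hs] with x hx
      exact (continuous_comp_lineRadius h.continuousOn hx).aestronglyMeasurable)
    (h.integrable_comp_lineRadius hd.le hs).integrableOn
    ((h.integrable_deriv_comp_lineRadius_div hd.le hs).const_mul s).integrableOn.1
    (Eventually.of_forall fun z x hx => ?_)
    ((integrable_decayWeight_lineRadius hd).const_mul C).integrableOn
    (Eventually.of_forall fun z x hx => ?_)
  · exact key.2.congr_deriv (integral_const_mul _ _)
  · have hx0 : 0 < x := hd.trans hx
    have hratio : x / lineRadius x z ≤ 1 :=
      (div_le_one (lineRadius_pos hx0 z)).2 (le_lineRadius_left x z)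
    calc ‖x * (w' (lineRadius x z) / lineRadius x z)‖
        = x / lineRadius x z * |w' (lineRadius x z)| := by
          rw [norm_mul, norm_div, Real.norm_of_nonneg hx0.le,
            Real.norm_of_nonneg (lineRadius_pos hx0 z).le, Real.norm_eq_abs]
          ring
      _ ≤ 1 * (C * decayWeight (lineRadius x z)) := by
          gcongr
          exact h.abs_deriv_le _ (lt_of_lt_of_le hx (le_lineRadius_left x z))
      _ ≤ C * decayWeight (lineRadius d z) := by
          rw [one_mul]
          gcongr
          exact decayWeight_le_decayWeight (lineRadius_pos hd z)
            (lineRadius_le_lineRadius hd.le (le_of_lt hx) z)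
  · exact ((h.hasDerivAt _ (lt_of_lt_of_le hx (le_lineRadius_left x z))).comp x
      (hasDerivAt_lineRadius_left (hd.trans hx) z)).congr_deriv (by ring)

lemma hasDerivAt_mul_xray (h : DecayingProfile d C w w') (hd : 0 < d) (hs : d < s) :
    HasDerivAt (fun s => s * xray w s) (xrayDeriv w w' s) s :=
  ((hasDerivAt_id s).mul (h.hasDerivAt_xray hd hs)).congr_deriv (by
    simp only [xrayDeriv, id, one_mul, pow_two, mul_assoc])

lemma abs_comp_lineRadius_le (h : DecayingProfile d C w w') (hd : 0 ≤ d) (hs : d < s) (z : ℝ) :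
    |w (lineRadius s z)| ≤ C * decayWeight s :=
  (h.abs_le _ (hs.trans_le (le_lineRadius_left s z))).trans
    (mul_le_mul_of_nonneg_left
      (decayWeight_le_decayWeight (hd.trans_lt hs) (le_lineRadius_left s z)) (h.nonneg hd))

lemma abs_xray_le (h : DecayingProfile d C w w') (hd : 0 ≤ d) (hs : d < s) :
    |xray w s| ≤ C * xray decayWeight s :=
  (_root_.abs_xray_le (g := fun r => C * decayWeight r)
    ((integrable_decayWeight_lineRadius (hd.trans_lt hs)).const_mul C).integrableOn
    fun r hr => h.abs_le r (hs.trans_le hr)).trans_eq (integral_const_mul _ _)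

lemma abs_integral_Ioc_sqrt_le (h : DecayingProfile d C w w') (hd : 0 ≤ d) (hs : d < s) :
    |∫ z in Ioc 0 (√s), w' (lineRadius s z) / lineRadius s z| ≤ C * (s ^ 2)⁻¹ := by
  have hs0 : 0 < s := hd.trans_lt hs
  have hC : 0 ≤ C := h.nonneg hd
  have hbound : ∀ z ∈ Ioc 0 (√s),
      ‖w' (lineRadius s z) / lineRadius s z‖ ≤ C * decayWeight s / s := fun z _ => by
    rw [norm_div, Real.norm_eq_abs, Real.norm_of_nonneg (lineRadius_pos hs0 z).le]
    have hw' : |w' (lineRadius s z)| ≤ C * decayWeight s :=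
      (h.abs_deriv_le _ (hs.trans_le (le_lineRadius_left s z))).trans
        (mul_le_mul_of_nonneg_left (decayWeight_le_decayWeight hs0 (le_lineRadius_left s z)) hC)
    exact div_le_div₀ ((abs_nonneg _).trans hw') hw' hs0 (le_lineRadius_left s z)
  have hnorm := norm_setIntegral_le_of_norm_le_const (μ := volume) (by simp) hbound
  calc |∫ z in Ioc 0 (√s), w' (lineRadius s z) / lineRadius s z|
      ≤ C * decayWeight s / s * √s := by simpa [Measure.real] using hnorm
    _ = C * (decayWeight s * √s) / s := by ring
    _ = C * (s ^ 2)⁻¹ := by rw [decayWeight_mul_sqrt hs0]; field_simp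

lemma hasDerivAt_comp_lineRadius_div (h : DecayingProfile d C w w') (hd : 0 ≤ d) (hs : d < s)
    {z : ℝ} (hz : z ≠ 0) :
    HasDerivAt (fun z => w (lineRadius s z) / z)
      (w' (lineRadius s z) / lineRadius s z - w (lineRadius s z) / z ^ 2) z := by
  have hs0 : 0 < s := hd.trans_lt hs
  have hcomp := (h.hasDerivAt _ (hs.trans_le (le_lineRadius_left s z))).comp z
    (hasDerivAt_lineRadius_right hs0 z)
  refine (hcomp.div (hasDerivAt_id z) hz).congr_deriv ?_
  have hpos := (lineRadius_pos hs0 z).ne'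
  simp only [id, Function.comp_apply]
  field_simp

lemma abs_comp_lineRadius_div_sq_le (h : DecayingProfile d C w w') (hd : 0 ≤ d) (hs : d < s)
    {z : ℝ} (hz : 0 ≤ z) : |w (lineRadius s z) / z ^ 2| ≤ C * decayWeight s * z ^ (-2 : ℝ) := by
  rw [abs_div, abs_of_nonneg (sq_nonneg z), div_eq_mul_inv, Real.rpow_neg hz, Real.rpow_two]
  exact mul_le_mul_of_nonneg_right (h.abs_comp_lineRadius_le hd hs z) (by positivity)

lemma tendsto_comp_lineRadius_div (h : DecayingProfile d C w w') (hd : 0 ≤ d) (hs : d < s) :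
    Tendsto (fun z => w (lineRadius s z) / z) atTop (𝓝 0) := by
  have hlim : Tendsto (fun z : ℝ => C * decayWeight s * z⁻¹) atTop (𝓝 0) := by
    simpa using tendsto_inv_atTop_zero.const_mul (C * decayWeight s)
  refine squeeze_zero_norm' ?_ hlim
  filter_upwards [eventually_gt_atTop 0] with z hz
  rw [norm_div, Real.norm_of_nonneg hz.le, div_eq_mul_inv]
  exact mul_le_mul_of_nonneg_right (h.abs_comp_lineRadius_le hd hs z) (by positivity)

lemma integrableOn_comp_lineRadius_div_sq (h : DecayingProfile d C w w') (hd : 0 ≤ d)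
    (hs : d < s) {a : ℝ} (ha : 0 < a) :
    IntegrableOn (fun z => w (lineRadius s z) / z ^ 2) (Ioi a) := by
  refine ((integrableOn_Ioi_rpow_of_lt (a := -2) (by norm_num) ha).const_mul
    (C * decayWeight s)).mono' ?_ (ae_restrict_of_forall_mem measurableSet_Ioi fun z hz =>
      h.abs_comp_lineRadius_div_sq_le hd hs (ha.trans hz).le)
  refine ContinuousOn.aestronglyMeasurable ?_ measurableSet_Ioi
  exact (continuous_comp_lineRadius h.continuousOn hs).continuousOn.div (by fun_prop)
    fun z hz => pow_ne_zero 2 (ha.trans hz).ne'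

lemma integral_Ioi_deriv_comp_lineRadius_div (h : DecayingProfile d C w w') (hd : 0 ≤ d)
    (hs : d < s) {a : ℝ} (ha : 0 < a) :
    ∫ z in Ioi a, w' (lineRadius s z) / lineRadius s z =
      (∫ z in Ioi a, w (lineRadius s z) / z ^ 2) - w (lineRadius s a) / a := by
  have hint := (h.integrable_deriv_comp_lineRadius_div hd hs).integrableOn (s := Ioi a)
  have hint' := h.integrableOn_comp_lineRadius_div_sq hd hs ha
  have hparts := integral_Ioi_of_hasDerivAt_of_tendsto (a := a)
    (h.hasDerivAt_comp_lineRadius_div hd hs ha.ne').continuousAt.continuousWithinAt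
    (fun z hz => h.hasDerivAt_comp_lineRadius_div hd hs (ha.trans hz).ne')
    (hint.sub hint') (h.tendsto_comp_lineRadius_div hd hs)
  rw [integral_sub hint hint'] at hparts
  linarith

lemma abs_integral_Ioi_sqrt_le (h : DecayingProfile d C w w') (hd : 0 ≤ d) (hs : d < s) :
    |∫ z in Ioi (√s), w' (lineRadius s z) / lineRadius s z| ≤ 2 * (C * (s ^ 2)⁻¹) := by
  have hs0 : 0 < s := hd.trans_lt hs
  have hsqrt : 0 < √s := Real.sqrt_pos.2 hs0
  have hint : |∫ z in Ioi (√s), w (lineRadius s z) / z ^ 2| ≤ C * decayWeight s / √s := by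
    have hrpow := integrableOn_Ioi_rpow_of_lt (a := -2) (by norm_num) hsqrt
    refine (norm_integral_le_of_norm_le (f := fun z => w (lineRadius s z) / z ^ 2)
      (hrpow.const_mul (C * decayWeight s))
      (ae_restrict_of_forall_mem measurableSet_Ioi fun z hz =>
        h.abs_comp_lineRadius_div_sq_le hd hs (hsqrt.trans hz).le)).trans_eq ?_
    rw [integral_const_mul, integral_Ioi_rpow_of_lt (by norm_num) hsqrt]
    norm_num [div_eq_mul_inv, Real.rpow_neg_one]
  have hboundary : |w (lineRadius s (√s)) / √s| ≤ C * decayWeight s / √s := by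
    rw [abs_div, abs_of_pos hsqrt]
    exact div_le_div_of_nonneg_right (h.abs_comp_lineRadius_le hd hs _) hsqrt.le
  rw [h.integral_Ioi_deriv_comp_lineRadius_div hd hs hsqrt, ← decayWeight_div_sqrt hs0,
    ← mul_div_assoc, two_mul]
  exact (abs_sub _ _).trans (add_le_add hint hboundary)

lemma abs_xrayDeriv_le (h : DecayingProfile d C w w') (hd : 0 ≤ d) (hs : d < s) :
    |xrayDeriv w w' s| ≤ (xray decayWeight s + 3) * C := by
  have hs0 : 0 < s := hd.trans_lt hs
  have hint := h.integrable_deriv_comp_lineRadius_div hd hs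
  have hsplit : xray (fun r => w' r / r) s =
      (∫ z in Ioc 0 (√s), w' (lineRadius s z) / lineRadius s z) +
        ∫ z in Ioi (√s), w' (lineRadius s z) / lineRadius s z := by
    rw [xray, ← Ioc_union_Ioi_eq_Ioi (Real.sqrt_nonneg s), setIntegral_union
      (Ioc_disjoint_Ioi le_rfl) measurableSet_Ioi hint.integrableOn hint.integrableOn]
  have hderiv : |xray (fun r => w' r / r) s| ≤ 3 * C * (s ^ 2)⁻¹ := by
    rw [hsplit]
    refine (abs_add_le _ _).trans ?_
    linarith [h.abs_integral_Ioc_sqrt_le hd hs, h.abs_integral_Ioi_sqrt_le hd hs]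
  calc |xrayDeriv w w' s| ≤ |xray w s| + s ^ 2 * |xray (fun r => w' r / r) s| := by
        rw [xrayDeriv]
        exact (abs_add_le _ _).trans_eq (by rw [abs_mul, abs_of_nonneg (sq_nonneg s)])
    _ ≤ C * xray decayWeight s + s ^ 2 * (3 * C * (s ^ 2)⁻¹) := by
        gcongr
        exact h.abs_xray_le hd hs
    _ = (xray decayWeight s + 3) * C := by field_simp

end DecayingProfile

/-! ### Abel inversion -/

lemma lineRadius_lineRadius (r x y : ℝ) :
    lineRadius (lineRadius r x) y = √(r ^ 2 + x ^ 2 + y ^ 2) := by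
  conv_lhs => rw [lineRadius, lineRadius_sq]

lemma lineRadius_norm_le (r : ℝ) (q : ℝ × ℝ) :
    lineRadius r ‖q‖ ≤ lineRadius (lineRadius r q.1) q.2 := by
  rw [lineRadius_lineRadius, lineRadius]
  apply Real.sqrt_le_sqrt
  rcases max_choice ‖q.1‖ ‖q.2‖ with h | h <;>
    rw [Prod.norm_def, h, Real.norm_eq_abs, sq_abs] <;> nlinarith [sq_nonneg q.1, sq_nonneg q.2]

lemma lineRadius_abs (s z : ℝ) : lineRadius s |z| = lineRadius s z := by
  simp only [lineRadius, sq_abs]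

lemma lineRadius_zero {s : ℝ} (hs : 0 ≤ s) : lineRadius s 0 = s := by
  simp [lineRadius, hs]

lemma integral_comp_lineRadius (f : ℝ → ℝ) (s : ℝ) :
    ∫ z, f (lineRadius s z) = 2 * xray f s := by
  simpa only [lineRadius_abs, xray] using integral_comp_abs (f := fun z => f (lineRadius s z))

section IteratedXray

variable {f : ℝ → ℝ} {a d r C : ℝ}

lemma integrable_comp_lineRadius_lineRadius (hd : 0 ≤ d) (hr : d < r) (ha : 2 < a)
    (hf : ContinuousOn f (Ioi d)) (hb : ∀ ρ, d < ρ → |f ρ| ≤ C * ρ ^ (-a)) :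
    Integrable (fun q : ℝ × ℝ => f (lineRadius (lineRadius r q.1) q.2)) := by
  have hr0 : 0 < r := hd.trans_lt hr
  have hC : 0 ≤ C := nonneg_of_mul_nonneg_left ((abs_nonneg _).trans (hb r hr))
    (Real.rpow_pos_of_pos hr0 _)
  have hgt : ∀ q : ℝ × ℝ, d < lineRadius (lineRadius r q.1) q.2 := fun q =>
    (hr.trans_le (le_lineRadius_left r _)).trans_le (lineRadius_norm_le r q)
  have hcont : Continuous (fun q : ℝ × ℝ => f (lineRadius (lineRadius r q.1) q.2)) :=
    hf.comp_continuous (by simp only [lineRadius_lineRadius]; fun_prop) hgt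
  refine ((integrable_rpow_neg_one_add_norm_sq (E := ℝ × ℝ) (μ := volume) (r := a)
    (by simpa using ha)).const_mul (C * min 1 r ^ (-a))).mono' hcont.aestronglyMeasurable
    (Eventually.of_forall fun q => ?_)
  calc |f (lineRadius (lineRadius r q.1) q.2)|
      ≤ C * lineRadius (lineRadius r q.1) q.2 ^ (-a) := hb _ (hgt q)
    _ ≤ C * (min 1 r ^ (-a) * (1 + ‖q‖ ^ 2) ^ (-a / 2)) := by
        gcongr
        refine (Real.rpow_le_rpow_of_nonpos (lineRadius_pos hr0 _) (lineRadius_norm_le r q)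
          (by linarith)).trans ?_
        simpa only [norm_norm] using lineRadius_rpow_neg_le hr0 (by linarith) ‖q‖
    _ = C * min 1 r ^ (-a) * (1 + ‖q‖ ^ 2) ^ (-a / 2) := by ring

lemma integrable_xray_comp_lineRadius
    (h : Integrable (fun q : ℝ × ℝ => f (lineRadius (lineRadius r q.1) q.2))) :
    Integrable (fun x => xray f (lineRadius r x)) := by
  have hleft := Integrable.integral_prod_left (μ := volume) (ν := volume) h
  simp only [integral_comp_lineRadius] at hleft
  simpa [← mul_assoc] using hleft.const_mul (1 / 2)

lemma integral_comp_lineRadius_lineRadius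
    (h : Integrable (fun q : ℝ × ℝ => f (lineRadius (lineRadius r q.1) q.2))) :
    ∫ q : ℝ × ℝ, f (lineRadius (lineRadius r q.1) q.2) = 4 * xray (xray f) r := by
  have hprod := integral_prod (μ := volume) (ν := volume) _ h
  simp only [integral_comp_lineRadius, integral_const_mul] at hprod
  rw [Measure.volume_eq_prod, hprod]
  ring

lemma integral_comp_lineRadius_lineRadius_eq_polar (f : ℝ → ℝ) (r : ℝ) :
    ∫ q : ℝ × ℝ, f (lineRadius (lineRadius r q.1) q.2) =
      (∫ ρ in Ioi (0 : ℝ), ρ * f (lineRadius r ρ)) * (2 * Real.pi) := by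
  rw [← integral_comp_polarCoord_symm]
  have hradial : ∀ q : ℝ × ℝ, q.1 • f (lineRadius (lineRadius r (polarCoord.symm q).1)
      (polarCoord.symm q).2) = q.1 * f (lineRadius r q.1) * 1 := by
    intro q
    rw [mul_one, smul_eq_mul, polarCoord_symm_apply, lineRadius_lineRadius]
    congr 3
    nlinarith [Real.sin_sq_add_cos_sq q.2]
  simp only [hradial]
  rw [polarCoord_target, Measure.volume_eq_prod,
    setIntegral_prod_mul (fun ρ => ρ * f (lineRadius r ρ)) (fun _ => (1 : ℝ))]
  congr 1
  simp only [integral_const, smul_eq_mul, mul_one, Measure.real, Measure.restrict_apply_univ,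
    Real.volume_Ioo]
  rw [ENNReal.toReal_ofReal (by linarith [Real.pi_pos])]
  ring

lemma xray_xray (h : Integrable (fun q : ℝ × ℝ => f (lineRadius (lineRadius r q.1) q.2))) :
    xray (xray f) r = Real.pi / 2 * ∫ ρ in Ioi (0 : ℝ), ρ * f (lineRadius r ρ) := by
  have hcartesian := integral_comp_lineRadius_lineRadius h
  rw [integral_comp_lineRadius_lineRadius_eq_polar] at hcartesian
  linarith

end IteratedXray

section InverseCube

variable {r : ℝ}

lemma integrable_lineRadius_pow_three_inv (hr : 0 < r) :
    Integrable (fun z => (lineRadius r z ^ 3)⁻¹) := by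
  refine (integrable_lineRadius_rpow_neg hr (a := 3) (by norm_num)).congr
    (Eventually.of_forall fun z => ?_)
  beta_reduce
  rw [Real.rpow_neg (lineRadius_pos hr z).le]
  norm_num

lemma tendsto_div_lineRadius_atTop (hr : 0 < r) :
    Tendsto (fun z => z / lineRadius r z) atTop (𝓝 1) := by
  have hlim : Tendsto (fun z : ℝ => 1 - r * z⁻¹) atTop (𝓝 1) := by
    simpa using (tendsto_inv_atTop_zero.const_mul r).const_sub (1 : ℝ)
  refine tendsto_of_tendsto_of_tendsto_of_le_of_le' hlim tendsto_const_nhds ?_ ?_ <;>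
    filter_upwards [eventually_gt_atTop 0] with z hz
  · have htri : lineRadius r z ≤ r + z := by
      rw [lineRadius, Real.sqrt_le_left (by positivity)]
      nlinarith
    have hcancel : r = r * z⁻¹ * z := by field_simp
    have hle : r * z⁻¹ * z ≤ r * z⁻¹ * lineRadius r z := by
      gcongr
      exact le_lineRadius_right r z
    rw [le_div_iff₀ (lineRadius_pos hr z)]
    linarith
  · exact (div_le_one (lineRadius_pos hr z)).2 (le_lineRadius_right r z)

lemma integral_lineRadius_pow_three_inv (hr : 0 < r) :
    ∫ z in Ioi (0 : ℝ), (lineRadius r z ^ 3)⁻¹ = 1 / r ^ 2 := by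
  have hderiv : ∀ z, HasDerivAt (fun z => z / lineRadius r z / r ^ 2)
      ((lineRadius r z ^ 3)⁻¹) z := by
    intro z
    have hpos := lineRadius_pos hr z
    refine (((hasDerivAt_id z).div (hasDerivAt_lineRadius_right hr z) hpos.ne').div_const
      (r ^ 2)).congr_deriv ?_
    have hsq := lineRadius_sq r z
    simp only [id]
    field_simp
    linarith
  have hftc := integral_Ioi_of_hasDerivAt_of_tendsto (a := 0)
    (hderiv 0).continuousAt.continuousWithinAt (fun z _ => hderiv z)
    (integrable_lineRadius_pow_three_inv hr).integrableOn
    ((tendsto_div_lineRadius_atTop hr).div_const (r ^ 2))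
  simpa using hftc

end InverseCube

namespace DecayingProfile

variable {w w' : ℝ → ℝ} {d r C : ℝ}

lemma abs_deriv_div_le (h : DecayingProfile d C w w') (hd : 0 ≤ d) {ρ : ℝ} (hρ : d < ρ) :
    |w' ρ / ρ| ≤ C * ρ ^ (-(5 / 2) : ℝ) := by
  have hρ0 : 0 < ρ := hd.trans_lt hρ
  rw [abs_div, abs_of_pos hρ0, div_le_iff₀ hρ0, mul_assoc, ← Real.rpow_add_one hρ0.ne']
  have hexp : (-(5 / 2) + 1 : ℝ) = -(3 / 2) := by norm_num
  rw [hexp]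
  exact h.abs_deriv_le ρ hρ

lemma tendsto_comp_lineRadius (h : DecayingProfile d C w w') (hr : d < r) :
    Tendsto (fun z => w (lineRadius r z)) atTop (𝓝 0) := by
  have hlim := (tendsto_decayWeight_atTop.comp (tendsto_lineRadius_atTop r)).const_mul C
  rw [mul_zero] at hlim
  exact squeeze_zero_norm (fun z => h.abs_le _ (hr.trans_le (le_lineRadius_left r z))) hlim

lemma integrableOn_mul_deriv_comp_lineRadius_div (h : DecayingProfile d C w w') (hd : 0 ≤ d)
    (hr : d < r) :
    IntegrableOn (fun z => z * (w' (lineRadius r z) / lineRadius r z)) (Ioi 0) := by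
  have hr0 : 0 < r := hd.trans_lt hr
  refine ((integrable_decayWeight_lineRadius hr0).const_mul C).integrableOn.mono'
    (continuous_id.mul ((continuous_comp_lineRadius h.continuousOn_deriv hr).div
      (continuous_lineRadius r) fun z => (lineRadius_pos hr0 z).ne')).aestronglyMeasurable
    (ae_restrict_of_forall_mem measurableSet_Ioi fun z (hz : 0 < z) => ?_)
  have hpos := lineRadius_pos hr0 z
  have hratio : z / lineRadius r z ≤ 1 := (div_le_one hpos).2 (le_lineRadius_right r z)
  calc ‖z * (w' (lineRadius r z) / lineRadius r z)‖
      = z / lineRadius r z * |w' (lineRadius r z)| := by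
        rw [norm_mul, norm_div, Real.norm_of_nonneg hpos.le, Real.norm_of_nonneg hz.le,
          Real.norm_eq_abs]
        ring
    _ ≤ 1 * |w' (lineRadius r z)| := by gcongr
    _ ≤ C * decayWeight (lineRadius r z) := by
        rw [one_mul]
        exact h.abs_deriv_le _ (hr.trans_le (le_lineRadius_left r z))

lemma integral_mul_deriv_comp_lineRadius_div (h : DecayingProfile d C w w') (hd : 0 ≤ d)
    (hr : d < r) :
    ∫ z in Ioi (0 : ℝ), z * (w' (lineRadius r z) / lineRadius r z) = -w r := by
  have hr0 : 0 < r := hd.trans_lt hr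
  have hderiv : ∀ z, HasDerivAt (fun z => w (lineRadius r z))
      (z * (w' (lineRadius r z) / lineRadius r z)) z := fun z =>
    ((h.hasDerivAt _ (hr.trans_le (le_lineRadius_left r z))).comp z
      (hasDerivAt_lineRadius_right hr0 z)).congr_deriv (by ring)
  rw [integral_Ioi_of_hasDerivAt_of_tendsto (hderiv 0).continuousAt.continuousWithinAt
    (fun z _ => hderiv z) (h.integrableOn_mul_deriv_comp_lineRadius_div hd hr)
    (h.tendsto_comp_lineRadius hr), lineRadius_zero hr0.le, zero_sub]

lemma integrable_deriv_div_comp_lineRadius_lineRadius (h : DecayingProfile d C w w')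
    (hd : 0 ≤ d) (hr : d < r) : Integrable (fun q : ℝ × ℝ =>
      w' (lineRadius (lineRadius r q.1) q.2) / lineRadius (lineRadius r q.1) q.2) :=
  integrable_comp_lineRadius_lineRadius (f := fun ρ => w' ρ / ρ) hd hr
    (by norm_num : (2 : ℝ) < 5 / 2)
    (h.continuousOn_deriv.div continuousOn_id fun _ hz => (hd.trans_lt hz).ne')
    fun _ hρ => h.abs_deriv_div_le hd hρ

/-- Abel's inversion formula: the X-ray transform of `w'/r` determines `w`. -/
lemma xray_xray_deriv_div (h : DecayingProfile d C w w') (hd : 0 ≤ d) (hr : d < r) :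
    xray (xray fun ρ => w' ρ / ρ) r = -(Real.pi / 2) * w r := by
  rw [xray_xray (h.integrable_deriv_div_comp_lineRadius_lineRadius hd hr),
    h.integral_mul_deriv_comp_lineRadius_div hd hr]
  ring

lemma abs_sub_le_of_mul_xray (h : DecayingProfile d C w w') (hd : 0 ≤ d) (hr : d < r) {A b : ℝ}
    (hxray : ∀ s, r ≤ s → |s * xray w s - b| ≤ A)
    (hderiv : ∀ s, r ≤ s → s * |xrayDeriv w w' s| ≤ A) :
    |Real.pi / 2 * w r - b / r ^ 2| ≤ 2 * A / r ^ 2 := by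
  have hr0 : 0 < r := hd.trans_lt hr
  have hint := (integrable_xray_comp_lineRadius (f := fun ρ => w' ρ / ρ)
    (h.integrable_deriv_div_comp_lineRadius_lineRadius hd hr)).integrableOn (s := Ioi 0)
  have hcube := (integrable_lineRadius_pow_three_inv hr0).integrableOn (s := Ioi 0)
  have hvalue : ∫ x in Ioi (0 : ℝ),
      (xray (fun ρ => w' ρ / ρ) (lineRadius r x) + b * (lineRadius r x ^ 3)⁻¹) =
        -(Real.pi / 2 * w r - b / r ^ 2) := by
    rw [integral_add hint (hcube.const_mul b), integral_const_mul,
      integral_lineRadius_pow_three_inv hr0, ← xray, h.xray_xray_deriv_div hd hr]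
    ring
  have hpointwise : ∀ x, ‖xray (fun ρ => w' ρ / ρ) (lineRadius r x) +
      b * (lineRadius r x ^ 3)⁻¹‖ ≤ 2 * A * (lineRadius r x ^ 3)⁻¹ := by
    intro x
    have hs := le_lineRadius_left r x
    set s := lineRadius r x
    have hs0 : 0 < s := hr0.trans_le hs
    have hsplit : xray (fun ρ => w' ρ / ρ) s + b * (s ^ 3)⁻¹ =
        (s * xrayDeriv w w' s - (s * xray w s - b)) * (s ^ 3)⁻¹ := by
      rw [xrayDeriv]; field_simp; ring
    have hderiv' : |s * xrayDeriv w w' s| ≤ A := by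
      rw [abs_mul, abs_of_pos hs0]; exact hderiv s hs
    rw [hsplit, norm_mul, Real.norm_of_nonneg (by positivity : 0 ≤ (s ^ 3)⁻¹), Real.norm_eq_abs]
    gcongr
    exact (abs_sub _ _).trans (by linarith [hxray s hs])
  have hle := norm_integral_le_of_norm_le (hcube.const_mul (2 * A))
    (Eventually.of_forall hpointwise)
  rwa [hvalue, integral_const_mul, integral_lineRadius_pow_three_inv hr0, norm_neg,
    Real.norm_eq_abs, mul_one_div] at hle

end DecayingProfile

/-! ### Functions on exterior cones -/

/-- The exterior light cone `r > d + |t|`. -/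
def extCone (d : ℝ) : Set (ℝ × ℝ) := {q | d + |q.1| < q.2}

/-- On the cone `extCone d`, the function `w(t, r)` has partial derivatives `wt` and `wr`. -/
def HasGradOn (d : ℝ) (w wt wr : ℝ → ℝ → ℝ) : Prop :=
  ∀ t r, d + |t| < r → HasFDerivAt (fun q : ℝ × ℝ => w q.1 q.2)
    (wt t r • ContinuousLinearMap.fst ℝ ℝ ℝ + wr t r • ContinuousLinearMap.snd ℝ ℝ ℝ) (t, r)

/-- Joint continuity of `w(t, r)` on the cone `extCone d`. -/
def ConeContinuous (d : ℝ) (w : ℝ → ℝ → ℝ) : Prop :=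
  ContinuousOn (fun q : ℝ × ℝ => w q.1 q.2) (extCone d)

/-- `w(t, r) = O(r^{-3/2})` on the cone `extCone d`. -/
def ConeBounded (d : ℝ) (w : ℝ → ℝ → ℝ) : Prop :=
  ∃ C, ∀ t r, d + |t| < r → |w t r| ≤ C * decayWeight r

/-- `w(t, r) = O(r^{-3/2})` on the cone `extCone d`, and `w(t, r) = o(r^{-3/2})` as `|t| → ∞`,
uniformly in `r`. -/
structure ConeDecaying (d : ℝ) (w : ℝ → ℝ → ℝ) : Prop where
  bounded : ConeBounded d w
  vanishing : ∀ ε > 0, ∃ T, ∀ t r, d + |t| < r → T ≤ |t| → |w t r| ≤ ε * decayWeight r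

section Cone

variable {d : ℝ} {w w₁ w₂ wt wr : ℝ → ℝ → ℝ}

lemma isOpen_extCone (d : ℝ) : IsOpen (extCone d) := isOpen_lt (by fun_prop) (by fun_prop)

lemma add_abs_add_lt_add {t s τ : ℝ} (hs : d + |t| < s) (hτ : 0 ≤ τ) : d + |t + τ| < s + τ := by
  have htri := abs_add_le t τ
  rw [abs_of_nonneg hτ] at htri
  linarith

lemma HasGradOn.comp_hasDerivAt (h : HasGradOn d w wt wr) {f g : ℝ → ℝ} {x f' g' : ℝ}
    (hx : d + |f x| < g x) (hf : HasDerivAt f f' x) (hg : HasDerivAt g g' x) :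
    HasDerivAt (fun x => w (f x) (g x)) (wt (f x) (g x) * f' + wr (f x) (g x) * g') x :=
  ((h (f x) (g x) hx).comp_hasDerivAt_of_eq x (hf.prodMk hg) rfl).congr_deriv (by simp)

lemma HasGradOn.hasDerivAt_right (h : HasGradOn d w wt wr) {t r : ℝ} (hr : d + |t| < r) :
    HasDerivAt (w t) (wr t r) r := by
  simpa using h.comp_hasDerivAt (f := fun _ => t) (g := fun x => x) hr (hasDerivAt_const r t)
    (hasDerivAt_id r)

lemma HasGradOn.hasDerivAt_left (h : HasGradOn d w wt wr) {t r : ℝ} (hr : d + |t| < r) :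
    HasDerivAt (fun t => w t r) (wt t r) t := by
  simpa using h.comp_hasDerivAt (f := fun x => x) (g := fun _ => r) hr (hasDerivAt_id t)
    (hasDerivAt_const t r)

lemma HasGradOn.coneContinuous (h : HasGradOn d w wt wr) : ConeContinuous d w :=
  fun q hq => (h q.1 q.2 hq).continuousAt.continuousWithinAt

lemma HasGradOn.neg (h : HasGradOn d w wt wr) :
    HasGradOn d (fun t r => -w t r) (fun t r => -wt t r) (fun t r => -wr t r) := fun t r hr =>
  (h t r hr).neg.congr_fderiv (by ext <;> simp)

lemma HasGradOn.reflect (h : HasGradOn d w wt wr) :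
    HasGradOn d (fun t r => w (-t) r) (fun t r => -wt (-t) r) (fun t r => wr (-t) r) := by
  intro t r hr
  have hreflect : HasFDerivAt (fun q : ℝ × ℝ => (-q.1, q.2))
      ((-ContinuousLinearMap.fst ℝ ℝ ℝ).prod (ContinuousLinearMap.snd ℝ ℝ ℝ)) (t, r) :=
    (hasFDerivAt_fst.neg).prodMk hasFDerivAt_snd
  have hcomp := HasFDerivAt.comp (t, r) (g := fun q : ℝ × ℝ => w q.1 q.2)
    (f := fun q : ℝ × ℝ => (-q.1, q.2)) (h (-t) r (by rwa [abs_neg])) hreflect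
  exact hcomp.congr_fderiv (by ext <;> simp)

lemma ConeContinuous.slice (h : ConeContinuous d w) (t : ℝ) :
    ContinuousOn (w t) (Ioi (d + |t|)) :=
  ContinuousOn.comp (g := fun q : ℝ × ℝ => w q.1 q.2) (f := fun r => (t, r)) h (by fun_prop)
    fun _ hr => hr

lemma ConeContinuous.neg (h : ConeContinuous d w) : ConeContinuous d (fun t r => -w t r) :=
  ContinuousOn.neg h

lemma ConeContinuous.reflect (h : ConeContinuous d w) :
    ConeContinuous d (fun t r => w (-t) r) := by
  refine ContinuousOn.comp (g := fun q : ℝ × ℝ => w q.1 q.2) (f := fun q : ℝ × ℝ => (-q.1, q.2)) h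
    (by fun_prop) fun q hq => ?_
  change d + |-q.1| < q.2
  rwa [abs_neg]

lemma ConeBounded.exists_forall_le (hd : 0 ≤ d) (h₁ : ConeBounded d w₁) (h₂ : ConeBounded d w₂) :
    ∃ C, ∀ t r, d + |t| < r → |w₁ t r| ≤ C * decayWeight r ∧ |w₂ t r| ≤ C * decayWeight r := by
  obtain ⟨C₁, hC₁⟩ := h₁
  obtain ⟨C₂, hC₂⟩ := h₂
  refine ⟨max C₁ C₂, fun t r hr => ?_⟩
  have hweight := (decayWeight_pos ((add_nonneg hd (abs_nonneg t)).trans_lt hr)).le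
  exact ⟨(hC₁ t r hr).trans (mul_le_mul_of_nonneg_right (le_max_left _ _) hweight),
    (hC₂ t r hr).trans (mul_le_mul_of_nonneg_right (le_max_right _ _) hweight)⟩

lemma ConeBounded.reflect (h : ConeBounded d w) : ConeBounded d (fun t r => w (-t) r) :=
  h.imp fun _ hC t r hr => hC (-t) r (by rwa [abs_neg])

lemma ConeDecaying.reflect (h : ConeDecaying d w) : ConeDecaying d (fun t r => w (-t) r) where
  bounded := h.bounded.reflect
  vanishing ε hε := (h.vanishing ε hε).imp fun _ hT t r hr ht =>
    hT (-t) r (by rwa [abs_neg]) (by rwa [abs_neg])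

lemma ConeDecaying.neg (h : ConeDecaying d w) : ConeDecaying d (fun t r => -w t r) where
  bounded := by simpa only [ConeBounded, abs_neg] using h.bounded
  vanishing := by simpa only [abs_neg] using h.vanishing

lemma HasGradOn.exists_decayingProfile (h : HasGradOn d w wt wr) (hd : 0 ≤ d)
    (hcont : ConeContinuous d wr) (hb : ConeBounded d w) (hb' : ConeBounded d wr) :
    ∃ C, ∀ t, DecayingProfile (d + |t|) C (w t) (wr t) := by
  obtain ⟨C, hC⟩ := hb.exists_forall_le hd hb'
  exact ⟨C, fun t => ⟨fun r hr => h.hasDerivAt_right hr, hcont.slice t, fun r hr => (hC t r hr).1,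
    fun r hr => (hC t r hr).2⟩⟩

lemma HasGradOn.exists_forall_decayingProfile (h : HasGradOn d w wt wr)
    (hcont : ConeContinuous d wr) (hw : ConeDecaying d w) (hwr : ConeDecaying d wr) {ε : ℝ}
    (hε : 0 < ε) : ∃ T, ∀ t, T ≤ |t| → DecayingProfile (d + |t|) ε (w t) (wr t) := by
  obtain ⟨T₁, h₁⟩ := hw.vanishing ε hε
  obtain ⟨T₂, h₂⟩ := hwr.vanishing ε hε
  exact ⟨max T₁ T₂, fun t ht => ⟨fun r hr => h.hasDerivAt_right hr, hcont.slice t,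
    fun r hr => h₁ t r hr ((le_max_left _ _).trans ht),
    fun r hr => h₂ t r hr ((le_max_right _ _).trans ht)⟩⟩

end Cone

/-- A function `val(t, r)` bundled with candidates for its partial derivatives of order at most
two. -/
structure TwoJet where
  val : ℝ → ℝ → ℝ
  dt : ℝ → ℝ → ℝ
  dr : ℝ → ℝ → ℝ
  dtt : ℝ → ℝ → ℝ
  dtr : ℝ → ℝ → ℝ
  drr : ℝ → ℝ → ℝ

namespace TwoJet

/-- The entries of `J` are the continuous partial derivatives of `J.val` on `extCone d`. -/
structure IsJetOn (J : TwoJet) (d : ℝ) : Prop where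
  hasGradOn : HasGradOn d J.val J.dt J.dr
  hasGradOn_dt : HasGradOn d J.dt J.dtt J.dtr
  hasGradOn_dr : HasGradOn d J.dr J.dtr J.drr
  continuous_dtt : ConeContinuous d J.dtt
  continuous_dtr : ConeContinuous d J.dtr
  continuous_drr : ConeContinuous d J.drr

/-- The jet of the time reversal `(t, r) ↦ val (-t) r`. -/
def reflect (J : TwoJet) : TwoJet where
  val t r := J.val (-t) r
  dt t r := -J.dt (-t) r
  dr t r := J.dr (-t) r
  dtt t r := J.dtt (-t) r
  dtr t r := -J.dtr (-t) r
  drr t r := J.drr (-t) r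

lemma IsJetOn.reflect {J : TwoJet} {d : ℝ} (h : J.IsJetOn d) : J.reflect.IsJetOn d where
  hasGradOn := h.hasGradOn.reflect
  hasGradOn_dt := by simpa only [neg_neg, TwoJet.reflect] using h.hasGradOn_dt.reflect.neg
  hasGradOn_dr := h.hasGradOn_dr.reflect
  continuous_dtt := h.continuous_dtt.reflect
  continuous_dtr := h.continuous_dtr.reflect.neg
  continuous_drr := h.continuous_drr.reflect

/-- The derivative `(∂_t - ∂_s)(s * xray v s)` of the reduced one-dimensional wave. -/
noncomputable def charDeriv (J : TwoJet) (t s : ℝ) : ℝ :=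
  s * xray (J.dt t) s - xrayDeriv (J.val t) (J.dr t) s

/-- The integrand of `charDeriv` along the line at distance `s` from the origin. -/
noncomputable def charIntegrand (J : TwoJet) (z t s : ℝ) : ℝ :=
  s * J.dt t (lineRadius s z) - J.val t (lineRadius s z) -
    s ^ 2 * (J.dr t (lineRadius s z) / lineRadius s z)

/-- The derivative of `charIntegrand` in the direction `∂_t + ∂_s`. -/
noncomputable def charIntegrandDeriv (J : TwoJet) (z t s : ℝ) : ℝ :=
  s * J.dtt t (lineRadius s z) - 3 * (s / lineRadius s z) * J.dr t (lineRadius s z) -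
    s * (s / lineRadius s z) ^ 2 * J.drr t (lineRadius s z) +
      (s / lineRadius s z) ^ 3 * J.dr t (lineRadius s z)

end TwoJet

/-- `J` is the jet of a solution on `extCone d` of the radial wave equation in `ℝ⁴` with source
`F`, which decays like `r^{-3/2}` together with its derivatives. -/
structure DecayingWave (d : ℝ) (J : TwoJet) (F : ℝ → ℝ → ℝ) : Prop extends J.IsJetOn d where
  eq : ∀ t r, d + |t| < r → J.dtt t r = J.drr t r + 3 / r * J.dr t r + F t r
  decaying : ConeDecaying d J.val
  decaying_dt : ConeDecaying d J.dt
  decaying_dr : ConeDecaying d J.dr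
  decaying_dtr : ConeDecaying d J.dtr
  bounded_dtt : ConeBounded d J.dtt
  bounded_drr : ConeBounded d J.drr

/-! ### Transport along characteristics -/

namespace DecayingWave

variable {d : ℝ} {J : TwoJet} {F : ℝ → ℝ → ℝ} {t s τ : ℝ}

lemma reflect (h : DecayingWave d J F) : DecayingWave d J.reflect (fun t r => F (-t) r) where
  toIsJetOn := h.toIsJetOn.reflect
  eq t r hr := h.eq (-t) r (by rwa [abs_neg])
  decaying := h.decaying.reflect
  decaying_dt := h.decaying_dt.reflect.neg
  decaying_dr := h.decaying_dr.reflect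
  decaying_dtr := h.decaying_dtr.reflect.neg
  bounded_dtt := h.bounded_dtt.reflect
  bounded_drr := h.bounded_drr.reflect

lemma integrable_charIntegrand_terms (h : DecayingWave d J F) (hd : 0 ≤ d) (hs : d + |t| < s) :
    Integrable (fun z => s * J.dt t (lineRadius s z)) ∧
      Integrable (fun z => J.val t (lineRadius s z)) ∧
      Integrable (fun z => s ^ 2 * (J.dr t (lineRadius s z) / lineRadius s z)) := by
  have hdt : 0 ≤ d + |t| := add_nonneg hd (abs_nonneg t)
  obtain ⟨Cdt, hCdt⟩ := h.decaying_dt.bounded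
  obtain ⟨C, hC⟩ := h.hasGradOn.exists_decayingProfile hd h.hasGradOn_dr.coneContinuous
    h.decaying.bounded h.decaying_dr.bounded
  exact ⟨(integrable_comp_lineRadius hdt (h.hasGradOn_dt.coneContinuous.slice t) hs
      (hCdt t)).const_mul _, (hC t).integrable_comp_lineRadius hdt hs,
    ((hC t).integrable_deriv_comp_lineRadius_div hdt hs).const_mul _⟩

lemma integrable_charIntegrand (h : DecayingWave d J F) (hd : 0 ≤ d) (hs : d + |t| < s) :
    Integrable (fun z => J.charIntegrand z t s) := by
  obtain ⟨hdt, hval, hdr⟩ := h.integrable_charIntegrand_terms hd hs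
  exact (hdt.sub hval).sub hdr

lemma charDeriv_eq_integral (h : DecayingWave d J F) (hd : 0 ≤ d) (hs : d + |t| < s) :
    J.charDeriv t s = ∫ z in Ioi (0 : ℝ), J.charIntegrand z t s := by
  obtain ⟨hdt, hval, hdr⟩ := h.integrable_charIntegrand_terms hd hs
  have hsplit := integral_sub ((hdt.sub hval).restrict (s := Ioi 0)) hdr.restrict
  have hsplit' := integral_sub (hdt.restrict (s := Ioi 0)) hval.restrict
  simp only [Pi.sub_apply, integral_const_mul] at hsplit hsplit'
  simp only [TwoJet.charDeriv, xrayDeriv, xray, TwoJet.charIntegrand]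
  rw [hsplit, hsplit']
  ring

lemma continuous_charIntegrandDeriv (h : DecayingWave d J F) (hd : 0 ≤ d) (hs : d + |t| < s) :
    Continuous (fun z => J.charIntegrandDeriv z t s) := by
  have hs0 : 0 < s := (add_nonneg hd (abs_nonneg t)).trans_lt hs
  have hdtt := continuous_comp_lineRadius (h.continuous_dtt.slice t) hs
  have hdr := continuous_comp_lineRadius (h.hasGradOn_dr.coneContinuous.slice t) hs
  have hdrr := continuous_comp_lineRadius (h.continuous_drr.slice t) hs
  have hratio : Continuous (fun z => s / lineRadius s z) :=
    continuous_const.div (continuous_lineRadius s) fun z => (lineRadius_pos hs0 z).ne'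
  unfold TwoJet.charIntegrandDeriv
  fun_prop

lemma exists_forall_abs_charIntegrandDeriv_le (h : DecayingWave d J F) (hd : 0 < d) :
    ∃ C, 0 ≤ C ∧ ∀ t s z, d + |t| < s →
      |J.charIntegrandDeriv z t s| ≤ C * (s + 1) * decayWeight (lineRadius d z) := by
  obtain ⟨C₁, hC₁⟩ := h.bounded_dtt.exists_forall_le hd.le h.bounded_drr
  obtain ⟨C₂, hC₂⟩ := h.decaying_dr.bounded
  have hC₁0 := nonneg_of_abs_le_mul_decayWeight (by linarith) (hC₁ 0 (d + 1) (by simp)).1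
  have hC₂0 := nonneg_of_abs_le_mul_decayWeight (by linarith) (hC₂ 0 (d + 1) (by simp))
  refine ⟨2 * C₁ + 4 * C₂, by positivity, fun t s z hs => ?_⟩
  have hds : d ≤ s := by linarith [abs_nonneg t]
  have hs0 : 0 < s := hd.trans_le hds
  have hpos := lineRadius_pos hs0 z
  have hin : d + |t| < lineRadius s z := hs.trans_le (le_lineRadius_left s z)
  obtain ⟨hdtt, hdrr⟩ := hC₁ t _ hin
  have hdr := hC₂ t _ hin
  have hm0 := decayWeight_pos hpos
  have hratio1 : s / lineRadius s z ≤ 1 := (div_le_one hpos).2 (le_lineRadius_left s z)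
  have hratio0 : 0 ≤ s / lineRadius s z := by positivity
  have hmono : decayWeight (lineRadius s z) ≤ decayWeight (lineRadius d z) :=
    decayWeight_le_decayWeight (lineRadius_pos hd z) (lineRadius_le_lineRadius hd.le hds z)
  rw [TwoJet.charIntegrandDeriv]
  set q := s / lineRadius s z
  set m := decayWeight (lineRadius s z)
  have h₁ : |s * J.dtt t (lineRadius s z)| ≤ s * (C₁ * m) := by
    rw [abs_mul, abs_of_pos hs0]; gcongr
  have h₂ : |3 * q * J.dr t (lineRadius s z)| ≤ 3 * 1 * (C₂ * m) := by
    rw [abs_mul, abs_of_nonneg (by positivity)]; gcongr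
  have h₃ : |s * q ^ 2 * J.drr t (lineRadius s z)| ≤ s * 1 * (C₁ * m) := by
    rw [abs_mul, abs_of_nonneg (by positivity)]; gcongr
    exact pow_le_one₀ hratio0 hratio1
  have h₄ : |q ^ 3 * J.dr t (lineRadius s z)| ≤ 1 * (C₂ * m) := by
    rw [abs_mul, abs_of_nonneg (by positivity)]; gcongr
    exact pow_le_one₀ hratio0 hratio1
  have hsum : s * (C₁ * m) + 3 * 1 * (C₂ * m) + s * 1 * (C₁ * m) + 1 * (C₂ * m) ≤
      (2 * C₁ + 4 * C₂) * (s + 1) * m := by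
    nlinarith [mul_nonneg hC₁0 hm0.le, mul_nonneg (mul_nonneg hC₂0 hm0.le) hs0.le]
  refine (abs_add_le _ _).trans ((add_le_add ((abs_sub _ _).trans (add_le_add
    ((abs_sub _ _).trans (add_le_add h₁ h₂)) h₃)) h₄).trans (hsum.trans ?_))
  gcongr

lemma hasDerivAt_charIntegrand (h : DecayingWave d J F) (hd : 0 ≤ d) (z : ℝ)
    (hs : d + |t + τ| < s + τ) :
    HasDerivAt (fun τ => J.charIntegrand z (t + τ) (s + τ))
      (J.charIntegrandDeriv z (t + τ) (s + τ)) τ := by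
  have hin : d + |t + τ| < lineRadius (s + τ) z := hs.trans_le (le_lineRadius_left _ z)
  have hs0 : 0 < s + τ := (add_nonneg hd (abs_nonneg _)).trans_lt hs
  have hpos := lineRadius_pos hs0 z
  have ht : HasDerivAt (fun τ => t + τ) 1 τ := (hasDerivAt_id τ).const_add t
  have hs' : HasDerivAt (fun τ => s + τ) 1 τ := (hasDerivAt_id τ).const_add s
  have hradius : HasDerivAt (fun τ => lineRadius (s + τ) z)
      ((s + τ) / lineRadius (s + τ) z) τ :=
    ((hasDerivAt_lineRadius_left hs0 z).comp τ hs').congr_deriv (mul_one _)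
  have hval := h.hasGradOn.comp_hasDerivAt hin ht hradius
  have hdt := h.hasGradOn_dt.comp_hasDerivAt hin ht hradius
  have hdr := h.hasGradOn_dr.comp_hasDerivAt hin ht hradius
  refine (((hs'.mul hdt).sub hval).sub
    ((hs'.pow 2).mul (hdr.div hradius hpos.ne'))).congr_deriv ?_
  simp only [TwoJet.charIntegrandDeriv, Pi.div_apply, Pi.pow_apply]
  field_simp
  ring

lemma integrable_source_comp_lineRadius (h : DecayingWave d J F) (hd : 0 < d) (hs : d + |t| < s) :
    Integrable (fun z => F t (lineRadius s z)) := by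
  have hdt : 0 < d + |t| := by linarith [abs_nonneg t]
  obtain ⟨C₁, hC₁⟩ := h.bounded_dtt.exists_forall_le hd.le h.bounded_drr
  obtain ⟨C₂, hC₂⟩ := h.decaying_dr.bounded
  have hdtt := integrable_comp_lineRadius hdt.le (h.continuous_dtt.slice t) hs
    fun r hr => (hC₁ t r hr).1
  have hdrr := integrable_comp_lineRadius hdt.le (h.continuous_drr.slice t) hs
    fun r hr => (hC₁ t r hr).2
  have hdr := integrable_comp_lineRadius_div hdt.le (h.hasGradOn_dr.coneContinuous.slice t) hs
    (hC₂ t)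
  refine ((hdtt.sub hdrr).sub (hdr.const_mul 3)).congr (Eventually.of_forall fun z => ?_)
  simp only [Pi.sub_apply]
  rw [h.eq t _ (hs.trans_le (le_lineRadius_left s z))]
  ring

/-- The deviation from the source is a total derivative: this is where the equation is used. -/
lemma hasDerivAt_dr_comp_lineRadius (h : DecayingWave d J F) (hd : 0 ≤ d) (hs : d + |t| < s)
    (z : ℝ) :
    HasDerivAt (fun z => s * (J.dr t (lineRadius s z) * (z / lineRadius s z)))
      (J.charIntegrandDeriv z t s - s * F t (lineRadius s z)) z := by
  have hs0 : 0 < s := (add_nonneg hd (abs_nonneg t)).trans_lt hs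
  have hin : d + |t| < lineRadius s z := hs.trans_le (le_lineRadius_left s z)
  have hpos := lineRadius_pos hs0 z
  have hdr := (h.hasGradOn_dr.hasDerivAt_right hin).comp z (hasDerivAt_lineRadius_right hs0 z)
  have hratio := (hasDerivAt_id z).div (hasDerivAt_lineRadius_right hs0 z) hpos.ne'
  refine ((hdr.mul hratio).const_mul s).congr_deriv ?_
  have hsq : z ^ 2 = lineRadius s z ^ 2 - s ^ 2 := by rw [lineRadius_sq]; ring
  simp only [TwoJet.charIntegrandDeriv, Function.comp_apply, id, Pi.div_apply, h.eq t _ hin]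
  field_simp
  rw [hsq]
  ring

lemma tendsto_dr_comp_lineRadius (h : DecayingWave d J F) (hd : 0 ≤ d) (hs : d + |t| < s) :
    Tendsto (fun z => s * (J.dr t (lineRadius s z) * (z / lineRadius s z))) atTop (𝓝 0) := by
  have hs0 : 0 < s := (add_nonneg hd (abs_nonneg t)).trans_lt hs
  obtain ⟨C, hC⟩ := h.decaying_dr.bounded
  have hlim := ((tendsto_decayWeight_atTop.comp (tendsto_lineRadius_atTop s)).const_mul C)
  rw [mul_zero] at hlim
  have hdr : Tendsto (fun z => J.dr t (lineRadius s z)) atTop (𝓝 0) :=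
    squeeze_zero_norm (fun z => hC t _ (hs.trans_le (le_lineRadius_left s z))) hlim
  simpa using (hdr.mul (tendsto_div_lineRadius_atTop hs0)).const_mul s

lemma integral_charIntegrandDeriv (h : DecayingWave d J F) (hd : 0 < d) (hs : d + |t| < s) :
    ∫ z in Ioi (0 : ℝ), J.charIntegrandDeriv z t s = s * xray (F t) s := by
  obtain ⟨C, -, hC⟩ := h.exists_forall_abs_charIntegrandDeriv_le hd
  have hderiv : Integrable (fun z => J.charIntegrandDeriv z t s) :=
    ((integrable_decayWeight_lineRadius hd).const_mul _).mono'
      (h.continuous_charIntegrandDeriv hd.le hs).aestronglyMeasurable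
      (Eventually.of_forall fun z => hC t s z hs)
  have hsource := (h.integrable_source_comp_lineRadius hd hs).const_mul s
  have hftc := integral_Ioi_of_hasDerivAt_of_tendsto (a := 0)
    (h.hasDerivAt_dr_comp_lineRadius hd.le hs 0).continuousAt.continuousWithinAt
    (fun z _ => h.hasDerivAt_dr_comp_lineRadius hd.le hs z) (hderiv.sub hsource).integrableOn
    (h.tendsto_dr_comp_lineRadius hd.le hs)
  rw [integral_sub hderiv.integrableOn hsource.integrableOn, integral_const_mul] at hftc
  simpa [xray, sub_eq_zero] using hftc

lemma hasDerivAt_charDeriv (h : DecayingWave d J F) (hd : 0 < d) (hs : d + |t + τ| < s + τ) :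
    HasDerivAt (fun τ => J.charDeriv (t + τ) (s + τ)) ((s + τ) * xray (F (t + τ)) (s + τ)) τ := by
  obtain ⟨C, hC0, hC⟩ := h.exists_forall_abs_charIntegrandDeriv_le hd
  set U : Set ℝ := {σ | d + |t + σ| < s + σ} ∩ Iio (τ + 1)
  have hopen : IsOpen U :=
    (isOpen_lt (f := fun σ => d + |t + σ|) (by fun_prop) (by fun_prop)).inter isOpen_Iio
  have hUτ : U ∈ 𝓝 τ := hopen.mem_nhds ⟨hs, lt_add_one τ⟩
  have key := hasDerivAt_integral_of_dominated_loc_of_deriv_le (μ := volume.restrict (Ioi (0 : ℝ)))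
    (F := fun σ z => J.charIntegrand z (t + σ) (s + σ))
    (F' := fun σ z => J.charIntegrandDeriv z (t + σ) (s + σ)) (x₀ := τ) (s := U)
    (bound := fun z => C * (s + τ + 1 + 1) * decayWeight (lineRadius d z)) hUτ
    (by
      filter_upwards [hUτ] with σ hσ
      exact (h.integrable_charIntegrand hd.le hσ.1).aestronglyMeasurable.restrict)
    (h.integrable_charIntegrand hd.le hs).integrableOn
    (h.continuous_charIntegrandDeriv hd.le hs).aestronglyMeasurable
    (Eventually.of_forall fun z σ hσ => (hC _ _ z hσ.1).trans ?_)
    ((integrable_decayWeight_lineRadius hd).const_mul _).integrableOn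
    (Eventually.of_forall fun z σ hσ => h.hasDerivAt_charIntegrand hd.le z hσ.1)
  · rw [← h.integral_charIntegrandDeriv hd hs]
    refine key.2.congr_of_eventuallyEq ?_
    filter_upwards [hUτ] with σ hσ using h.charDeriv_eq_integral hd.le hσ.1
  · have hweight := (decayWeight_pos (lineRadius_pos hd z)).le
    have hσ' : σ ≤ τ + 1 := hσ.2.le
    gcongr ?_ * _
    exact mul_le_mul_of_nonneg_left (by linarith) hC0

end DecayingWave

/-! ### Sources of size `r⁻⁵` -/

lemma abs_sub_le_of_abs_deriv_le_neg_deriv {f h f' h' : ℝ → ℝ} {a b : ℝ} (hab : a ≤ b)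
    (hf : ∀ x ∈ Icc a b, HasDerivAt f (f' x) x) (hh : ∀ x ∈ Icc a b, HasDerivAt h (h' x) x)
    (hle : ∀ x ∈ Icc a b, |f' x| ≤ -h' x) : |f b - f a| ≤ h a - h b :=
  image_norm_le_of_norm_deriv_right_le_deriv_boundary' (f := fun x => f x - f a) (f' := f')
    (a := a) (b := b) (B := fun x => h a - h x) (B' := fun x => -h' x)
    (fun x hx => ((hf x hx).continuousAt.sub continuousAt_const).continuousWithinAt)
    (fun x hx => ((hf x ⟨hx.1, hx.2.le⟩).sub_const _).hasDerivWithinAt) (by simp)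
    (fun x hx => (continuousAt_const.sub (hh x hx).continuousAt).continuousWithinAt)
    (fun x hx => ((hh x ⟨hx.1, hx.2.le⟩).const_sub _).hasDerivWithinAt)
    (fun x hx => hle x ⟨hx.1, hx.2.le⟩) ⟨hab, le_rfl⟩

lemma exists_forall_abs_sub_le {y h : ℝ → ℝ} {d k : ℝ} (hh : Tendsto h atTop (𝓝 k))
    (hk : ∀ s, d < s → k ≤ h s)
    (hyh : ∀ s s', d < s → s ≤ s' → |y s' - y s| ≤ h s - h s') :
    ∃ b, ∀ s, d < s → |y s - b| ≤ h s - k := by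
  have hcauchy : CauchySeq y := by
    refine Metric.cauchySeq_iff'.2 fun ε hε => ?_
    obtain ⟨N, hN, hNd⟩ := ((hh.eventually (gt_mem_nhds (lt_add_of_pos_right k hε))).and
      (eventually_gt_atTop d)).exists
    refine ⟨N, fun n hn => ?_⟩
    rw [Real.dist_eq]
    linarith [hyh N n hNd hn, hk n (hNd.trans_le hn)]
  obtain ⟨b, hb⟩ := cauchySeq_tendsto_of_complete hcauchy
  refine ⟨b, fun s hs => ?_⟩
  rw [abs_sub_comm]
  exact le_of_tendsto_of_tendsto (hb.sub_const _).abs (hh.const_sub _)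
    ((eventually_ge_atTop s).mono fun s' hs' => hyh s s' hs hs')

lemma hasDerivAt_exp_div {s : ℝ} (l : ℝ) (hs : s ≠ 0) :
    HasDerivAt (fun s => Real.exp (l / s)) (-(l / s ^ 2) * Real.exp (l / s)) s :=
  (((hasDerivAt_const s l).div (hasDerivAt_id s) hs).exp).congr_deriv (by
    simp only [Pi.div_apply, id]; ring)

lemma tendsto_exp_div_atTop (l : ℝ) : Tendsto (fun s => Real.exp (l / s)) atTop (𝓝 1) := by
  have hdiv : Tendsto (fun s : ℝ => l / s) atTop (𝓝 0) := tendsto_const_nhds.div_atTop tendsto_id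
  simpa only [Real.exp_zero, Function.comp_def] using (Real.continuous_exp.tendsto 0).comp hdiv

lemma integrable_lineRadius_sq_inv {s : ℝ} (hs : 0 < s) :
    Integrable (fun z => (lineRadius s z ^ 2)⁻¹) := by
  refine (integrable_lineRadius_rpow_neg hs (a := 2) (by norm_num)).congr
    (Eventually.of_forall fun z => ?_)
  change lineRadius s z ^ (-2 : ℝ) = _
  rw [Real.rpow_neg (lineRadius_pos hs z).le, Real.rpow_two]

lemma integral_lineRadius_sq_inv {s : ℝ} (hs : 0 < s) :
    ∫ z in Ioi (0 : ℝ), (lineRadius s z ^ 2)⁻¹ = Real.pi / (2 * s) := by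
  have hderiv : ∀ z, HasDerivAt (fun z => Real.arctan (z / s) / s) ((lineRadius s z ^ 2)⁻¹) z := by
    intro z
    refine ((((hasDerivAt_id z).div_const s).arctan).div_const s).congr_deriv ?_
    rw [lineRadius_sq]
    simp only [id]
    field_simp
  have hlim : Tendsto (fun z => Real.arctan (z / s) / s) atTop (𝓝 (Real.pi / 2 / s)) :=
    ((Real.tendsto_arctan_atTop.mono_right nhdsWithin_le_nhds).comp
      (tendsto_id.atTop_div_const hs)).div_const s
  rw [integral_Ioi_of_hasDerivAt_of_tendsto (a := 0) (hderiv 0).continuousAt.continuousWithinAt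
    (fun z _ => hderiv z) (integrable_lineRadius_sq_inv hs).integrableOn hlim]
  simp only [zero_div, Real.arctan_zero, sub_zero]
  field_simp

lemma abs_mul_xray_le {F : ℝ → ℝ} {s B l : ℝ} (hs : 0 < s) (hB : 0 ≤ B) (hl : 0 ≤ l)
    (hF : ∀ r, s ≤ r → |F r| ≤ B / r ^ 5 * Real.exp (l / r)) :
    |s * xray F s| ≤ Real.pi / 2 * B / s ^ 3 * Real.exp (l / s) := by
  have hxray : |xray F s| ≤ xray (fun r => B / s ^ 3 * Real.exp (l / s) * (r ^ 2)⁻¹) s := by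
    refine abs_xray_le ((integrable_lineRadius_sq_inv hs).const_mul _).integrableOn
      fun r hr => (hF r hr).trans ?_
    have hr0 : 0 < r := hs.trans_le hr
    calc B / r ^ 5 * Real.exp (l / r) = B / r ^ 3 * (r ^ 2)⁻¹ * Real.exp (l / r) := by field_simp
      _ ≤ B / s ^ 3 * (r ^ 2)⁻¹ * Real.exp (l / s) := by gcongr
      _ = _ := by ring
  rw [xray.eq_def (fun r => _ * _), integral_const_mul, integral_lineRadius_sq_inv hs] at hxray
  rw [abs_mul, abs_of_pos hs]
  calc s * |xray F s| ≤ s * (B / s ^ 3 * Real.exp (l / s) * (Real.pi / (2 * s))) := by gcongr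
    _ = _ := by field_simp

/-- The integral of `π / 2 * B / σ ^ 3 * exp (l / σ)` over `σ ∈ (s, ∞)`, for `l ≠ 0`. -/
noncomputable def sourceTail (B l s : ℝ) : ℝ :=
  Real.pi / 2 * (B / l ^ 2) * ((l / s - 1) * Real.exp (l / s) + 1)

section SourceTail

variable {B l s : ℝ}

lemma hasDerivAt_sourceTail (B : ℝ) (hl : l ≠ 0) (hs : s ≠ 0) :
    HasDerivAt (sourceTail B l) (-(Real.pi / 2 * B / s ^ 3 * Real.exp (l / s))) s := by
  have hdiv : HasDerivAt (fun s => l / s - 1) (-(l / s ^ 2)) s :=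
    (((hasDerivAt_const s l).div (hasDerivAt_id s) hs).sub_const 1).congr_deriv (by
      simp only [id]; ring)
  refine (((hdiv.mul (hasDerivAt_exp_div l hs)).add_const 1).const_mul _).congr_deriv ?_
  field_simp
  ring

lemma sourceTail_nonneg (hB : 0 ≤ B) (l s : ℝ) : 0 ≤ sourceTail B l s := by
  have hexp : (1 - l / s) * Real.exp (l / s) ≤ 1 := by
    calc (1 - l / s) * Real.exp (l / s) ≤ Real.exp (-(l / s)) * Real.exp (l / s) := by
          gcongr; exact Real.one_sub_le_exp_neg _
      _ = 1 := by rw [← Real.exp_add, neg_add_cancel, Real.exp_zero]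
  exact mul_nonneg (by positivity) (by linarith)

lemma tendsto_sourceTail (B l : ℝ) : Tendsto (sourceTail B l) atTop (𝓝 0) := by
  have hdiv : Tendsto (fun s : ℝ => l / s) atTop (𝓝 0) := tendsto_const_nhds.div_atTop tendsto_id
  unfold sourceTail
  simpa using ((((hdiv.sub_const 1).mul (tendsto_exp_div_atTop l)).add_const 1).const_mul
    (Real.pi / 2 * (B / l ^ 2)))

lemma mul_sourceTail_le (hB : 0 ≤ B) (hl : 0 < l) (hs : 0 < s) :
    s * sourceTail B l s ≤ Real.pi / 2 * (B / l) * Real.exp (l / s) := by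
  have hexp : (l / s - 1) * Real.exp (l / s) + 1 ≤ l / s * Real.exp (l / s) := by
    linarith [Real.one_le_exp (by positivity : 0 ≤ l / s)]
  calc s * sourceTail B l s
      ≤ s * (Real.pi / 2 * (B / l ^ 2) * (l / s * Real.exp (l / s))) := by
        unfold sourceTail; gcongr
    _ = _ := by field_simp

lemma sq_mul_sourceTail_le (hB : 0 ≤ B) (hl : 0 < l) (hs : 0 < s) :
    s ^ 2 * sourceTail B l s ≤ Real.pi / 2 * B * Real.exp (l / s) := by
  have hexp : (l / s - 1) * Real.exp (l / s) + 1 ≤ (l / s) ^ 2 * Real.exp (l / s) := by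
    have hx : 0 < l / s := by positivity
    nlinarith [Real.add_one_le_exp (l / s), pow_pos hx 3,
      mul_le_mul_of_nonneg_left (Real.add_one_le_exp (l / s))
        (by nlinarith [sq_nonneg (l / s - 1)] : 0 ≤ 1 - l / s + (l / s) ^ 2)]
  calc s ^ 2 * sourceTail B l s
      ≤ s ^ 2 * (Real.pi / 2 * (B / l ^ 2) * ((l / s) ^ 2 * Real.exp (l / s))) := by
        unfold sourceTail; gcongr
    _ = _ := by field_simp

end SourceTail

lemma xray_neg (w : ℝ → ℝ) (s : ℝ) : xray (fun r => -w r) s = -xray w s := integral_neg _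

lemma TwoJet.charDeriv_reflect (J : TwoJet) (t s : ℝ) :
    J.reflect.charDeriv t s =
      -(s * xray (J.dt (-t)) s) - xrayDeriv (J.val (-t)) (J.dr (-t)) s := by
  simp only [TwoJet.charDeriv, TwoJet.reflect, xray_neg, mul_neg]

/-! ### Non-radiative waves with a source of size `r⁻⁵` -/

namespace DecayingWave

variable {d B l : ℝ} {J : TwoJet} {F : ℝ → ℝ → ℝ}

lemma exists_forall_abs_xrayDeriv_le (h : DecayingWave d J F) (hd : 0 < d) {ε : ℝ} (hε : 0 < ε) :
    ∃ T, ∀ t s, d + |t| < s → T ≤ |t| → |xrayDeriv (J.val t) (J.dr t) s| ≤ ε := by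
  have hK : 0 < xray decayWeight d + 3 := by linarith [xray_decayWeight_nonneg hd]
  obtain ⟨T, hT⟩ := h.hasGradOn.exists_forall_decayingProfile h.hasGradOn_dr.coneContinuous
    h.decaying h.decaying_dr (div_pos hε hK)
  refine ⟨T, fun t s hs ht => ?_⟩
  have hds : d ≤ s := by linarith [abs_nonneg t]
  calc _ ≤ (xray decayWeight s + 3) * (ε / (xray decayWeight d + 3)) :=
        (hT t ht).abs_xrayDeriv_le (by positivity) hs
    _ ≤ (xray decayWeight d + 3) * (ε / (xray decayWeight d + 3)) := by
        gcongr; exact xray_decayWeight_le hd hds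
    _ = ε := mul_div_cancel₀ ε hK.ne'

lemma exists_forall_abs_mul_xray_dt_sub_le (h : DecayingWave d J F) (hd : 0 < d) {ε : ℝ}
    (hε : 0 < ε) :
    ∃ T, ∀ t s s', d + |t| < s → d + |t| < s' → T ≤ |t| →
      |s * xray (J.dt t) s - s' * xray (J.dt t) s'| ≤ ε * |s - s'| := by
  have hK : 0 < xray decayWeight d + 3 := by linarith [xray_decayWeight_nonneg hd]
  obtain ⟨T, hT⟩ := h.hasGradOn_dt.exists_forall_decayingProfile h.continuous_dtr
    h.decaying_dt h.decaying_dtr (div_pos hε hK)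
  refine ⟨T, fun t s s' hs hs' ht => ?_⟩
  have hdt : 0 < d + |t| := by positivity
  have hderiv : ∀ x ∈ Ioi (d + |t|), HasDerivWithinAt (fun s => s * xray (J.dt t) s)
      (xrayDeriv (J.dt t) (J.dtr t) x) (Ioi (d + |t|)) x := fun x hx =>
    ((hT t ht).hasDerivAt_mul_xray hdt hx).hasDerivWithinAt
  refine (convex_Ioi (d + |t|)).norm_image_sub_le_of_norm_hasDerivWithin_le hderiv
    (fun x hx => ?_) hs' hs
  have hdx : d ≤ x := by linarith [abs_nonneg t, mem_Ioi.1 hx]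
  calc _ ≤ (xray decayWeight x + 3) * (ε / (xray decayWeight d + 3)) :=
        (hT t ht).abs_xrayDeriv_le hdt.le hx
    _ ≤ (xray decayWeight d + 3) * (ε / (xray decayWeight d + 3)) := by
        gcongr; exact xray_decayWeight_le hd hdx
    _ = ε := mul_div_cancel₀ ε hK.ne'

lemma abs_charDeriv_add_sub_le (h : DecayingWave d J F) (hd : 0 < d) (hB : 0 ≤ B) (hl : 0 < l)
    (hF : ∀ t r, d + |t| < r → |F t r| ≤ B / r ^ 5 * Real.exp (l / r))
    {t s τ : ℝ} (hs : d + |t| < s) (hτ : 0 ≤ τ) :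
    |J.charDeriv (t + τ) (s + τ) - J.charDeriv t s| ≤ sourceTail B l s := by
  have hs0 : 0 < s := by linarith [abs_nonneg t]
  have hflow := abs_sub_le_of_abs_deriv_le_neg_deriv (f := fun x => J.charDeriv (t + x) (s + x))
    (h := fun x => sourceTail B l (s + x)) hτ
    (fun x hx => h.hasDerivAt_charDeriv hd (add_abs_add_lt_add hs hx.1))
    (fun x hx => (hasDerivAt_sourceTail B hl.ne' (by linarith [hx.1])).comp_const_add s x)
    fun x hx => ?_
  · simp only [add_zero] at hflow
    linarith [sourceTail_nonneg hB l (s + τ)]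
  · rw [neg_neg]
    exact abs_mul_xray_le (by linarith [hx.1]) hB hl.le fun r hr =>
      hF (t + x) r ((add_abs_add_lt_add hs hx.1).trans_le hr)

/-- Follow both outgoing characteristics to a late common time, where the wave has decayed. -/
lemma abs_charDeriv_sub_le (h : DecayingWave d J F) (hd : 0 < d) (hB : 0 ≤ B) (hl : 0 < l)
    (hF : ∀ t r, d + |t| < r → |F t r| ≤ B / r ^ 5 * Real.exp (l / r))
    {t s t' s' : ℝ} (hs : d + |t| < s) (hs' : d + |t'| < s') :
    |J.charDeriv t s - J.charDeriv t' s'| ≤ sourceTail B l s + sourceTail B l s' := by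
  refine le_of_forall_pos_le_add fun η hη => ?_
  set D := |(s - t) - (s' - t')|
  have hε : 0 < η / (2 + D) := by positivity
  obtain ⟨T₁, hT₁⟩ := h.exists_forall_abs_xrayDeriv_le hd hε
  obtain ⟨T₂, hT₂⟩ := h.exists_forall_abs_mul_xray_dt_sub_le hd hε
  obtain ⟨T, hTt, hTt', hTT₁, hTT₂⟩ : ∃ T, t ≤ T ∧ t' ≤ T ∧ T₁ ≤ |T| ∧ T₂ ≤ |T| :=
    ⟨max (max T₁ T₂) (max t t'), by simp, by simp, by simp [le_abs], by simp [le_abs]⟩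
  have hcone := add_abs_add_lt_add hs (sub_nonneg.2 hTt)
  have hcone' := add_abs_add_lt_add hs' (sub_nonneg.2 hTt')
  have hflow := h.abs_charDeriv_add_sub_le hd hB hl hF hs (sub_nonneg.2 hTt)
  have hflow' := h.abs_charDeriv_add_sub_le hd hB hl hF hs' (sub_nonneg.2 hTt')
  rw [add_sub_cancel] at hcone hcone' hflow hflow'
  have hval := hT₁ T _ hcone hTT₁
  have hval' := hT₁ T _ hcone' hTT₁
  have hdt := hT₂ T _ _ hcone hcone' hTT₂
  rw [show s + (T - t) - (s' + (T - t')) = (s - t) - (s' - t') by ring] at hdt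
  have hsum : η / (2 + D) + η / (2 + D) + η / (2 + D) * D = η := by
    have hD : 2 + D ≠ 0 := by positivity
    field_simp
    ring
  simp only [TwoJet.charDeriv] at hflow hflow' ⊢
  rw [abs_le] at *
  constructor <;> linarith

/-- Comparing with the time-reversed wave eliminates the time derivative. -/
lemma abs_xrayDeriv_le_sourceTail (h : DecayingWave d J F) (hd : 0 < d) (hB : 0 ≤ B) (hl : 0 < l)
    (hF : ∀ t r, d + |t| < r → |F t r| ≤ B / r ^ 5 * Real.exp (l / r)) {s : ℝ} (hs : d < s) :
    |xrayDeriv (J.val 0) (J.dr 0) s| ≤ sourceTail B l s := by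
  refine le_of_forall_pos_le_add fun η hη => ?_
  obtain ⟨T₁, hT₁⟩ := h.exists_forall_abs_xrayDeriv_le hd (half_pos hη)
  have htail := ((tendsto_sourceTail B l).comp
    (tendsto_atTop_add_const_left atTop (d + 1) tendsto_id)).eventually (gt_mem_nhds (half_pos hη))
  obtain ⟨T, hT, hTT₁, hT0⟩ :=
    (htail.and ((eventually_ge_atTop T₁).and (eventually_ge_atTop 0))).exists
  simp only [Function.comp_apply, id] at hT
  have hcone₀ : d + |(0 : ℝ)| < s := by simpa
  have hcone : d + |T| < d + 1 + T := by rw [abs_of_nonneg hT0]; linarith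
  have hforward := h.abs_charDeriv_sub_le hd hB hl hF hcone₀ hcone
  have hbackward := h.reflect.abs_charDeriv_sub_le hd hB hl
    (fun t r hr => hF (-t) r (by rwa [abs_neg])) hcone₀ (by rwa [abs_neg] : d + |-T| < d + 1 + T)
  have hval := hT₁ T _ hcone (by rwa [abs_of_nonneg hT0])
  simp only [TwoJet.charDeriv_reflect, neg_zero, neg_neg] at hbackward
  simp only [TwoJet.charDeriv] at hforward
  rw [abs_le] at *
  constructor <;> linarith

lemma exists_decayingProfile_zero (h : DecayingWave d J F) (hd : 0 ≤ d) :
    ∃ C, DecayingProfile d C (J.val 0) (J.dr 0) := by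
  obtain ⟨C, hC⟩ := h.hasGradOn.exists_decayingProfile hd h.hasGradOn_dr.coneContinuous
    h.decaying.bounded h.decaying_dr.bounded
  exact ⟨C, by simpa using hC 0⟩

lemma exists_forall_abs_mul_xray_sub_le (h : DecayingWave d J F) (hd : 0 < d) (hB : 0 ≤ B)
    (hl : 0 < l) (hF : ∀ t r, d + |t| < r → |F t r| ≤ B / r ^ 5 * Real.exp (l / r)) :
    ∃ b, ∀ s, d < s →
      |s * xray (J.val 0) s - b| ≤ Real.pi / 2 * (B / l) * (Real.exp (l / s) - 1) := by
  obtain ⟨C, hC⟩ := h.exists_decayingProfile_zero hd.le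
  set k := Real.pi / 2 * (B / l) with hk
  have hk0 : 0 ≤ k := by positivity
  have hlim : Tendsto (fun s => k * Real.exp (l / s)) atTop (𝓝 k) := by
    simpa using (tendsto_exp_div_atTop l).const_mul k
  simp only [mul_sub_one]
  refine exists_forall_abs_sub_le hlim (fun s hs => ?_) fun s s' hs hss' => ?_
  · have := hd.trans hs
    exact le_mul_of_one_le_right hk0 (Real.one_le_exp (by positivity))
  · refine abs_sub_le_of_abs_deriv_le_neg_deriv hss'
      (fun x hx => hC.hasDerivAt_mul_xray hd (hs.trans_le hx.1))
      (fun x hx => (hasDerivAt_exp_div l (hd.trans (hs.trans_le hx.1)).ne').const_mul k)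
      fun x hx => ?_
    have hdx : d < x := hs.trans_le hx.1
    have hx0 : 0 < x := hd.trans hdx
    refine (h.abs_xrayDeriv_le_sourceTail hd hB hl hF hdx).trans ?_
    calc sourceTail B l x = x ^ 2 * sourceTail B l x / x ^ 2 := by field_simp
      _ ≤ Real.pi / 2 * B * Real.exp (l / x) / x ^ 2 :=
        div_le_div_of_nonneg_right (sq_mul_sourceTail_le hB hl hx0) (sq_nonneg x)
      _ = _ := by rw [hk]; field_simp

lemma tendsto_sq_mul_val (h : DecayingWave d J F) (hd : 0 < d) (hB : 0 ≤ B) (hl : 0 < l)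
    (hF : ∀ t r, d + |t| < r → |F t r| ≤ B / r ^ 5 * Real.exp (l / r)) {b : ℝ}
    (hb : ∀ s, d < s →
      |s * xray (J.val 0) s - b| ≤ Real.pi / 2 * (B / l) * (Real.exp (l / s) - 1)) :
    Tendsto (fun r => r ^ 2 * (Real.pi / 2 * J.val 0 r)) atTop (𝓝 b) := by
  obtain ⟨C, hC⟩ := h.exists_decayingProfile_zero hd.le
  set A : ℝ → ℝ := fun r => Real.pi / 2 * (B / l) * (Real.exp (l / r) - 1) +
    Real.pi / 2 * B * (r⁻¹ * Real.exp (l / r)) with hA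
  have hAlim : Tendsto (fun r => 2 * A r) atTop (𝓝 0) := by
    simpa [hA] using ((((tendsto_exp_div_atTop l).sub_const 1).const_mul _).add
      ((tendsto_inv_atTop_zero.mul (tendsto_exp_div_atTop l)).const_mul _)).const_mul 2
  rw [tendsto_iff_norm_sub_tendsto_zero]
  refine squeeze_zero' (Eventually.of_forall fun r => norm_nonneg _) ?_ hAlim
  filter_upwards [eventually_gt_atTop d] with r hr
  have hr0 : 0 < r := hd.trans hr
  have hexp : 0 ≤ Real.exp (l / r) - 1 := sub_nonneg.2 (Real.one_le_exp (by positivity))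
  have hinv := hC.abs_sub_le_of_mul_xray hd.le hr (A := A r) (b := b)
    (fun s hs => (hb s (hr.trans_le hs)).trans ?_) fun s hs => ?_
  · rw [show r ^ 2 * (Real.pi / 2 * J.val 0 r) - b =
      r ^ 2 * (Real.pi / 2 * J.val 0 r - b / r ^ 2) by field_simp, Real.norm_eq_abs, abs_mul,
      abs_of_pos (by positivity)]
    calc _ ≤ r ^ 2 * (2 * A r / r ^ 2) := by gcongr
      _ = _ := by field_simp
  · refine le_add_of_le_of_nonneg ?_ (by positivity)
    gcongr
  · have hs0 : 0 < s := hr0.trans_le hs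
    refine le_add_of_nonneg_of_le (by positivity) ?_
    calc s * |xrayDeriv (J.val 0) (J.dr 0) s| ≤ s⁻¹ * (s ^ 2 * sourceTail B l s) := by
          rw [show s⁻¹ * (s ^ 2 * sourceTail B l s) = s * sourceTail B l s by field_simp]
          gcongr
          exact h.abs_xrayDeriv_le_sourceTail hd hB hl hF (hr.trans_le hs)
      _ ≤ s⁻¹ * (Real.pi / 2 * B * Real.exp (l / s)) :=
          mul_le_mul_of_nonneg_left (sq_mul_sourceTail_le hB hl hs0) (inv_nonneg.2 hs0.le)
      _ = Real.pi / 2 * B * (s⁻¹ * Real.exp (l / s)) := by ring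
      _ ≤ _ := by gcongr

theorem abs_val_le (h : DecayingWave d J F) (hd : 0 < d) (hB : 0 ≤ B) (hl : 0 < l)
    (hF : ∀ t r, d + |t| < r → |F t r| ≤ B / r ^ 5 * Real.exp (l / r))
    (hsmall : ∀ ε > 0, ∃ᶠ r in atTop, |J.val 0 r| * r ^ 2 ≤ ε) {r : ℝ} (hr : d < r) :
    |J.val 0 r| ≤ 2 * (B / l) / r ^ 2 * Real.exp (l / r) := by
  obtain ⟨C, hC⟩ := h.exists_decayingProfile_zero hd.le
  obtain ⟨b, hb⟩ := h.exists_forall_abs_mul_xray_sub_le hd hB hl hF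
  have hb0 : b = 0 := by
    refine abs_nonpos_iff.1 (le_of_forall_pos_le_add fun ε hε => ?_)
    have hfreq := hsmall (ε / 2) (half_pos hε)
    refine le_of_tendsto_of_frequently (h.tendsto_sq_mul_val hd hB hl hF hb).abs
      (hfreq.mono fun r hr => ?_)
    rw [mul_left_comm, abs_mul, abs_mul, abs_of_nonneg (sq_nonneg r), abs_of_pos (by positivity)]
    nlinarith [Real.pi_lt_four, Real.pi_pos]
  have hr0 : 0 < r := hd.trans hr
  have hinv := hC.abs_sub_le_of_mul_xray hd.le hr (b := b)
    (A := Real.pi / 2 * (B / l) * Real.exp (l / r)) (fun s hs => ?_) fun s hs => ?_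
  · rw [hb0, zero_div, sub_zero, abs_mul, abs_of_pos (by positivity)] at hinv
    refine le_of_mul_le_mul_left (hinv.trans_eq ?_) (by positivity : 0 < Real.pi / 2)
    ring
  · refine (hb s (hr.trans_le hs)).trans ?_
    gcongr
    linarith [Real.exp_le_exp.2 (div_le_div_of_nonneg_left hl.le hr0 hs)]
  · have hs0 : 0 < s := hr0.trans_le hs
    calc s * |xrayDeriv (J.val 0) (J.dr 0) s| ≤ s * sourceTail B l s := by
          gcongr
          exact h.abs_xrayDeriv_le_sourceTail hd hB hl hF (hr.trans_le hs)
      _ ≤ Real.pi / 2 * (B / l) * Real.exp (l / s) := mul_sourceTail_le hB hl hs0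
      _ ≤ _ := by gcongr

end DecayingWave

/-! ### The jet of a `C²` function -/

section JetOfFun

variable {d d' : ℝ} {w wt wr : ℝ → ℝ → ℝ}

lemma HasGradOn.mono (h : HasGradOn d w wt wr) (hd : d ≤ d') : HasGradOn d' w wt wr :=
  fun t r hr => h t r (by linarith)

lemma ConeContinuous.mono (h : ConeContinuous d w) (hd : d ≤ d') : ConeContinuous d' w :=
  ContinuousOn.mono h fun _ hq => (add_le_add_left hd _).trans_lt hq

lemma ConeContinuous.continuousOn_Icc (h : ConeContinuous d w) {t a b : ℝ} (ha : d + |t| < a) :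
    ContinuousOn (w t) (Icc a b) :=
  (h.slice t).mono fun _ hx => ha.trans_le hx.1

lemma ConeContinuous.intervalIntegrable (h : ConeContinuous d w) {t a b : ℝ} (ha : d + |t| < a)
    (hab : a ≤ b) : IntervalIntegrable (w t) volume a b :=
  (h.continuousOn_Icc ha).intervalIntegrable_of_Icc hab

lemma TwoJet.IsJetOn.mono {J : TwoJet} (h : J.IsJetOn d) (hd : d ≤ d') : J.IsJetOn d' where
  hasGradOn := h.hasGradOn.mono hd
  hasGradOn_dt := h.hasGradOn_dt.mono hd
  hasGradOn_dr := h.hasGradOn_dr.mono hd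
  continuous_dtt := h.continuous_dtt.mono hd
  continuous_dtr := h.continuous_dtr.mono hd
  continuous_drr := h.continuous_drr.mono hd

lemma pos_of_add_abs_lt {t r : ℝ} (hd : 0 ≤ d) (hr : d + |t| < r) : 0 < r :=
  (add_nonneg hd (abs_nonneg t)).trans_lt hr

lemma hasGradOn_of_contDiffOn (h : ContDiffOn ℝ 1 (fun q : ℝ × ℝ => w q.1 q.2) (extCone d)) :
    HasGradOn d w (dtu w) (fun t => deriv (w t)) := by
  have hgrad : HasGradOn d w (fun t r => fderiv ℝ (fun q : ℝ × ℝ => w q.1 q.2) (t, r) (1, 0))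
      (fun t r => fderiv ℝ (fun q : ℝ × ℝ => w q.1 q.2) (t, r) (0, 1)) := fun t r hr =>
    (((h.contDiffAt ((isOpen_extCone d).mem_nhds hr)).differentiableAt
      one_ne_zero).hasFDerivAt).congr_fderiv (by ext <;> simp)
  intro t r hr
  rw [dtu, (hgrad.hasDerivAt_left hr).deriv]
  beta_reduce
  rw [(hgrad.hasDerivAt_right hr).deriv]
  exact hgrad t r hr

lemma HasGradOn.fderiv_apply (h : HasGradOn d w wt wr) {t r : ℝ} (hr : d + |t| < r) (v : ℝ × ℝ) :
    fderiv ℝ (fun q : ℝ × ℝ => w q.1 q.2) (t, r) v = wt t r * v.1 + wr t r * v.2 := by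
  simp [(h t r hr).fderiv]

lemma contDiffOn_partialDerivs (h : ContDiffOn ℝ 2 (fun q : ℝ × ℝ => w q.1 q.2) (extCone d)) :
    ContDiffOn ℝ 1 (fun q : ℝ × ℝ => dtu w q.1 q.2) (extCone d) ∧
      ContDiffOn ℝ 1 (fun q : ℝ × ℝ => deriv (w q.1) q.2) (extCone d) := by
  have hgrad := hasGradOn_of_contDiffOn (h.of_le one_le_two)
  have hfderiv : ContDiffOn ℝ 1 (fderiv ℝ (fun q : ℝ × ℝ => w q.1 q.2)) (extCone d) :=
    h.fderiv_of_isOpen (isOpen_extCone d) (by norm_num)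
  exact ⟨(hfderiv.clm_apply (contDiffOn_const (c := ((1, 0) : ℝ × ℝ)))).congr fun q hq => by
      simp [hgrad.fderiv_apply hq],
    (hfderiv.clm_apply (contDiffOn_const (c := ((0, 1) : ℝ × ℝ)))).congr fun q hq => by
      simp [hgrad.fderiv_apply hq]⟩

lemma coneContinuous_partialDerivs
    (h : ContDiffOn ℝ 1 (fun q : ℝ × ℝ => w q.1 q.2) (extCone d)) :
    ConeContinuous d (dtu w) ∧ ConeContinuous d (fun t => deriv (w t)) := by
  have hgrad := hasGradOn_of_contDiffOn h
  have hfderiv := h.continuousOn_fderiv_of_isOpen (isOpen_extCone d) le_rfl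
  exact ⟨(hfderiv.clm_apply (continuousOn_const (c := ((1, 0) : ℝ × ℝ)))).congr fun q hq => by
      simp [hgrad.fderiv_apply hq],
    (hfderiv.clm_apply (continuousOn_const (c := ((0, 1) : ℝ × ℝ)))).congr fun q hq => by
      simp [hgrad.fderiv_apply hq]⟩

lemma HasGradOn.hasFDerivAt_fderiv_apply (hw : HasGradOn d w wt wr) {wtt wtr wrt wrr : ℝ → ℝ → ℝ}
    (ht : HasGradOn d wt wtt wtr) (hr : HasGradOn d wr wrt wrr) {t r : ℝ} (htr : d + |t| < r)
    (v : ℝ × ℝ) :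
    HasFDerivAt (fun q => fderiv ℝ (fun q : ℝ × ℝ => w q.1 q.2) q v)
      ((wtt t r * v.1 + wrt t r * v.2) • ContinuousLinearMap.fst ℝ ℝ ℝ +
        (wtr t r * v.1 + wrr t r * v.2) • ContinuousLinearMap.snd ℝ ℝ ℝ) (t, r) := by
  have hlin := ((ht t r htr).mul_const v.1).add ((hr t r htr).mul_const v.2)
  refine (hlin.congr_of_eventuallyEq ?_).congr_fderiv (by ext <;> simp <;> ring)
  filter_upwards [(isOpen_extCone d).mem_nhds htr] with q hq using hw.fderiv_apply hq v

lemma deriv_dtu_comm (h : ContDiffOn ℝ 2 (fun q : ℝ × ℝ => w q.1 q.2) (extCone d)) {t r : ℝ}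
    (hr : d + |t| < r) : dtu (fun t => deriv (w t)) t r = deriv (dtu w t) r := by
  have hat := h.contDiffAt (x := (t, r)) ((isOpen_extCone d).mem_nhds hr)
  have hsecond := fun v => (hasGradOn_of_contDiffOn (h.of_le one_le_two)).hasFDerivAt_fderiv_apply
    (hasGradOn_of_contDiffOn (contDiffOn_partialDerivs h).1)
    (hasGradOn_of_contDiffOn (contDiffOn_partialDerivs h).2) hr v
  have hdiff : HasFDerivAt (fderiv ℝ (fun q : ℝ × ℝ => w q.1 q.2)) _ (t, r) :=
    ((hat.fderiv_right (m := 1) (by norm_num)).differentiableAt one_ne_zero).hasFDerivAt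
  have happly : ∀ v, HasFDerivAt (fun q => fderiv ℝ (fun q : ℝ × ℝ => w q.1 q.2) q v) _ (t, r) :=
    fun v => hdiff.clm_apply (hasFDerivAt_const v (t, r))
  have hsymm : fderiv ℝ (fderiv ℝ (fun q : ℝ × ℝ => w q.1 q.2)) (t, r) (1, 0) (0, 1) =
      fderiv ℝ (fderiv ℝ (fun q : ℝ × ℝ => w q.1 q.2)) (t, r) (0, 1) (1, 0) :=
    hat.isSymmSndFDerivAt (by simp) _ _
  have hrt := DFunLike.congr_fun ((happly (0, 1)).unique (hsecond (0, 1))) (1, 0)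
  have htr := DFunLike.congr_fun ((happly (1, 0)).unique (hsecond (1, 0))) (0, 1)
  simp only [ContinuousLinearMap.comp_zero, zero_add, ContinuousLinearMap.flip_apply, mul_zero,
    mul_one, add_apply, smul_apply, ContinuousLinearMap.coe_fst', smul_eq_mul,
    ContinuousLinearMap.coe_snd', add_zero] at hrt htr
  rw [← hrt, ← htr, hsymm]

/-- The jet of a function of `(t, r)`, with entries given by iterated partial derivatives. -/
noncomputable def TwoJet.ofFun (u : ℝ → ℝ → ℝ) : TwoJet where
  val := u
  dt := dtu u
  dr t := deriv (u t)
  dtt := dtu (dtu u)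
  dtr t := deriv (dtu u t)
  drr t := deriv (deriv (u t))

lemma TwoJet.isJetOn_ofFun (h : ContDiffOn ℝ 2 (fun q : ℝ × ℝ => w q.1 q.2) (extCone d)) :
    (TwoJet.ofFun w).IsJetOn d where
  hasGradOn := hasGradOn_of_contDiffOn (h.of_le one_le_two)
  hasGradOn_dt := hasGradOn_of_contDiffOn (contDiffOn_partialDerivs h).1
  hasGradOn_dr t r hr := by
    have hgrad := hasGradOn_of_contDiffOn (w := fun t => deriv (w t))
      (contDiffOn_partialDerivs h).2 t r hr
    rw [deriv_dtu_comm h hr] at hgrad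
    exact hgrad
  continuous_dtt := (coneContinuous_partialDerivs (contDiffOn_partialDerivs h).1).1
  continuous_dtr := (coneContinuous_partialDerivs (contDiffOn_partialDerivs h).1).2
  continuous_drr := (coneContinuous_partialDerivs (contDiffOn_partialDerivs h).2).2

end JetOfFun

/-! ### Exterior energy -/

/-- `J` is the jet of a solution on `r > |t|` of the radial wave equation in `ℝ⁴` with
nonlinearity `f`. -/
structure ExteriorSolution (f : ℝ → ℝ) (J : TwoJet) : Prop extends J.IsJetOn 0 where
  eq : ∀ t r, |t| < r → J.dtt t r = J.drr t r + 3 / r * J.dr t r + f (J.val t r)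

namespace TwoJet

/-- The energy density `(|∂_t u|² + |∂_r u|²) r³` with respect to `dr`. -/
def energyDensity (J : TwoJet) (t r : ℝ) : ℝ := (J.dt t r ^ 2 + J.dr t r ^ 2) * r ^ 3

/-- The energy of `J` at time `t` in the region `r > d + |t|`. -/
noncomputable def extEnergy (J : TwoJet) (d t : ℝ) : ℝ := ∫ r in Ioi (d + |t|), J.energyDensity t r

end TwoJet

/-- The exterior energy of `J` is finite and bounded, tends to zero in time, and is small, uniformly
in time, outside the cones `r > R + |t|` with `R` large. -/
structure DispersingEnergy (J : TwoJet) : Prop where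
  integrableOn : ∀ d > 0, ∀ t, IntegrableOn (J.energyDensity t) (Ioi (d + |t|))
  bounded : ∀ d > 0, ∃ C > 0, ∀ t, J.extEnergy d t ≤ C ^ 2
  vanishing : ∀ d > 0, ∀ ε > 0, ∃ T, ∀ t, T ≤ |t| → J.extEnergy d t ≤ ε ^ 2
  small : ∀ ε > 0, ∃ R > 0, ∀ t, J.extEnergy R t ≤ ε ^ 2

section DispersingEnergyOfFun

open TwoJet

variable {u : ℝ → ℝ → ℝ} {d t : ℝ}

lemma energyDensity_nonneg_ae (J : TwoJet) (hd : 0 ≤ d) (t : ℝ) :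
    0 ≤ᵐ[volume.restrict (Ioi (d + |t|))] J.energyDensity t :=
  ae_restrict_of_forall_mem measurableSet_Ioi fun r hr => by
    have := pos_of_add_abs_lt hd hr
    simp only [Pi.zero_apply, energyDensity]
    positivity

lemma extEnergy_nonneg (J : TwoJet) (hd : 0 ≤ d) (t : ℝ) : 0 ≤ J.extEnergy d t :=
  integral_nonneg_of_ae (energyDensity_nonneg_ae J hd t)

lemma TwoJet.IsJetOn.continuousOn_energyDensity {J : TwoJet} (hJ : J.IsJetOn d) (t : ℝ) :
    ContinuousOn (J.energyDensity t) (Ioi (d + |t|)) :=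
  (((hJ.hasGradOn_dt.coneContinuous.slice t).pow 2).add
    ((hJ.hasGradOn_dr.coneContinuous.slice t).pow 2)).mul (by fun_prop)

lemma eH_sq_eq_lintegral_energyDensity (hJ : (ofFun u).IsJetOn d) (hd : 0 ≤ d) (t : ℝ) :
    eH (d + |t|) (u t) (dtu u t) ^ 2 =
      ∫⁻ r in Ioi (d + |t|), ENNReal.ofReal ((ofFun u).energyDensity t r) := by
  have hmeas : AEMeasurable (fun r => ENNReal.ofReal (deriv (u t) r ^ 2 * r ^ 3))
      (volume.restrict (Ioi (d + |t|))) :=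
    ((((hJ.hasGradOn_dr.coneContinuous.slice t).pow 2).mul
      (by fun_prop : ContinuousOn (fun r : ℝ => r ^ 3) _)).aemeasurable
        measurableSet_Ioi).ennreal_ofReal
  rw [eH, ← ENNReal.rpow_natCast, ← ENNReal.rpow_mul, ← lintegral_add_left' hmeas]
  norm_num only [ENNReal.rpow_one]
  refine setLIntegral_congr_fun measurableSet_Ioi fun r hr => ?_
  have hr0 := pos_of_add_abs_lt hd hr
  rw [← ENNReal.ofReal_add (by positivity) (by positivity)]
  congr 1
  simp only [energyDensity, ofFun]
  ring

lemma integrableOn_energyDensity_of_eH_lt_top (hJ : (ofFun u).IsJetOn d) (hd : 0 ≤ d)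
    (h : eH (d + |t|) (u t) (dtu u t) < ⊤) :
    IntegrableOn ((ofFun u).energyDensity t) (Ioi (d + |t|)) := by
  refine (lintegral_ofReal_ne_top_iff_integrable
    ((hJ.continuousOn_energyDensity t).aestronglyMeasurable measurableSet_Ioi)
    (energyDensity_nonneg_ae _ hd t)).1 ?_
  rw [← eH_sq_eq_lintegral_energyDensity hJ hd]
  exact (ENNReal.pow_lt_top h).ne

lemma eH_sq_eq_ofReal_extEnergy (hJ : (ofFun u).IsJetOn d) (hd : 0 ≤ d)
    (h : eH (d + |t|) (u t) (dtu u t) < ⊤) :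
    eH (d + |t|) (u t) (dtu u t) ^ 2 = ENNReal.ofReal ((ofFun u).extEnergy d t) := by
  rw [eH_sq_eq_lintegral_energyDensity hJ hd, extEnergy, ofReal_integral_eq_lintegral_ofReal
    (integrableOn_energyDensity_of_eH_lt_top hJ hd h) (energyDensity_nonneg_ae _ hd t)]

lemma extEnergy_le_of_eH_le (hJ : (ofFun u).IsJetOn d) (hd : 0 ≤ d) {C : NNReal}
    (hdata : eH d (u 0) (dtu u 0) < ⊤)
    (h : eH (d + |t|) (u t) (dtu u t) ≤ C * eH d (u 0) (dtu u 0)) :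
    (ofFun u).extEnergy d t ≤ C ^ 2 * (ofFun u).extEnergy d 0 := by
  have hfin := h.trans_lt (ENNReal.mul_lt_top ENNReal.coe_lt_top hdata)
  have hsq := pow_le_pow_left' h 2
  have hzero := eH_sq_eq_ofReal_extEnergy (t := 0) hJ hd (by simpa using hdata)
  rw [abs_zero, add_zero] at hzero
  rw [mul_pow, hzero, eH_sq_eq_ofReal_extEnergy hJ hd hfin, ← ENNReal.ofReal_coe_nnreal,
    ← ENNReal.ofReal_pow C.coe_nonneg, ← ENNReal.ofReal_mul (by positivity)] at hsq
  exact (ENNReal.ofReal_le_ofReal_iff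
    (mul_nonneg (by positivity) (extEnergy_nonneg _ hd 0))).1 hsq

lemma tendsto_extEnergy_atTop (J : TwoJet) (t : ℝ) :
    Tendsto (fun R => J.extEnergy R t) atTop (𝓝 0) :=
  tendsto_integral_Ioi_zero (tendsto_atTop_add_const_right _ _ tendsto_id)

lemma dispersingEnergy_ofFun (hJ : (ofFun u).IsJetOn 0) {C : NNReal}
    (hdata : ∀ R > 0, eH R (u 0) (dtu u 0) < ⊤)
    (hsup : ∀ R > 0, supH R u ≤ C * eH R (u 0) (dtu u 0))
    (hvan : ∀ R > 0, ExtEnergyVanishes R u) : DispersingEnergy (ofFun u) := by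
  have hjet : ∀ d > 0, (ofFun u).IsJetOn d := fun d hd => hJ.mono hd.le
  have heH : ∀ d > 0, ∀ t, eH (d + |t|) (u t) (dtu u t) ≤ C * eH d (u 0) (dtu u 0) :=
    fun d hd t => (le_iSup (fun t => eH (d + |t|) (u t) (dtu u t)) t).trans (hsup d hd)
  have hint : ∀ d > 0, ∀ t, IntegrableOn ((ofFun u).energyDensity t) (Ioi (d + |t|)) :=
    fun d hd t => integrableOn_energyDensity_of_eH_lt_top (hjet d hd) hd.le
      ((heH d hd t).trans_lt (ENNReal.mul_lt_top ENNReal.coe_lt_top (hdata d hd)))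
  have hle : ∀ d > 0, ∀ t, (ofFun u).extEnergy d t ≤ C ^ 2 * (ofFun u).extEnergy d 0 :=
    fun d hd t => extEnergy_le_of_eH_le (hjet d hd) hd.le (hdata d hd) (heH d hd t)
  refine ⟨hint, fun d hd => ?_, fun d hd ε hε => ?_, fun ε hε => ?_⟩
  · refine ⟨C * √((ofFun u).extEnergy d 0) + 1, by positivity, fun t => (hle d hd t).trans ?_⟩
    calc (C : ℝ) ^ 2 * (ofFun u).extEnergy d 0 = (C * √((ofFun u).extEnergy d 0)) ^ 2 := by
          rw [mul_pow, Real.sq_sqrt (extEnergy_nonneg _ hd.le 0)]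
      _ ≤ (C * √((ofFun u).extEnergy d 0) + 1) ^ 2 := by gcongr; linarith
  · obtain ⟨T₁, hT₁⟩ := ((hvan d hd).1.eventually_le_const (pow_pos hε 2)).exists_forall_of_atTop
    obtain ⟨T₂, hT₂⟩ := ((hvan d hd).2.eventually_le_const (pow_pos hε 2)).exists_forall_of_atBot
    refine ⟨max T₁ (-T₂), fun t ht => ?_⟩
    obtain ⟨h₁, h₂⟩ := max_le_iff.1 ht
    rcases le_total 0 t with hpos | hneg
    · exact hT₁ t (by rwa [abs_of_nonneg hpos] at h₁)
    · exact hT₂ t (by rw [abs_of_nonpos hneg] at h₂; linarith)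
  · have htail := (tendsto_extEnergy_atTop (ofFun u) 0).const_mul ((C : ℝ) ^ 2)
    rw [mul_zero] at htail
    obtain ⟨R, hR, hR0⟩ :=
      ((htail.eventually_le_const (pow_pos hε 2)).and (eventually_gt_atTop 0)).exists
    exact ⟨R, hR0, fun t => (hle R hR0 t).trans hR⟩

end DispersingEnergyOfFun

/-! ### Radial Sobolev estimates -/

section WeightedCauchySchwarz

variable {a ω : ℝ → ℝ} {x y e m : ℝ}

lemma abs_le_amgm {a ω e m : ℝ} (hω : 0 < ω) (he : 0 < e) (hm : 0 < m) :
    |a| ≤ m / (2 * e) * (a ^ 2 * ω) + e / (2 * m) * ω⁻¹ := by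
  have hsq : m / (2 * e) * (a ^ 2 * ω) + e / (2 * m) * ω⁻¹ - |a| =
      (m * (|a| * ω) - e) ^ 2 / (2 * e * m * ω) := by
    rw [← sq_abs a]
    field_simp
    ring
  have hnonneg : 0 ≤ (m * (|a| * ω) - e) ^ 2 / (2 * e * m * ω) := by positivity
  linarith

lemma integral_abs_le_of_integral_sq_mul_le (hxy : x ≤ y) (ha : ContinuousOn a (Icc x y))
    (hω : ContinuousOn ω (Icc x y)) (hpos : ∀ z ∈ Icc x y, 0 < ω z) (he : 0 < e) (hm : 0 < m)
    (hsq : ∫ z in x..y, a z ^ 2 * ω z ≤ e ^ 2) (hinv : ∫ z in x..y, (ω z)⁻¹ ≤ m ^ 2) :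
    ∫ z in x..y, |a z| ≤ e * m := by
  have hωinv := hω.inv₀ fun z hz => (hpos z hz).ne'
  have hsqInt : IntervalIntegrable (fun z => m / (2 * e) * (a z ^ 2 * ω z)) volume x y :=
    (((ha.pow 2).mul hω).intervalIntegrable_of_Icc hxy).const_mul _
  have hinvInt : IntervalIntegrable (fun z => e / (2 * m) * (ω z)⁻¹) volume x y :=
    (hωinv.intervalIntegrable_of_Icc hxy).const_mul _
  calc ∫ z in x..y, |a z|
      ≤ ∫ z in x..y, (m / (2 * e) * (a z ^ 2 * ω z) + e / (2 * m) * (ω z)⁻¹) :=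
        intervalIntegral.integral_mono_on hxy (ha.abs.intervalIntegrable_of_Icc hxy)
          (hsqInt.add hinvInt) fun z hz => abs_le_amgm (hpos z hz) he hm
    _ = m / (2 * e) * (∫ z in x..y, a z ^ 2 * ω z) + e / (2 * m) * ∫ z in x..y, (ω z)⁻¹ := by
        rw [intervalIntegral.integral_add hsqInt hinvInt, intervalIntegral.integral_const_mul,
          intervalIntegral.integral_const_mul]
    _ ≤ m / (2 * e) * e ^ 2 + e / (2 * m) * m ^ 2 := by gcongr
    _ = e * m := by field_simp; ring

end WeightedCauchySchwarz

section EnergyBounds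

variable {a : ℝ → ℝ} {r S e : ℝ}

lemma decayWeight_sq (hr : 0 < r) : decayWeight r ^ 2 = (r ^ 3)⁻¹ := by
  rw [decayWeight, ← Real.rpow_mul_natCast hr.le, ← Real.rpow_natCast, ← Real.rpow_neg hr.le]
  norm_num

lemma integral_inv_cube_le_decayWeight_sq (hr : 0 < r) :
    ∫ ρ in r..r + 1, (ρ ^ 3)⁻¹ ≤ decayWeight r ^ 2 := by
  have hcont : ContinuousOn (fun ρ : ℝ => (ρ ^ 3)⁻¹) (Icc r (r + 1)) :=
    ContinuousOn.inv₀ (by fun_prop) fun x hx => (pow_pos (hr.trans_le hx.1) 3).ne'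
  calc ∫ ρ in r..r + 1, (ρ ^ 3)⁻¹ ≤ ∫ _ in r..r + 1, (r ^ 3)⁻¹ :=
        intervalIntegral.integral_mono_on (by linarith)
          (hcont.intervalIntegrable_of_Icc (by linarith)) intervalIntegrable_const
          fun x hx => by have := hx.1; gcongr
    _ = decayWeight r ^ 2 := by simp [decayWeight_sq hr]

lemma integral_inv_cube_le_inv_sq (hr : 0 < r) (hS : r ≤ S) :
    ∫ ρ in r..S, (ρ ^ 3)⁻¹ ≤ r⁻¹ ^ 2 := by
  have hderiv : ∀ x ∈ uIcc r S, HasDerivAt (fun x : ℝ => -(1 / 2) * (x ^ 2)⁻¹) ((x ^ 3)⁻¹) x := by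
    intro x hx
    rw [uIcc_of_le hS] at hx
    have hx0 : x ≠ 0 := (hr.trans_le hx.1).ne'
    refine (((hasDerivAt_pow 2 x).inv (by positivity)).const_mul _).congr_deriv ?_
    field_simp
    norm_num
  have hcont : ContinuousOn (fun ρ : ℝ => (ρ ^ 3)⁻¹) (Icc r S) :=
    ContinuousOn.inv₀ (by fun_prop) fun x hx => (pow_pos (hr.trans_le hx.1) 3).ne'
  rw [intervalIntegral.integral_eq_sub_of_hasDerivAt hderiv (hcont.intervalIntegrable_of_Icc hS),
    inv_pow]
  have hSinv : 0 ≤ (S ^ 2)⁻¹ := by positivity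
  have hrinv : 0 ≤ (r ^ 2)⁻¹ := by positivity
  linarith

lemma integral_abs_le_mul_decayWeight (hr : 0 < r) (ha : ContinuousOn a (Icc r (r + 1)))
    (he : 0 < e) (h : ∫ ρ in r..r + 1, a ρ ^ 2 * ρ ^ 3 ≤ e ^ 2) :
    ∫ ρ in r..r + 1, |a ρ| ≤ e * decayWeight r :=
  integral_abs_le_of_integral_sq_mul_le (by linarith) ha (by fun_prop)
    (fun z hz => pow_pos (hr.trans_le hz.1) 3) he (decayWeight_pos hr) h
    (integral_inv_cube_le_decayWeight_sq hr)

lemma integral_abs_le_div (hr : 0 < r) (hS : r ≤ S) (ha : ContinuousOn a (Icc r S)) (he : 0 < e)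
    (h : ∫ ρ in r..S, a ρ ^ 2 * ρ ^ 3 ≤ e ^ 2) : ∫ ρ in r..S, |a ρ| ≤ e / r :=
  integral_abs_le_of_integral_sq_mul_le hS ha (by fun_prop)
    (fun z hz => pow_pos (hr.trans_le hz.1) 3) he (inv_pos.2 hr) h
    (integral_inv_cube_le_inv_sq hr hS)

end EnergyBounds

/-- The `L¹` mass of `w(t, ·)` on `[r, r + 1]`. It decays like `r^{-3/2}` whenever `w` has finite
weighted `L²` norm, in contrast to the values of `w`. -/
noncomputable def localMass (w : ℝ → ℝ → ℝ) (t r : ℝ) : ℝ := ∫ ρ in r..r + 1, |w t ρ|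

lemma localMass_nonneg (w : ℝ → ℝ → ℝ) (t r : ℝ) : 0 ≤ localMass w t r :=
  intervalIntegral.integral_nonneg (by linarith) fun _ _ => abs_nonneg _

namespace DispersingEnergy

variable {J : TwoJet} {g : ℝ → ℝ → ℝ} {d t r S ε : ℝ}

lemma integral_sq_mul_le (h : DispersingEnergy J) (hcont : ConeContinuous 0 g)
    (hg : ∀ t r, g t r ^ 2 ≤ J.dt t r ^ 2 + J.dr t r ^ 2) (hd : 0 < d) (hr : d + |t| < r)
    (hS : r ≤ S) : ∫ ρ in r..S, g t ρ ^ 2 * ρ ^ 3 ≤ J.extEnergy d t := by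
  have hpos : ∀ ρ ∈ Ioc r S, 0 < ρ := fun ρ hρ => (pos_of_add_abs_lt hd.le hr).trans hρ.1
  have hsub : Ioc r S ⊆ Ioi (d + |t|) := fun ρ hρ => hr.trans hρ.1
  have hint : IntervalIntegrable (fun ρ => g t ρ ^ 2 * ρ ^ 3) volume r S :=
    (((hcont.continuousOn_Icc (by linarith)).pow 2).mul (by fun_prop)).intervalIntegrable_of_Icc hS
  rw [intervalIntegral.integral_of_le hS]
  calc ∫ ρ in Ioc r S, g t ρ ^ 2 * ρ ^ 3
      ≤ ∫ ρ in Ioc r S, J.energyDensity t ρ :=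
        setIntegral_mono_on hint.1 ((h.integrableOn d hd t).mono_set hsub) measurableSet_Ioc
          fun ρ hρ => mul_le_mul_of_nonneg_right (hg t ρ) (pow_pos (hpos ρ hρ) 3).le
    _ ≤ J.extEnergy d t :=
        setIntegral_mono_set (h.integrableOn d hd t) (energyDensity_nonneg_ae J hd.le t)
          (LE.le.eventuallyLE hsub)

lemma coneDecaying_localMass (h : DispersingEnergy J) (hcont : ConeContinuous 0 g)
    (hg : ∀ t r, g t r ^ 2 ≤ J.dt t r ^ 2 + J.dr t r ^ 2) (hd : 0 < d) :
    ConeDecaying d (localMass g) := by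
  have hmass : ∀ e > 0, ∀ t r, d + |t| < r → J.extEnergy d t ≤ e ^ 2 →
      |localMass g t r| ≤ e * decayWeight r := fun e he t r hr hle => by
    rw [abs_of_nonneg (localMass_nonneg g t r)]
    exact integral_abs_le_mul_decayWeight (pos_of_add_abs_lt hd.le hr)
      (hcont.continuousOn_Icc (by linarith)) he
      ((h.integral_sq_mul_le hcont hg hd hr (by linarith)).trans hle)
  obtain ⟨C, hC, hle⟩ := h.bounded d hd
  refine ⟨⟨C, fun t r hr => hmass C hC t r hr (hle t)⟩, fun ε hε => ?_⟩
  exact (h.vanishing d hd ε hε).imp fun T hT t r hr ht => hmass ε hε t r hr (hT t ht)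

lemma integral_abs_le_of_extEnergy_le (h : DispersingEnergy J) (hcont : ConeContinuous 0 g)
    (hg : ∀ t r, g t r ^ 2 ≤ J.dt t r ^ 2 + J.dr t r ^ 2) (hd : 0 < d) (hr : d + |t| < r)
    (hS : r ≤ S) (hε : 0 < ε) (hle : J.extEnergy d t ≤ ε ^ 2) :
    ∫ ρ in r..S, |g t ρ| ≤ ε / r :=
  integral_abs_le_div (pos_of_add_abs_lt hd.le hr) hS (hcont.continuousOn_Icc (by linarith)) hε
    ((h.integral_sq_mul_le hcont hg hd hr hS).trans hle)

end DispersingEnergy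

/-! ### Pointwise decay -/

lemma integral_abs_integral_le {G : ℝ → ℝ → ℝ} {a b c e K : ℝ} (hab : a ≤ b) (hce : c ≤ e)
    (hG : ContinuousOn (fun q : ℝ × ℝ => G q.1 q.2) (Icc c e ×ˢ Icc a b))
    (hK : ∀ τ ∈ Icc c e, ∫ ρ in a..b, |G τ ρ| ≤ K) :
    ∫ ρ in a..b, |∫ τ in c..e, G τ ρ| ≤ (e - c) * K := by
  have hint : Integrable (fun q : ℝ × ℝ => G q.1 q.2)
      ((volume.restrict (Ioc c e)).prod (volume.restrict (Ioc a b))) := by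
    rw [Measure.prod_restrict]
    exact (hG.integrableOn_compact (isCompact_Icc.prod isCompact_Icc)).mono_set
      (prod_mono Ioc_subset_Icc_self Ioc_subset_Icc_self)
  simp only [intervalIntegral.integral_of_le hab, intervalIntegral.integral_of_le hce] at hK ⊢
  calc ∫ ρ in Ioc a b, |∫ τ in Ioc c e, G τ ρ|
      ≤ ∫ ρ in Ioc a b, ∫ τ in Ioc c e, |G τ ρ| :=
        integral_mono hint.swap.integral_prod_left.norm hint.swap.norm.integral_prod_left
          fun ρ => abs_integral_le_integral_abs
    _ = ∫ τ in Ioc c e, ∫ ρ in Ioc a b, |G τ ρ| :=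
        (integral_integral_swap (f := fun τ ρ => |G τ ρ|) hint.norm).symm
    _ ≤ ∫ _ in Ioc c e, K :=
        setIntegral_mono_on hint.norm.integral_prod_left (integrableOn_const (by simp))
          measurableSet_Ioc fun τ hτ => hK τ (Ioc_subset_Icc_self hτ)
    _ = (e - c) * K := by simp [hce]

lemma exists_mem_Icc_mul_le_integral {f : ℝ → ℝ} {a b : ℝ} (hab : a ≤ b)
    (hf : ContinuousOn f (Icc a b)) : ∃ x ∈ Icc a b, (b - a) * f x ≤ ∫ y in a..b, f y := by
  obtain ⟨x, hx, hmin⟩ := isCompact_Icc.exists_isMinOn (nonempty_Icc.2 hab) hf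
  refine ⟨x, hx, ?_⟩
  have hmono := intervalIntegral.integral_mono_on (μ := volume) hab intervalIntegrable_const
    (hf.intervalIntegrable_of_Icc hab) fun y hy => hmin hy
  rwa [intervalIntegral.integral_const, smul_eq_mul] at hmono

lemma frequently_abs_le_of_lintegral_lt_top {f : ℝ → ℝ} {m n : ℕ} {ε : ℝ}
    (h : ∫⁻ r in Ioi (0 : ℝ), ENNReal.ofReal (|f r| ^ n * r ^ m) < ⊤) (hε : 0 < ε) :
    ∃ᶠ r in atTop, |f r| ≤ ε := by
  by_contra hcon
  obtain ⟨R, hR⟩ := (((not_frequently.1 hcon).and (eventually_ge_atTop 1))).exists_forall_of_atTop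
  have hlower : ∫⁻ _ in Ioi R, ENNReal.ofReal (ε ^ n) ≤
      ∫⁻ r in Ioi (0 : ℝ), ENNReal.ofReal (|f r| ^ n * r ^ m) := by
    refine (setLIntegral_mono' measurableSet_Ioi fun r hr => ENNReal.ofReal_le_ofReal ?_).trans
      (lintegral_mono_set (Ioi_subset_Ioi (zero_le_one.trans (hR R le_rfl).2)))
    obtain ⟨hlarge, hone⟩ := hR r (le_of_lt hr)
    exact (pow_le_pow_left₀ hε.le (not_le.1 hlarge).le n).trans
      (le_mul_of_one_le_right (by positivity) (one_le_pow₀ hone))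
  rw [setLIntegral_const, Real.volume_Ioi, ENNReal.mul_top (by simpa using pow_pos hε n),
    top_le_iff] at hlower
  exact h.ne hlower

lemma abs_le_of_integral_abs_deriv_le {g g' : ℝ → ℝ} {r K : ℝ}
    (hderiv : ∀ x, r ≤ x → HasDerivAt g (g' x) x) (hcont : ContinuousOn g' (Ici r))
    (hK : ∀ S, r ≤ S → ∫ ρ in r..S, |g' ρ| ≤ K) (hsmall : ∀ ε > 0, ∃ᶠ S in atTop, |g S| ≤ ε) :
    |g r| ≤ K := by
  refine le_of_forall_pos_le_add fun ε hε => ?_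
  obtain ⟨S, hSε, hS⟩ := ((hsmall ε hε).and_eventually (eventually_ge_atTop r)).exists
  have hftc : ∫ ρ in r..S, g' ρ = g S - g r :=
    intervalIntegral.integral_eq_sub_of_hasDerivAt
      (fun x hx => hderiv x (by rw [uIcc_of_le hS] at hx; exact hx.1))
      ((hcont.mono Icc_subset_Ici_self).intervalIntegrable_of_Icc hS)
  have hle := intervalIntegral.abs_integral_le_integral_abs (f := g') (μ := volume) hS
  rw [hftc, abs_sub_comm] at hle
  linarith [abs_sub_abs_le_abs_sub (g r) (g S), hK S hS]

lemma HasGradOn.integral_abs_sub_le {d a b t t' K : ℝ} {w wt wr : ℝ → ℝ → ℝ}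
    (h : HasGradOn d w wt wr) (hcont : ConeContinuous d wt) (hab : a ≤ b) (ht : d + |t| < a)
    (ht' : d + |t'| < a) (hK : ∀ τ, d + |τ| < a → ∫ ρ in a..b, |wt τ ρ| ≤ K) :
    ∫ ρ in a..b, |w t ρ - w t' ρ| ≤ |t - t'| * K := by
  wlog hle : t' ≤ t generalizing t t'
  · simpa only [abs_sub_comm] using this ht' ht (le_of_not_ge hle)
  have hcone : ∀ τ ∈ Icc t' t, ∀ ρ ∈ Icc a b, d + |τ| < ρ := fun τ hτ ρ hρ => by
    linarith [hρ.1, abs_le_max_abs_abs hτ.1 hτ.2, max_lt (lt_sub_iff_add_lt'.2 ht')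
      (lt_sub_iff_add_lt'.2 ht)]
  have hftc : ∀ ρ ∈ Icc a b, ∫ τ in t'..t, wt τ ρ = w t ρ - w t' ρ := fun ρ hρ =>
    intervalIntegral.integral_eq_sub_of_hasDerivAt (f := fun τ => w τ ρ)
      (fun τ hτ => h.hasDerivAt_left (hcone τ (by rwa [uIcc_of_le hle] at hτ) ρ hρ))
      ((ContinuousOn.comp (g := fun q : ℝ × ℝ => wt q.1 q.2) (f := fun τ => (τ, ρ)) hcont
        (by fun_prop) fun τ hτ => hcone τ hτ ρ hρ).intervalIntegrable_of_Icc hle)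
  rw [abs_of_nonneg (sub_nonneg.2 hle)]
  refine le_of_eq_of_le (intervalIntegral.integral_congr fun ρ hρ => ?_)
    (integral_abs_integral_le (G := wt) hab hle
      (ContinuousOn.mono hcont fun q hq => hcone q.1 hq.1 q.2 hq.2)
      fun τ hτ => hK τ (hcone τ hτ a (left_mem_Icc.2 hab)))
  rw [uIcc_of_le hab] at hρ
  simp only [hftc ρ hρ]

namespace DispersingEnergy

variable {J : TwoJet} {d ε : ℝ}

lemma exists_forall_abs_val_le_div_of_frequently (h : DispersingEnergy J) (hJ : J.IsJetOn 0)
    (hd : 0 < d) : ∃ C > 0, ∀ t, (∀ ε > 0, ∃ᶠ r in atTop, |J.val t r| ≤ ε) →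
      ∀ r, d + |t| < r → |J.val t r| ≤ C / r := by
  obtain ⟨C, hC, hle⟩ := h.bounded d hd
  refine ⟨C, hC, fun t hsmall r hr => ?_⟩
  exact abs_le_of_integral_abs_deriv_le
    (fun x hx => hJ.hasGradOn.hasDerivAt_right (by linarith))
    ((hJ.hasGradOn_dr.coneContinuous.slice t).mono fun x (hx : r ≤ x) => by
      change 0 + |t| < x
      linarith)
    (fun S hS => h.integral_abs_le_of_extEnergy_le hJ.hasGradOn_dr.coneContinuous
      (fun _ _ => le_add_of_nonneg_left (sq_nonneg _)) hd hr hS hC (hle t)) hsmall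

lemma frequently_abs_val_le (h : DispersingEnergy J) (hJ : J.IsJetOn 0)
    (hsmall : ∀ ε > 0, ∃ᶠ r in atTop, |J.val 0 r| ≤ ε) (t : ℝ) (hε : 0 < ε) :
    ∃ᶠ r in atTop, |J.val t r| ≤ ε := by
  obtain ⟨C, -, hinitial⟩ := h.exists_forall_abs_val_le_div_of_frequently hJ one_pos
  obtain ⟨M, hM⟩ := (h.coneDecaying_localMass hJ.hasGradOn_dt.coneContinuous
    (fun _ _ => le_add_of_nonneg_right (sq_nonneg _)) one_pos).bounded
  have hlim : Tendsto (fun x => C / x + |t - 0| * (M * decayWeight x)) atTop (𝓝 0) := by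
    simpa using (tendsto_const_nhds.div_atTop tendsto_id).add
      ((tendsto_decayWeight_atTop.const_mul M).const_mul |t - 0|)
  refine frequently_atTop.2 fun R => ?_
  obtain ⟨x, hxε, hxR, hxt⟩ := ((hlim.eventually_le_const hε).and
    ((eventually_ge_atTop R).and (eventually_gt_atTop (1 + |t|)))).exists
  have hx1 : 1 < x := by linarith [abs_nonneg t]
  have hval := hJ.hasGradOn.coneContinuous
  have hdiff : ∫ ρ in x..x + 1, |J.val t ρ - J.val 0 ρ| ≤ |t - 0| * (M * decayWeight x) :=
    (hJ.hasGradOn.mono zero_le_one).integral_abs_sub_le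
      (hJ.hasGradOn_dt.coneContinuous.mono zero_le_one) (by linarith) hxt (by simpa using hx1)
      fun τ hτ => (le_abs_self _).trans (hM τ x hτ)
  obtain ⟨y, hy, hle⟩ := exists_mem_Icc_mul_le_integral (b := x + 1) (by linarith)
    (((hval.continuousOn_Icc (t := t) (a := x) (by linarith)).sub
      (hval.continuousOn_Icc (t := 0) (a := x) (by simp; linarith))).abs)
  refine ⟨y, hxR.trans hy.1, ?_⟩
  have hy0 := hinitial 0 hsmall y (by simp only [abs_zero]; linarith [hy.1])
  have hC : 0 ≤ C := nonneg_of_mul_nonneg_left ((abs_nonneg _).trans hy0)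
    (inv_pos.2 (by linarith [hy.1]))
  have hmono : C / y ≤ C / x := div_le_div_of_nonneg_left hC (by linarith) hy.1
  simp only [Pi.sub_apply, add_sub_cancel_left, one_mul] at hle
  linarith [abs_sub_abs_le_abs_sub (J.val t y) (J.val 0 y)]

lemma exists_forall_abs_val_le_div (h : DispersingEnergy J) (hJ : J.IsJetOn 0)
    (hsmall : ∀ ε > 0, ∃ᶠ r in atTop, |J.val 0 r| ≤ ε) (hd : 0 < d) :
    ∃ C > 0, ∀ t r, d + |t| < r → |J.val t r| ≤ C / r := by
  obtain ⟨C, hC, hle⟩ := h.exists_forall_abs_val_le_div_of_frequently hJ hd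
  exact ⟨C, hC, fun t => hle t fun ε hε => h.frequently_abs_val_le hJ hsmall t hε⟩

end DispersingEnergy

/-! ### Averaging in time -/

/-- The weighted time average of `g` over the window `[t - η, t + η]`. Averaging a function on
`extCone d` gives a function on `extCone (d + η)`. -/
noncomputable def timeAverage (η : ℝ) (k : ℝ → ℝ) (g : ℝ → ℝ → ℝ) (t r : ℝ) : ℝ :=
  ∫ σ in -η..η, k σ * g (t + σ) r

section TimeAverage

variable {d η t r : ℝ} {k k' : ℝ → ℝ} {g gt gr : ℝ → ℝ → ℝ}

lemma uIoc_subset_Icc {a b : ℝ} (hab : a ≤ b) : uIoc a b ⊆ Icc a b := by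
  rw [uIoc_of_le hab]
  exact Ioc_subset_Icc_self

lemma add_abs_add_lt_of_mem_Icc {σ : ℝ} (hσ : σ ∈ Icc (-η) η) (hr : d + η + |t| < r) :
    d + |t + σ| < r := by
  linarith [abs_add_le t σ, abs_le.2 hσ]

lemma HasGradOn.hasFDerivAt_add_left (h : HasGradOn d g gt gr) {τ : ℝ} (hr : d + |t + τ| < r) :
    HasFDerivAt (fun q : ℝ × ℝ => g (q.1 + τ) q.2)
      (gt (t + τ) r • ContinuousLinearMap.fst ℝ ℝ ℝ + gr (t + τ) r • ContinuousLinearMap.snd ℝ ℝ ℝ)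
      (t, r) := by
  have hshift := ((hasFDerivAt_fst (𝕜 := ℝ) (p := (t, r))).add_const τ).prodMk
    (hasFDerivAt_snd (𝕜 := ℝ) (p := (t, r)))
  exact HasFDerivAt.comp (g := fun q : ℝ × ℝ => g q.1 q.2) (t, r) (h _ _ hr) hshift

lemma ConeContinuous.continuousAt (h : ConeContinuous d g) (hr : d + |t| < r) :
    ContinuousAt (fun q : ℝ × ℝ => g q.1 q.2) (t, r) :=
  ContinuousOn.continuousAt h ((isOpen_extCone d).mem_nhds hr)

lemma ConeContinuous.continuousOn_window (h : ConeContinuous d g) (hr : d + η + |t| < r) :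
    ContinuousOn (fun σ => g (t + σ) r) (Icc (-η) η) :=
  ContinuousOn.comp (g := fun q : ℝ × ℝ => g q.1 q.2) (f := fun σ => (t + σ, r)) h (by fun_prop)
    fun _ hσ => add_abs_add_lt_of_mem_Icc hσ hr

lemma ConeContinuous.intervalIntegrable_window (h : ConeContinuous d g) (hη : 0 ≤ η)
    (hk : Continuous k) (hr : d + η + |t| < r) :
    IntervalIntegrable (fun σ => k σ * g (t + σ) r) volume (-η) η :=
  (hk.continuousOn.mul (h.continuousOn_window hr)).intervalIntegrable_of_Icc (by linarith)

lemma ConeContinuous.exists_eventually_abs_le_window (h : ConeContinuous d g)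
    (hr : d + η + |t| < r) :
    ∃ M, ∀ᶠ q : ℝ × ℝ in 𝓝 (t, r), ∀ σ ∈ Icc (-η) η, |g (q.1 + σ) q.2| ≤ M := by
  obtain ⟨M, hM⟩ := isCompact_Icc.exists_bound_of_continuousOn (h.continuousOn_window hr)
  refine ⟨M + 1, isCompact_Icc.eventually_forall_of_forall_eventually fun σ hσ => ?_⟩
  have hcont : ContinuousAt (fun z : (ℝ × ℝ) × ℝ => g (z.1.1 + z.2) z.1.2) ((t, r), σ) :=
    ContinuousAt.comp (g := fun q : ℝ × ℝ => g q.1 q.2) (x := ((t, r), σ))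
      (f := fun z : (ℝ × ℝ) × ℝ => (z.1.1 + z.2, z.1.2))
      (h.continuousAt (add_abs_add_lt_of_mem_Icc hσ hr)) (by fun_prop)
  filter_upwards [hcont.abs.eventually_lt_const ((hM σ hσ).trans_lt (lt_add_one M))] with z hz
  exact hz.le

lemma ConeContinuous.timeAverage (h : ConeContinuous d g) (hη : 0 ≤ η) (hk : Continuous k) :
    ConeContinuous (d + η) (timeAverage η k g) := by
  rintro ⟨t, r⟩ (hr : d + η + |t| < r)
  obtain ⟨M, hM⟩ := h.exists_eventually_abs_le_window hr
  have hwindow : uIoc (-η) η ⊆ Icc (-η) η := uIoc_subset_Icc (by linarith)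
  refine ContinuousAt.continuousWithinAt <| intervalIntegral.continuousAt_of_dominated_interval
    (F := fun (q : ℝ × ℝ) σ => k σ * g (q.1 + σ) q.2) (bound := fun σ => |k σ| * M) ?_ ?_
    ((hk.abs.mul continuous_const).intervalIntegrable _ _) ?_
  · filter_upwards [(isOpen_extCone (d + η)).mem_nhds hr] with q hq
    exact (h.intervalIntegrable_window hη hk hq).def'.aestronglyMeasurable
  · filter_upwards [hM] with q hq
    refine Eventually.of_forall fun σ hσ => ?_
    rw [Real.norm_eq_abs, abs_mul]
    exact mul_le_mul_of_nonneg_left (hq σ (hwindow hσ)) (abs_nonneg _)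
  · refine Eventually.of_forall fun σ hσ => continuousAt_const.mul ?_
    exact ContinuousAt.comp (g := fun q : ℝ × ℝ => g q.1 q.2)
      (f := fun q : ℝ × ℝ => (q.1 + σ, q.2)) (x := (t, r))
      (h.continuousAt (add_abs_add_lt_of_mem_Icc (hwindow hσ) hr)) (by fun_prop)

lemma norm_smul_fst_add_smul_snd_le (a b : ℝ) :
    ‖a • ContinuousLinearMap.fst ℝ ℝ ℝ + b • ContinuousLinearMap.snd ℝ ℝ ℝ‖ ≤ |a| + |b| := by
  refine (norm_add_le _ _).trans (add_le_add ?_ ?_)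
  · rw [norm_smul]
    exact mul_le_of_le_one_right (norm_nonneg _) (ContinuousLinearMap.norm_fst_le ℝ ℝ ℝ)
  · rw [norm_smul]
    exact mul_le_of_le_one_right (norm_nonneg _) (ContinuousLinearMap.norm_snd_le ℝ ℝ ℝ)

lemma HasGradOn.timeAverage (h : HasGradOn d g gt gr) (hη : 0 ≤ η) (hk : Continuous k)
    (hct : ConeContinuous d gt) (hcr : ConeContinuous d gr) :
    HasGradOn (d + η) (timeAverage η k g) (timeAverage η k gt) (timeAverage η k gr) := by
  intro t r hr
  obtain ⟨M, hM⟩ := hct.exists_eventually_abs_le_window hr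
  obtain ⟨N, hN⟩ := hcr.exists_eventually_abs_le_window hr
  have hcone : extCone (d + η) ∈ 𝓝 (t, r) := (isOpen_extCone (d + η)).mem_nhds hr
  have hwindow : uIoc (-η) η ⊆ Icc (-η) η := uIoc_subset_Icc (by linarith)
  have hit : IntervalIntegrable (fun σ => (k σ * gt (t + σ) r) • ContinuousLinearMap.fst ℝ ℝ ℝ)
      volume (-η) η := ((hk.continuousOn.mul (hct.continuousOn_window hr)).smul
        continuousOn_const).intervalIntegrable_of_Icc (by linarith)
  have hir : IntervalIntegrable (fun σ => (k σ * gr (t + σ) r) • ContinuousLinearMap.snd ℝ ℝ ℝ)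
      volume (-η) η := ((hk.continuousOn.mul (hcr.continuousOn_window hr)).smul
        continuousOn_const).intervalIntegrable_of_Icc (by linarith)
  have hderiv := intervalIntegral.hasFDerivAt_integral_of_dominated_of_fderiv_le (𝕜 := ℝ)
    (μ := volume) (a := -η) (b := η) (x₀ := (t, r)) (bound := fun σ => |k σ| * M + |k σ| * N)
    (F := fun (q : ℝ × ℝ) σ => k σ * g (q.1 + σ) q.2)
    (F' := fun (q : ℝ × ℝ) σ => (k σ * gt (q.1 + σ) q.2) • ContinuousLinearMap.fst ℝ ℝ ℝ +
      (k σ * gr (q.1 + σ) q.2) • ContinuousLinearMap.snd ℝ ℝ ℝ)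
    (inter_mem hcone (inter_mem hM hN)) ?_ (h.coneContinuous.intervalIntegrable_window hη hk hr)
    (hit.add hir).def'.aestronglyMeasurable ?_
    (((hk.abs.mul continuous_const).add (hk.abs.mul continuous_const)).intervalIntegrable _ _) ?_
  · refine hderiv.congr_fderiv ?_
    rw [intervalIntegral.integral_add hit hir, intervalIntegral.integral_smul_const,
      intervalIntegral.integral_smul_const]
    rfl
  · filter_upwards [hcone] with q hq
    exact (h.coneContinuous.intervalIntegrable_window hη hk hq).def'.aestronglyMeasurable
  · refine Eventually.of_forall fun σ hσ q ⟨_, hqM, hqN⟩ => ?_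
    refine (norm_smul_fst_add_smul_snd_le _ _).trans (add_le_add ?_ ?_) <;> rw [abs_mul]
    · exact mul_le_mul_of_nonneg_left (hqM σ (hwindow hσ)) (abs_nonneg _)
    · exact mul_le_mul_of_nonneg_left (hqN σ (hwindow hσ)) (abs_nonneg _)
  · refine Eventually.of_forall fun σ hσ q ⟨hq, _⟩ => ?_
    refine ((h.hasFDerivAt_add_left
      (add_abs_add_lt_of_mem_Icc (hwindow hσ) hq)).const_mul (k σ)).congr_fderiv ?_
    rw [smul_add, smul_smul, smul_smul]

end TimeAverage

section Decay

variable {d η A : ℝ} {w w₁ w₂ wt wr : ℝ → ℝ → ℝ}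

lemma ConeDecaying.of_window (h : ConeDecaying d w) (hd : 0 ≤ d) (hη : 0 ≤ η) (hA : 0 ≤ A)
    (hle : ∀ t r K, d + η + |t| < r → (∀ σ ∈ Icc (-η) η, |w (t + σ) r| ≤ K) → |w₁ t r| ≤ A * K) :
    ConeDecaying (d + η) w₁ where
  bounded := by
    obtain ⟨C, hC⟩ := h.bounded
    refine ⟨A * C, fun t r hr => ?_⟩
    rw [mul_assoc]
    exact hle t r _ hr fun σ hσ => hC _ _ (add_abs_add_lt_of_mem_Icc hσ hr)
  vanishing ε hε := by
    obtain ⟨T, hT⟩ := h.vanishing (ε / (A + 1)) (by positivity)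
    refine ⟨T + η, fun t r hr ht => ?_⟩
    have hweight := (decayWeight_pos (pos_of_add_abs_lt (add_nonneg hd hη) hr)).le
    refine (hle t r _ hr fun σ hσ => hT _ _ (add_abs_add_lt_of_mem_Icc hσ hr) ?_).trans ?_
    · have htri := abs_sub_abs_le_abs_sub t (-σ)
      rw [abs_neg, sub_neg_eq_add] at htri
      linarith [abs_le.2 hσ]
    · rw [← mul_assoc]
      refine mul_le_mul_of_nonneg_right ?_ hweight
      rw [mul_div_assoc', div_le_iff₀ (by positivity)]
      nlinarith

lemma ConeDecaying.of_abs_le_mul (h : ConeDecaying d w) (hd : 0 ≤ d) (hA : 0 ≤ A)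
    (hle : ∀ t r, d + |t| < r → |w₁ t r| ≤ A * |w t r|) : ConeDecaying d w₁ := by
  have hwindow := h.of_window (w₁ := w₁) hd le_rfl hA fun t r K hr hK => by
    have hKt := hK 0 (by simp)
    rw [add_zero] at hr hKt
    exact (hle t r hr).trans (mul_le_mul_of_nonneg_left hKt hA)
  rwa [add_zero] at hwindow

lemma ConeDecaying.of_abs_le_add (h₁ : ConeDecaying d w₁) (h₂ : ConeDecaying d w₂)
    (hle : ∀ t r, d + |t| < r → |w t r| ≤ |w₁ t r| + |w₂ t r|) : ConeDecaying d w where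
  bounded := by
    obtain ⟨C₁, hC₁⟩ := h₁.bounded
    obtain ⟨C₂, hC₂⟩ := h₂.bounded
    exact ⟨C₁ + C₂, fun t r hr => by linarith [hle t r hr, hC₁ t r hr, hC₂ t r hr]⟩
  vanishing ε hε := by
    obtain ⟨T₁, hT₁⟩ := h₁.vanishing (ε / 2) (by positivity)
    obtain ⟨T₂, hT₂⟩ := h₂.vanishing (ε / 2) (by positivity)
    refine ⟨max T₁ T₂, fun t r hr ht => ?_⟩
    linarith [hle t r hr, hT₁ t r hr ((le_max_left _ _).trans ht),
      hT₂ t r hr ((le_max_right _ _).trans ht)]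

lemma coneDecaying_of_abs_le_div_cube (hd : 0 < d) (hA : 0 ≤ A)
    (h : ∀ t r, d + |t| < r → |w t r| ≤ A / r ^ 3) : ConeDecaying d w := by
  have hcube : ∀ t r, d + |t| < r → |w t r| ≤ A * decayWeight r * decayWeight r := fun t r hr => by
    rw [mul_assoc, ← sq, decayWeight_sq (pos_of_add_abs_lt hd.le hr), ← div_eq_mul_inv]
    exact h t r hr
  have hbound : ∀ t r x, 0 < x → x ≤ r → d + |t| < r →
      |w t r| ≤ A * decayWeight x * decayWeight r := fun t r x hx hxr hr =>
    (hcube t r hr).trans <| mul_le_mul_of_nonneg_right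
      (mul_le_mul_of_nonneg_left (decayWeight_le_decayWeight hx hxr) hA)
      (decayWeight_pos (pos_of_add_abs_lt hd.le hr)).le
  refine ⟨⟨A * decayWeight d, fun t r hr => hbound t r d hd ?_ hr⟩, fun ε hε => ?_⟩
  · linarith [abs_nonneg t]
  · have hlim : Tendsto (fun r => A * decayWeight r) atTop (𝓝 0) := by
      simpa using tendsto_decayWeight_atTop.const_mul A
    obtain ⟨x, hxε, hx⟩ := ((hlim.eventually_lt_const hε).and (eventually_gt_atTop 0)).exists
    refine ⟨x, fun t r hr ht => (hbound t r x hx (by linarith) hr).trans ?_⟩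
    exact mul_le_mul_of_nonneg_right hxε.le (decayWeight_pos (pos_of_add_abs_lt hd.le hr)).le

lemma localMass_le_add {t r : ℝ} (hc : ConeContinuous d w) (hc₁ : ConeContinuous d w₁)
    (hc₂ : ConeContinuous d w₂) (hr : d + |t| < r)
    (hle : ∀ ρ, r ≤ ρ → |w t ρ| ≤ |w₁ t ρ| + |w₂ t ρ|) :
    localMass w t r ≤ localMass w₁ t r + localMass w₂ t r := by
  have hr1 : r ≤ r + 1 := by linarith
  have hi₁ := (hc₁.intervalIntegrable hr hr1).abs
  have hi₂ := (hc₂.intervalIntegrable hr hr1).abs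
  rw [localMass, localMass, localMass, ← intervalIntegral.integral_add hi₁ hi₂]
  exact intervalIntegral.integral_mono_on hr1 (hc.intervalIntegrable hr hr1).abs (hi₁.add hi₂)
    fun x hx => hle x hx.1

lemma ConeDecaying.localMass_of_abs_le_add (h₁ : ConeDecaying d (localMass w₁))
    (h₂ : ConeDecaying d (localMass w₂)) (hc : ConeContinuous d w) (hc₁ : ConeContinuous d w₁)
    (hc₂ : ConeContinuous d w₂) (hle : ∀ t r, d + |t| < r → |w t r| ≤ |w₁ t r| + |w₂ t r|) :
    ConeDecaying d (localMass w) := by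
  refine h₁.of_abs_le_add h₂ fun t r hr => ?_
  simp only [abs_of_nonneg (localMass_nonneg _ _ _)]
  exact localMass_le_add hc hc₁ hc₂ hr fun ρ hρ => hle t ρ (hr.trans_le hρ)

lemma ConeDecaying.localMass_of_abs_le_mul (h : ConeDecaying d (localMass w)) (hd : 0 ≤ d)
    (hA : 0 ≤ A) (hc : ConeContinuous d w) (hc₁ : ConeContinuous d w₁)
    (hle : ∀ t r, d + |t| < r → |w₁ t r| ≤ A * |w t r|) : ConeDecaying d (localMass w₁) := by
  refine h.of_abs_le_mul hd hA fun t r hr => ?_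
  have hr1 : r ≤ r + 1 := by linarith
  simp only [abs_of_nonneg (localMass_nonneg _ _ _)]
  rw [localMass, localMass, ← intervalIntegral.integral_const_mul]
  exact intervalIntegral.integral_mono_on hr1 (hc₁.intervalIntegrable hr hr1).abs
    ((hc.intervalIntegrable hr hr1).abs.const_mul A) fun x hx => hle t x (hr.trans_le hx.1)

lemma ConeContinuous.add (h₁ : ConeContinuous d w₁) (h₂ : ConeContinuous d w₂) :
    ConeContinuous d (fun t r => w₁ t r + w₂ t r) :=
  ContinuousOn.add h₁ h₂

lemma ConeContinuous.const_div_mul (h : ConeContinuous d w) (hd : 0 ≤ d) (c : ℝ) :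
    ConeContinuous d (fun t r => c / r * w t r) :=
  (continuousOn_const.div continuousOn_snd fun _ hq => (pos_of_add_abs_lt hd hq).ne').mul h

lemma ConeDecaying.localMass_const_div_mul (h : ConeDecaying d (localMass w)) (hd : 0 < d)
    (hc : ConeContinuous d w) (c : ℝ) : ConeDecaying d (localMass fun t r => c / r * w t r) := by
  refine h.localMass_of_abs_le_mul (A := |c| / d) hd.le (by positivity) hc
    (hc.const_div_mul hd.le c) fun t r hr => ?_
  have hdr : d ≤ r := by linarith [abs_nonneg t]
  rw [abs_mul, abs_div, abs_of_pos (pos_of_add_abs_lt hd.le hr)]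
  gcongr

lemma localMass_le_mul_decayWeight {t r : ℝ} (hc : ConeContinuous d w) (hd : 0 ≤ d)
    (hr : d + |t| < r) (hle : ∀ ρ, r ≤ ρ → |w t ρ| ≤ A * decayWeight ρ) :
    localMass w t r ≤ A * decayWeight r := by
  have hr1 : r ≤ r + 1 := by linarith
  have hA := nonneg_of_abs_le_mul_decayWeight (pos_of_add_abs_lt hd hr) (hle r le_rfl)
  have hmono : localMass w t r ≤ ∫ _ in r..r + 1, A * decayWeight r :=
    intervalIntegral.integral_mono_on hr1 (hc.intervalIntegrable hr hr1).abs
      intervalIntegrable_const fun x hx => (hle x hx.1).trans <| mul_le_mul_of_nonneg_left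
        (decayWeight_le_decayWeight (pos_of_add_abs_lt hd hr) hx.1) hA
  simpa using hmono

lemma ConeDecaying.coneDecaying_localMass (h : ConeDecaying d w) (hd : 0 ≤ d)
    (hc : ConeContinuous d w) : ConeDecaying d (localMass w) where
  bounded := h.bounded.imp fun C hC t r hr => by
    rw [abs_of_nonneg (localMass_nonneg _ _ _)]
    exact localMass_le_mul_decayWeight hc hd hr fun ρ hρ => hC t ρ (hr.trans_le hρ)
  vanishing ε hε := (h.vanishing ε hε).imp fun T hT t r hr ht => by
    rw [abs_of_nonneg (localMass_nonneg _ _ _)]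
    exact localMass_le_mul_decayWeight hc hd hr fun ρ hρ => hT t ρ (hr.trans_le hρ) ht

lemma HasGradOn.abs_le_localMass_add_localMass (h : HasGradOn d w wt wr)
    (hcr : ConeContinuous d wr) {t r : ℝ} (hr : d + |t| < r) :
    |w t r| ≤ localMass w t r + localMass wr t r := by
  obtain ⟨x, hx, hxle⟩ := exists_mem_Icc_mul_le_integral (b := r + 1) (by linarith)
    (h.coneContinuous.continuousOn_Icc (t := t) hr).abs
  have hftc : ∫ ρ in r..x, wr t ρ = w t x - w t r := by
    refine intervalIntegral.integral_eq_sub_of_hasDerivAt (fun y hy => ?_)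
      (hcr.intervalIntegrable hr hx.1)
    rw [uIcc_of_le hx.1] at hy
    exact h.hasDerivAt_right (hr.trans_le hy.1)
  have hincr : |w t r| - |w t x| ≤ localMass wr t r :=
    calc |w t r| - |w t x| ≤ |∫ ρ in r..x, wr t ρ| := by
          rw [hftc, abs_sub_comm]
          exact abs_sub_abs_le_abs_sub _ _
      _ ≤ ∫ ρ in r..x, |wr t ρ| := intervalIntegral.abs_integral_le_integral_abs hx.1
      _ ≤ localMass wr t r := intervalIntegral.integral_mono_interval le_rfl hx.1 hx.2
          (Eventually.of_forall fun _ => abs_nonneg _)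
          (hcr.intervalIntegrable hr (by linarith)).abs
  rw [add_sub_cancel_left, one_mul] at hxle
  exact sub_le_iff_le_add'.1 (hincr.trans' (sub_le_sub_left hxle _))

lemma HasGradOn.coneDecaying (h : HasGradOn d w wt wr) (hcr : ConeContinuous d wr)
    (hw : ConeDecaying d (localMass w)) (hwr : ConeDecaying d (localMass wr)) :
    ConeDecaying d w := by
  refine hw.of_abs_le_add hwr fun t r hr => ?_
  simp only [abs_of_nonneg (localMass_nonneg _ _ _)]
  exact h.abs_le_localMass_add_localMass hcr hr

end Decay

/-- `k` is a `C¹` function with derivative `k'`, vanishing at the endpoints of `[-η, η]`. -/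
structure IsCutoff (η : ℝ) (k k' : ℝ → ℝ) : Prop where
  hasDerivAt : ∀ x, HasDerivAt k (k' x) x
  continuous_deriv : Continuous k'
  map_neg : k (-η) = 0
  map_self : k η = 0

section TimeAverageDecay

variable {d η M K t r : ℝ} {k k' : ℝ → ℝ} {g gt gr : ℝ → ℝ → ℝ}

lemma IsCutoff.continuous (hk : IsCutoff η k k') : Continuous k :=
  continuous_iff_continuousAt.2 fun x => (hk.hasDerivAt x).continuousAt

lemma IsCutoff.timeAverage_left_deriv (hk : IsCutoff η k k') (hη : 0 ≤ η)
    (h : HasGradOn d g gt gr) (hct : ConeContinuous d gt) (hr : d + η + |t| < r) :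
    timeAverage η k gt t r = -timeAverage η k' g t r := by
  rw [timeAverage, timeAverage, intervalIntegral.integral_mul_deriv_eq_deriv_mul (u := k)
    (v := fun σ => g (t + σ) r) (fun x _ => hk.hasDerivAt x) (fun x hx => ?_)
    (hk.continuous_deriv.intervalIntegrable _ _)
    ((hct.continuousOn_window hr).intervalIntegrable_of_Icc (by linarith)), hk.map_neg, hk.map_self]
  · ring
  · rw [uIcc_of_le (by linarith)] at hx
    exact (h.hasDerivAt_left (add_abs_add_lt_of_mem_Icc hx hr)).comp_const_add t x

lemma integral_abs_timeAverage_le {a b : ℝ} (hη : 0 ≤ η) (hk : Continuous k)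
    (hg : ConeContinuous d g) (hM : ∀ x ∈ Icc (-η) η, |k x| ≤ M) (ha : d + η + |t| < a)
    (hab : a ≤ b) (hK : ∀ σ ∈ Icc (-η) η, ∫ ρ in a..b, |g (t + σ) ρ| ≤ K) :
    ∫ ρ in a..b, |timeAverage η k g t ρ| ≤ 2 * η * M * K := by
  have hη' : -η ≤ η := by linarith
  have hfubini := integral_abs_integral_le (G := fun σ ρ => k σ * g (t + σ) ρ) (K := M * K)
    hab hη' ?_ fun σ hσ => ?_
  · exact hfubini.trans_eq (by ring)
  · refine ContinuousOn.mul (by fun_prop) (ContinuousOn.comp (g := fun q : ℝ × ℝ => g q.1 q.2)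
      (f := fun q : ℝ × ℝ => (t + q.1, q.2)) hg (by fun_prop) ?_)
    rintro ⟨σ, ρ⟩ ⟨hσ, hρ⟩
    exact (add_abs_add_lt_of_mem_Icc hσ ha).trans_le hρ.1
  · simp only [abs_mul, intervalIntegral.integral_const_mul]
    exact mul_le_mul (hM σ hσ) (hK σ hσ)
      (intervalIntegral.integral_nonneg hab fun _ _ => abs_nonneg _)
      ((abs_nonneg _).trans (hM σ hσ))

lemma ConeDecaying.localMass_timeAverage (h : ConeDecaying d (localMass g)) (hd : 0 ≤ d)
    (hη : 0 ≤ η) (hk : Continuous k) (hg : ConeContinuous d g) :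
    ConeDecaying (d + η) (localMass (timeAverage η k g)) := by
  obtain ⟨M, hM⟩ := isCompact_Icc.exists_bound_of_continuousOn (s := Icc (-η) η) hk.continuousOn
  have hM0 : 0 ≤ M := (norm_nonneg _).trans (hM 0 ⟨by linarith, hη⟩)
  refine h.of_window (A := 2 * η * M) hd hη (by positivity) fun t r K hr hK => ?_
  rw [abs_of_nonneg (localMass_nonneg _ _ _)]
  exact integral_abs_timeAverage_le hη hk hg hM hr (by linarith) fun σ hσ =>
    (le_abs_self _).trans (hK σ hσ)

end TimeAverageDecay

/-- Local Lipschitz continuity with a constant of size `O(N⁴)` on `[-N, N]` as `N → 0`. It is what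
makes the equation `∂ₜ²u - Δu = f(u)` short-range for `u = O(1/r)`. -/
structure QuarticLipschitz (f : ℝ → ℝ) : Prop where
  map_zero : f 0 = 0
  exists_abs_sub_le : ∀ M, ∃ K ≥ 0, ∀ a b N, |a| ≤ N → |b| ≤ N → N ≤ M →
    |f a - f b| ≤ K * N ^ 4 * |a - b|

lemma QuarticLipschitz.continuous {f : ℝ → ℝ} (h : QuarticLipschitz f) : Continuous f := by
  refine continuous_iff_continuousAt.2 fun x => ?_
  obtain ⟨K, _, hK⟩ := h.exists_abs_sub_le (|x| + 1)
  refine continuousAt_of_locally_lipschitz one_pos (K * (|x| + 1) ^ 4) fun y hy =>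
    hK y x (|x| + 1) ?_ (by linarith) le_rfl
  rw [Real.dist_eq] at hy
  linarith [abs_sub_abs_le_abs_sub y x]

/-- An exterior solution with dispersing energy which is `O(1/r)` on every exterior cone. -/
structure DispersingSolution (f : ℝ → ℝ) (J : TwoJet) : Prop
    extends ExteriorSolution f J, DispersingEnergy J where
  exists_abs_val_le_div : ∀ d > 0, ∃ C > 0, ∀ t r, d + |t| < r → |J.val t r| ≤ C / r

namespace DispersingSolution

variable {d η t r : ℝ} {f k k' : ℝ → ℝ} {J : TwoJet}

lemma coneContinuous_nonlinearity (h : DispersingSolution f J) (hf : QuarticLipschitz f) :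
    ConeContinuous 0 (fun t r => f (J.val t r)) :=
  hf.continuous.comp_continuousOn h.hasGradOn.coneContinuous

lemma coneDecaying_nonlinearity (h : DispersingSolution f J) (hf : QuarticLipschitz f)
    (hd : 0 < d) : ConeDecaying d (fun t r => f (J.val t r)) := by
  obtain ⟨C, hC, hle⟩ := h.exists_abs_val_le_div d hd
  obtain ⟨K, hK, hlip⟩ := hf.exists_abs_sub_le (C / d)
  refine coneDecaying_of_abs_le_div_cube (A := K * C ^ 5 / d ^ 2) hd (by positivity)
    fun t r hr => ?_
  have hr0 := pos_of_add_abs_lt hd.le hr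
  have hdr : d ≤ r := by linarith [abs_nonneg t]
  have hzero := hlip (J.val t r) 0 (C / r) (hle t r hr) (by rw [abs_zero]; positivity)
    (div_le_div_of_nonneg_left hC.le hd hdr)
  rw [hf.map_zero, sub_zero, sub_zero] at hzero
  calc |f (J.val t r)| ≤ K * (C / r) ^ 4 * (C / r) :=
        hzero.trans (mul_le_mul_of_nonneg_left (hle t r hr) (by positivity))
    _ = K * C ^ 5 / r ^ 2 / r ^ 3 := by field_simp
    _ ≤ K * C ^ 5 / d ^ 2 / r ^ 3 := by gcongr

lemma timeAverage_dtt (h : DispersingSolution f J) (hf : QuarticLipschitz f) (hd : 0 ≤ d)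
    (hη : 0 ≤ η) (hk : Continuous k) (hr : d + η + |t| < r) :
    timeAverage η k J.dtt t r = timeAverage η k J.drr t r + 3 / r * timeAverage η k J.dr t r +
      timeAverage η k (fun t r => f (J.val t r)) t r := by
  have hr' : 0 + η + |t| < r := by linarith
  have hrr := h.continuous_drr.intervalIntegrable_window hη hk hr'
  have hdr := (h.hasGradOn_dr.coneContinuous.intervalIntegrable_window hη hk hr').const_mul (3 / r)
  have hnl := (h.coneContinuous_nonlinearity hf).intervalIntegrable_window hη hk hr'
  simp only [timeAverage]
  rw [← intervalIntegral.integral_const_mul, ← intervalIntegral.integral_add hrr hdr,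
    ← intervalIntegral.integral_add (hrr.add hdr) hnl]
  refine intervalIntegral.integral_congr fun σ hσ => ?_
  rw [uIcc_of_le (by linarith)] at hσ
  have hσr := add_abs_add_lt_of_mem_Icc hσ hr'
  rw [zero_add] at hσr
  change k σ * J.dtt (t + σ) r = _
  rw [h.eq (t + σ) r hσr]
  ring

lemma coneDecaying_localMass_timeAverage_dt (h : DispersingSolution f J) (hd : 0 < d) (hη : 0 ≤ η)
    (hk : Continuous k) : ConeDecaying (d + η) (localMass (timeAverage η k J.dt)) :=
  (h.coneDecaying_localMass h.hasGradOn_dt.coneContinuous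
    (fun _ _ => le_add_of_nonneg_right (sq_nonneg _)) hd).localMass_timeAverage hd.le hη hk
      (h.hasGradOn_dt.coneContinuous.mono hd.le)

lemma coneDecaying_localMass_timeAverage_dr (h : DispersingSolution f J) (hd : 0 < d) (hη : 0 ≤ η)
    (hk : Continuous k) : ConeDecaying (d + η) (localMass (timeAverage η k J.dr)) :=
  (h.coneDecaying_localMass h.hasGradOn_dr.coneContinuous
    (fun _ _ => le_add_of_nonneg_left (sq_nonneg _)) hd).localMass_timeAverage hd.le hη hk
      (h.hasGradOn_dr.coneContinuous.mono hd.le)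

/-! The energy only controls local masses of `∂ₜu` and `∂ᵣu`. Averaging in time turns `∂ᵣ∂ₜu` into
`∂ᵣu` with a differentiated kernel and, through the equation, `∂ᵣ²u` into `∂ₜu` and lower order
terms, so the averaged first derivatives decay pointwise. -/

lemma coneDecaying_timeAverage_dt (h : DispersingSolution f J) (hd : 0 < d) (hη : 0 ≤ η)
    (hk : IsCutoff η k k') : ConeDecaying (d + η) (timeAverage η k J.dt) := by
  have hJ := h.toIsJetOn.mono hd.le
  have hcont := hJ.continuous_dtr.timeAverage hη hk.continuous
  refine (hJ.hasGradOn_dt.timeAverage hη hk.continuous hJ.continuous_dtt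
    hJ.continuous_dtr).coneDecaying hcont
      (h.coneDecaying_localMass_timeAverage_dt hd hη hk.continuous) ?_
  refine (h.coneDecaying_localMass_timeAverage_dr hd hη hk.continuous_deriv).localMass_of_abs_le_mul
    (by positivity) zero_le_one
      (hJ.hasGradOn_dr.coneContinuous.timeAverage hη hk.continuous_deriv) hcont fun t r hr => ?_
  rw [hk.timeAverage_left_deriv hη hJ.hasGradOn_dr hJ.continuous_dtr hr, abs_neg, one_mul]

lemma coneDecaying_localMass_timeAverage_drr (h : DispersingSolution f J)
    (hf : QuarticLipschitz f) (hd : 0 < d) (hη : 0 ≤ η) (hk : IsCutoff η k k') :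
    ConeDecaying (d + η) (localMass (timeAverage η k J.drr)) := by
  have hdη : 0 < d + η := by positivity
  have hJ := h.toIsJetOn.mono hd.le
  have hcnl := (h.coneContinuous_nonlinearity hf).mono hd.le
  have hcdt := hJ.hasGradOn_dt.coneContinuous.timeAverage hη hk.continuous_deriv
  have hcdr := hJ.hasGradOn_dr.coneContinuous.timeAverage hη hk.continuous
  have hcdiv := hcdr.const_div_mul hdη.le 3
  have hdt := h.coneDecaying_localMass_timeAverage_dt hd hη hk.continuous_deriv
  have hdr := (h.coneDecaying_localMass_timeAverage_dr hd hη hk.continuous).localMass_const_div_mul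
    hdη hcdr 3
  have hnl := ((h.coneDecaying_nonlinearity hf hd).coneDecaying_localMass
    hd.le hcnl).localMass_timeAverage hd.le hη hk.continuous hcnl
  have hlinear := hdt.localMass_of_abs_le_add hdr (hcdt.add hcdiv) hcdt hcdiv
    fun t r _ => abs_add_le _ _
  refine hlinear.localMass_of_abs_le_add hnl (hJ.continuous_drr.timeAverage hη hk.continuous)
    (hcdt.add hcdiv) (hcnl.timeAverage hη hk.continuous) fun t r hr => ?_
  have heq := h.timeAverage_dtt hf hd.le hη hk.continuous hr
  rw [hk.timeAverage_left_deriv hη hJ.hasGradOn_dt hJ.continuous_dtt hr] at heq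
  rw [show timeAverage η k J.drr t r = -((timeAverage η k' J.dt t r +
    3 / r * timeAverage η k J.dr t r) + timeAverage η k (fun t r => f (J.val t r)) t r) by
      linarith, abs_neg]
  exact abs_add_le _ _

lemma coneDecaying_timeAverage_dr (h : DispersingSolution f J) (hf : QuarticLipschitz f)
    (hd : 0 < d) (hη : 0 ≤ η) (hk : IsCutoff η k k') :
    ConeDecaying (d + η) (timeAverage η k J.dr) := by
  have hJ := h.toIsJetOn.mono hd.le
  exact (hJ.hasGradOn_dr.timeAverage hη hk.continuous hJ.continuous_dtr
    hJ.continuous_drr).coneDecaying (hJ.continuous_drr.timeAverage hη hk.continuous)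
      (h.coneDecaying_localMass_timeAverage_dr hd hη hk.continuous)
      (h.coneDecaying_localMass_timeAverage_drr hf hd hη hk)

end DispersingSolution

/-- An explicit `C²` bump on `[-η, η]`, vanishing to third order at the endpoints. -/
def timeKernel (η x : ℝ) : ℝ := (η ^ 2 - x ^ 2) ^ 3

/-- The derivative of `timeKernel η`. -/
def timeKernelDeriv (η x : ℝ) : ℝ := -6 * x * (η ^ 2 - x ^ 2) ^ 2

/-- The second derivative of `timeKernel η`. -/
def timeKernelDeriv₂ (η x : ℝ) : ℝ := -6 * (η ^ 2 - x ^ 2) ^ 2 + 24 * x ^ 2 * (η ^ 2 - x ^ 2)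

section TimeKernel

variable {η : ℝ}

lemma isCutoff_timeKernel (η : ℝ) : IsCutoff η (timeKernel η) (timeKernelDeriv η) where
  hasDerivAt x := by
    refine ((((hasDerivAt_id x).pow 2).const_sub (η ^ 2)).pow 3).congr_deriv ?_
    simp only [Nat.cast_ofNat, Pi.pow_apply, id_eq, Nat.add_one_sub_one, pow_one, mul_one, mul_neg,
      timeKernelDeriv, neg_mul, neg_inj]
    ring
  continuous_deriv := by unfold timeKernelDeriv; fun_prop
  map_neg := by simp [timeKernel]
  map_self := by simp [timeKernel]

lemma isCutoff_timeKernelDeriv (η : ℝ) :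
    IsCutoff η (timeKernelDeriv η) (timeKernelDeriv₂ η) where
  hasDerivAt x := by
    refine (((hasDerivAt_id x).const_mul (-6)).mul
      ((((hasDerivAt_id x).pow 2).const_sub (η ^ 2)).pow 2)).congr_deriv ?_
    simp only [mul_one, Pi.pow_apply, id_eq, neg_mul, Nat.cast_ofNat, Nat.add_one_sub_one, pow_one,
      mul_neg, neg_neg, timeKernelDeriv₂, add_right_inj]
    ring
  continuous_deriv := by unfold timeKernelDeriv₂; fun_prop
  map_neg := by simp [timeKernelDeriv]
  map_self := by simp [timeKernelDeriv]

lemma timeKernel_nonneg {x : ℝ} (hx : x ∈ Icc (-η) η) : 0 ≤ timeKernel η x :=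
  pow_nonneg (by nlinarith [hx.1, hx.2]) 3

lemma integral_timeKernel_pos (hη : 0 < η) : 0 < ∫ σ in -η..η, timeKernel η σ := by
  refine intervalIntegral.intervalIntegral_pos_of_pos_on
    ((isCutoff_timeKernel η).continuous.intervalIntegrable _ _) (fun x hx => ?_) (by linarith)
  exact pow_pos (by nlinarith [hx.1, hx.2]) 3

end TimeKernel

/-! ### Differences of time translates -/

/-- The difference of the translates of `w` by the times `t` and `t'`. For `|t|, |t'| ≤ s` it takes
a function on `extCone d` to a function on `extCone (d + s)`. -/
def timeDiff (t t' : ℝ) (w : ℝ → ℝ → ℝ) (τ r : ℝ) : ℝ := w (τ + t) r - w (τ + t') r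

/-- The jet obtained by applying an operator to each entry of a jet. -/
def TwoJet.map (Φ : (ℝ → ℝ → ℝ) → ℝ → ℝ → ℝ) (J : TwoJet) : TwoJet where
  val := Φ J.val
  dt := Φ J.dt
  dr := Φ J.dr
  dtt := Φ J.dtt
  dtr := Φ J.dtr
  drr := Φ J.drr

section TimeDiff

variable {d η s t t' τ r : ℝ} {k : ℝ → ℝ} {w wt wr : ℝ → ℝ → ℝ} {J : TwoJet}

lemma ConeContinuous.add_left (h : ConeContinuous d w) (ht : t ∈ Icc (-s) s) :
    ConeContinuous (d + s) (fun τ r => w (τ + t) r) :=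
  ContinuousOn.comp (g := fun q : ℝ × ℝ => w q.1 q.2) (f := fun q : ℝ × ℝ => (q.1 + t, q.2)) h
    (by fun_prop) fun _ hq => add_abs_add_lt_of_mem_Icc ht hq

lemma ConeContinuous.timeDiff (h : ConeContinuous d w) (ht : t ∈ Icc (-s) s)
    (ht' : t' ∈ Icc (-s) s) : ConeContinuous (d + s) (timeDiff t t' w) :=
  ContinuousOn.sub (h.add_left ht) (h.add_left ht')

lemma HasGradOn.timeDiff (h : HasGradOn d w wt wr) (ht : t ∈ Icc (-s) s) (ht' : t' ∈ Icc (-s) s) :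
    HasGradOn (d + s) (timeDiff t t' w) (timeDiff t t' wt) (timeDiff t t' wr) := by
  intro τ r hr
  refine ((h.hasFDerivAt_add_left (add_abs_add_lt_of_mem_Icc ht hr)).sub
    (h.hasFDerivAt_add_left (add_abs_add_lt_of_mem_Icc ht' hr))).congr_fderiv ?_
  unfold _root_.timeDiff
  module

lemma TwoJet.IsJetOn.timeDiff (h : J.IsJetOn d) (ht : t ∈ Icc (-s) s) (ht' : t' ∈ Icc (-s) s) :
    (J.map (timeDiff t t')).IsJetOn (d + s) where
  hasGradOn := h.hasGradOn.timeDiff ht ht'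
  hasGradOn_dt := h.hasGradOn_dt.timeDiff ht ht'
  hasGradOn_dr := h.hasGradOn_dr.timeDiff ht ht'
  continuous_dtt := h.continuous_dtt.timeDiff ht ht'
  continuous_dtr := h.continuous_dtr.timeDiff ht ht'
  continuous_drr := h.continuous_drr.timeDiff ht ht'

lemma TwoJet.IsJetOn.timeAverage (h : J.IsJetOn d) (hη : 0 ≤ η) (hk : Continuous k) :
    (J.map (timeAverage η k)).IsJetOn (d + η) where
  hasGradOn := h.hasGradOn.timeAverage hη hk h.hasGradOn_dt.coneContinuous
    h.hasGradOn_dr.coneContinuous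
  hasGradOn_dt := h.hasGradOn_dt.timeAverage hη hk h.continuous_dtt h.continuous_dtr
  hasGradOn_dr := h.hasGradOn_dr.timeAverage hη hk h.continuous_dtr h.continuous_drr
  continuous_dtt := h.continuous_dtt.timeAverage hη hk
  continuous_dtr := h.continuous_dtr.timeAverage hη hk
  continuous_drr := h.continuous_drr.timeAverage hη hk

lemma ConeDecaying.timeDiff (h : ConeDecaying d w) (hd : 0 ≤ d) (ht : t ∈ Icc (-s) s)
    (ht' : t' ∈ Icc (-s) s) : ConeDecaying (d + s) (timeDiff t t' w) :=
  h.of_window hd (by linarith [ht.1.trans ht.2]) zero_le_two fun _ _ K _ hK => by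
    rw [two_mul]
    exact (abs_sub _ _).trans (add_le_add (hK t ht) (hK t' ht'))

/-! The energy does not make averages of `u` itself decay like `r ^ (-3 / 2)`, but differences of
time translates inherit this from `∂ₜu`. -/

lemma HasGradOn.coneDecaying_timeDiff (h : HasGradOn d w wt wr) (hwt : ConeDecaying d wt)
    (hd : 0 ≤ d) (ht : t ∈ Icc (-s) s) (ht' : t' ∈ Icc (-s) s) :
    ConeDecaying (d + s) (_root_.timeDiff t t' w) := by
  refine hwt.of_window hd (by linarith [ht.1.trans ht.2]) (abs_nonneg (t - t'))
    fun τ r K hr hK => ?_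
  have hmvt := (convex_Icc (-s) s).norm_image_sub_le_of_norm_hasDerivWithin_le
    (f := fun σ => w (τ + σ) r) (f' := fun σ => wt (τ + σ) r)
    (fun σ hσ => ((h.hasDerivAt_left (add_abs_add_lt_of_mem_Icc hσ hr)).comp_const_add
      τ σ).hasDerivWithinAt) hK ht' ht
  rwa [Real.norm_eq_abs, Real.norm_eq_abs, mul_comm] at hmvt

lemma ConeContinuous.timeDiff_timeAverage (h : ConeContinuous d w) (hη : 0 ≤ η) (hk : Continuous k)
    (ht : t ∈ Icc (-s) s) (ht' : t' ∈ Icc (-s) s) (hr : d + η + s + |τ| < r) :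
    _root_.timeDiff t t' (_root_.timeAverage η k w) τ r =
      _root_.timeAverage η k (_root_.timeDiff t t' w) τ r := by
  rw [_root_.timeDiff, _root_.timeAverage, _root_.timeAverage, ← intervalIntegral.integral_sub
    (h.intervalIntegrable_window hη hk (add_abs_add_lt_of_mem_Icc ht hr))
    (h.intervalIntegrable_window hη hk (add_abs_add_lt_of_mem_Icc ht' hr))]
  refine intervalIntegral.integral_congr fun σ _ => ?_
  simp only [_root_.timeDiff, add_right_comm τ _ σ, mul_sub]

end TimeDiff

section AverageBounds

variable {d η t r B ε : ℝ} {k : ℝ → ℝ} {g : ℝ → ℝ → ℝ}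

lemma abs_integral_mul_le {h : ℝ → ℝ} (hη : 0 ≤ η) (hk : Continuous k)
    (hpos : ∀ x ∈ Icc (-η) η, 0 ≤ k x) (hB : ∀ x ∈ Icc (-η) η, |h x| ≤ B) :
    |∫ σ in -η..η, k σ * h σ| ≤ (∫ σ in -η..η, k σ) * B := by
  rw [← intervalIntegral.integral_mul_const]
  refine intervalIntegral.norm_integral_le_of_norm_le (f := fun σ => k σ * h σ) (by linarith)
    (Eventually.of_forall fun σ hσ => ?_) ((hk.mul continuous_const).intervalIntegrable _ _)
  have hσ' := Ioc_subset_Icc_self hσ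
  rw [Real.norm_eq_abs, abs_mul, abs_of_nonneg (hpos σ hσ')]
  exact mul_le_mul_of_nonneg_left (hB σ hσ') (hpos σ hσ')

lemma ConeContinuous.eventually_abs_timeAverage_sub_le (h : ConeContinuous d g)
    (hr : d + |t| < r) (hε : 0 < ε) :
    ∀ᶠ η in 𝓝[>] 0, |_root_.timeAverage η (timeKernel η) g t r -
      (∫ σ in -η..η, timeKernel η σ) * g t r| ≤ (∫ σ in -η..η, timeKernel η σ) * ε := by
  have hcont : ContinuousAt (fun σ => g (t + σ) r) 0 :=
    ContinuousAt.comp (g := fun q : ℝ × ℝ => g q.1 q.2) (f := fun σ => (t + σ, r))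
      (h.continuousAt (by rwa [add_zero])) (by fun_prop)
  obtain ⟨δ, hδ, hclose⟩ := Metric.continuousAt_iff.1 hcont ε hε
  have hsmall : ∀ᶠ η in 𝓝[>] (0 : ℝ), η < min δ (r - d - |t|) :=
    nhdsWithin_le_nhds (eventually_lt_nhds (lt_min hδ (by linarith)))
  filter_upwards [hsmall, self_mem_nhdsWithin] with η hη hη0
  have hη0' : 0 ≤ η := le_of_lt hη0
  have hk := (isCutoff_timeKernel η).continuous
  have hwindow : d + η + |t| < r := by linarith [(lt_min_iff.1 hη).2]
  rw [_root_.timeAverage, ← intervalIntegral.integral_mul_const, ← intervalIntegral.integral_sub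
    (h.intervalIntegrable_window hη0' hk hwindow)
    ((hk.intervalIntegrable _ _).mul_const _)]
  simp only [← mul_sub]
  refine abs_integral_mul_le hη0' hk (fun _ => timeKernel_nonneg) fun σ hσ => ?_
  have hσδ : dist σ 0 < δ := by
    rw [Real.dist_eq, sub_zero]
    linarith [abs_le.2 hσ, (lt_min_iff.1 hη).1]
  simpa [Real.dist_eq] using (hclose hσδ).le

end AverageBounds

lemma frequently_abs_mul_sq_le_of_integral_le {g : ℝ → ℝ} {R : ℝ} (hg : ContinuousOn g (Ici R))
    (hint : ∀ ε > 0, ∀ᶠ a in atTop, ∀ b ≥ a, ∫ ρ in a..b, |g ρ| ≤ ε / a) {ε : ℝ} (hε : 0 < ε) :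
    ∃ᶠ r in atTop, |g r| * r ^ 2 ≤ ε := by
  refine frequently_atTop.2 fun x => ?_
  obtain ⟨a, hle, ha0, haR, hax⟩ := ((hint (ε / 4) (by positivity)).and
    ((eventually_gt_atTop 0).and ((eventually_ge_atTop R).and (eventually_ge_atTop x)))).exists
  obtain ⟨r, hr, hmean⟩ := exists_mem_Icc_mul_le_integral (f := fun ρ => |g ρ|)
    (show a ≤ 2 * a by linarith) (hg.mono fun y hy => haR.trans hy.1).abs
  refine ⟨r, hax.trans hr.1, ?_⟩
  have hmean' : a * |g r| ≤ ε / 4 / a := by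
    refine (Eq.le ?_).trans (hmean.trans (hle (2 * a) (by linarith)))
    ring
  have hsq : r ^ 2 ≤ 4 * a ^ 2 := by nlinarith [hr.1, hr.2]
  calc |g r| * r ^ 2 ≤ |g r| * (4 * a ^ 2) := by gcongr
    _ = 4 * a * (a * |g r|) := by ring
    _ ≤ 4 * a * (ε / 4 / a) := by gcongr
    _ = ε := by field_simp

/-! ### Stationarity -/

namespace DispersingSolution

variable {d η s t t' r ε : ℝ} {f k k' k'' : ℝ → ℝ} {J : TwoJet}

lemma eventually_integral_abs_timeAverage_sub_le (h : DispersingSolution f J) (hη : 0 ≤ η)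
    (hk : Continuous k) (t t' : ℝ) (hε : 0 < ε) :
    ∀ᶠ a in atTop, ∀ b ≥ a,
      ∫ ρ in a..b, |timeAverage η k J.val t ρ - timeAverage η k J.val t' ρ| ≤ ε / a := by
  obtain ⟨M, hM⟩ := isCompact_Icc.exists_bound_of_continuousOn (s := Icc (-η) η) hk.continuousOn
  have hM0 : 0 ≤ M := (norm_nonneg _).trans (hM 0 ⟨by linarith, hη⟩)
  set A := |t - t'| * (2 * η * M) with hA
  have : 0 ≤ A := by positivity
  have hε' : 0 < ε / (A + 1) := by positivity
  obtain ⟨R, hR, hsmall⟩ := h.small _ hε'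
  filter_upwards [eventually_gt_atTop (R + η + |t|), eventually_gt_atTop (R + η + |t'|)]
    with a ha ha' b hab
  have ha0 := pos_of_add_abs_lt (add_nonneg hR.le hη) ha
  have hJ := h.toIsJetOn.mono hR.le
  have hbound := (hJ.timeAverage hη hk).hasGradOn.integral_abs_sub_le
    (K := 2 * η * M * (ε / (A + 1) / a)) (hJ.hasGradOn_dt.coneContinuous.timeAverage hη hk) hab ha
    ha' fun τ hτ => integral_abs_timeAverage_le hη hk hJ.hasGradOn_dt.coneContinuous hM hτ hab
      fun σ hσ => h.integral_abs_le_of_extEnergy_le h.hasGradOn_dt.coneContinuous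
        (fun _ _ => le_add_of_nonneg_right (sq_nonneg _)) hR (add_abs_add_lt_of_mem_Icc hσ hτ)
        hab hε' (hsmall _)
  calc _ ≤ |t - t'| * (2 * η * M * (ε / (A + 1) / a)) := hbound
    _ = A / (A + 1) * (ε / a) := by rw [hA]; field_simp
    _ ≤ ε / a := mul_le_of_le_one_left (by positivity)
        ((div_le_one (by positivity)).2 (by linarith))

lemma frequently_abs_timeDiff_timeAverage_mul_sq_le (h : DispersingSolution f J) (hη : 0 ≤ η)
    (hk : Continuous k) (t t' : ℝ) (hε : 0 < ε) :
    ∃ᶠ r in atTop, |timeDiff t t' (timeAverage η k J.val) 0 r| * r ^ 2 ≤ ε := by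
  simp only [timeDiff, zero_add]
  have hcont := h.hasGradOn.coneContinuous.timeAverage hη hk
  refine frequently_abs_mul_sq_le_of_integral_le (R := η + 1 + max |t| |t'|)
    (ContinuousOn.sub ?_ ?_)
    (fun δ hδ => h.eventually_integral_abs_timeAverage_sub_le hη hk t t' hδ) hε
  · refine (hcont.slice t).mono fun x hx => ?_
    have hx' : η + 1 + max |t| |t'| ≤ x := hx
    change 0 + η + |t| < x
    linarith [le_max_left |t| |t'|]
  · refine (hcont.slice t').mono fun x hx => ?_
    have hx' : η + 1 + max |t| |t'| ≤ x := hx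
    change 0 + η + |t'| < x
    linarith [le_max_right |t| |t'|]

lemma coneDecaying_timeAverage_nonlinearity (h : DispersingSolution f J) (hf : QuarticLipschitz f)
    (hd : 0 < d) (hη : 0 ≤ η) :
    ConeDecaying (d + η) (timeAverage η (timeKernel η) fun t r => f (J.val t r)) :=
  (h.coneDecaying_nonlinearity hf hd).of_window hd.le hη
    (intervalIntegral.integral_nonneg (by linarith) fun _ => timeKernel_nonneg)
    fun _ _ _ _ hK => abs_integral_mul_le hη (isCutoff_timeKernel η).continuous
      (fun _ => timeKernel_nonneg) hK

lemma coneDecaying_timeAverage_dtt (h : DispersingSolution f J) (hd : 0 < d) (hη : 0 ≤ η)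
    (hk : IsCutoff η k k') (hk' : IsCutoff η k' k'') :
    ConeDecaying (d + η) (timeAverage η k J.dtt) := by
  have hJ := h.toIsJetOn.mono hd.le
  refine (h.coneDecaying_timeAverage_dt hd hη hk').of_abs_le_mul (by positivity) zero_le_one
    fun t r hr => ?_
  rw [hk.timeAverage_left_deriv hη hJ.hasGradOn_dt hJ.continuous_dtt hr, abs_neg, one_mul]

lemma coneDecaying_timeAverage_dtr (h : DispersingSolution f J) (hf : QuarticLipschitz f)
    (hd : 0 < d) (hη : 0 ≤ η) (hk : IsCutoff η k k') (hk' : IsCutoff η k' k'') :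
    ConeDecaying (d + η) (timeAverage η k J.dtr) := by
  have hJ := h.toIsJetOn.mono hd.le
  refine (h.coneDecaying_timeAverage_dr hf hd hη hk').of_abs_le_mul (by positivity) zero_le_one
    fun t r hr => ?_
  rw [hk.timeAverage_left_deriv hη hJ.hasGradOn_dr hJ.continuous_dtr hr, abs_neg, one_mul]

lemma coneDecaying_timeAverage_drr (h : DispersingSolution f J) (hf : QuarticLipschitz f)
    (hd : 0 < d) (hη : 0 ≤ η) :
    ConeDecaying (d + η) (timeAverage η (timeKernel η) J.drr) := by
  have hk := isCutoff_timeKernel η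
  have hdr : ConeDecaying (d + η) fun t r => 3 / r * timeAverage η (timeKernel η) J.dr t r := by
    refine (h.coneDecaying_timeAverage_dr hf hd hη hk).of_abs_le_mul (A := 3 / d) (by positivity)
      (by positivity) fun t r hr => ?_
    have hdr : d ≤ r := by linarith [abs_nonneg t]
    rw [abs_mul, abs_of_pos (div_pos three_pos (hd.trans_le hdr))]
    gcongr
  have hlinear : ConeDecaying (d + η) fun t r => timeAverage η (timeKernel η) J.dtt t r -
      3 / r * timeAverage η (timeKernel η) J.dr t r :=
    (h.coneDecaying_timeAverage_dtt hd hη hk (isCutoff_timeKernelDeriv η)).of_abs_le_add hdr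
      fun _ _ _ => abs_sub _ _
  refine hlinear.of_abs_le_add (h.coneDecaying_timeAverage_nonlinearity hf hd hη) fun t r hr => ?_
  rw [h.timeAverage_dtt hf hd.le hη hk.continuous hr]
  refine (Eq.le ?_).trans (abs_sub _ _)
  ring_nf

lemma decayingWave_timeDiff_timeAverage (h : DispersingSolution f J) (hf : QuarticLipschitz f)
    (hd : 0 < d) (hη : 0 ≤ η) (ht : t ∈ Icc (-s) s) (ht' : t' ∈ Icc (-s) s) :
    DecayingWave (d + η + s) ((J.map (timeAverage η (timeKernel η))).map (timeDiff t t'))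
      (timeDiff t t' (timeAverage η (timeKernel η) fun t r => f (J.val t r))) := by
  have hk := isCutoff_timeKernel η
  have hk' := isCutoff_timeKernelDeriv η
  have hdη : 0 ≤ d + η := by positivity
  have hjet := (h.toIsJetOn.mono hd.le).timeAverage hη hk.continuous
  have hdt := h.coneDecaying_timeAverage_dt hd hη hk
  exact
    { hjet.timeDiff ht ht' with
      eq := fun τ r hr => by
        have heq := h.timeAverage_dtt hf hd.le hη hk.continuous (add_abs_add_lt_of_mem_Icc ht hr)
        have heq' := h.timeAverage_dtt hf hd.le hη hk.continuous (add_abs_add_lt_of_mem_Icc ht' hr)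
        simp only [TwoJet.map, timeDiff, heq, heq']
        ring
      decaying := hjet.hasGradOn.coneDecaying_timeDiff hdt hdη ht ht'
      decaying_dt := hdt.timeDiff hdη ht ht'
      decaying_dr := (h.coneDecaying_timeAverage_dr hf hd hη hk).timeDiff hdη ht ht'
      decaying_dtr := (h.coneDecaying_timeAverage_dtr hf hd hη hk hk').timeDiff hdη ht ht'
      bounded_dtt := ((h.coneDecaying_timeAverage_dtt hd hη hk hk').timeDiff hdη ht ht').bounded
      bounded_drr := ((h.coneDecaying_timeAverage_drr hf hd hη).timeDiff hdη ht ht').bounded }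

lemma abs_timeDiff_timeAverage_le {B l : ℝ} (h : DispersingSolution f J)
    (hf : QuarticLipschitz f) (hd : 0 < d) (hη : 0 ≤ η) (hl : 0 < l) (hB : 0 ≤ B)
    (hsource : ∀ t t' r, d + |t| < r → d + |t'| < r →
      |f (J.val t r) - f (J.val t' r)| ≤ B / r ^ 5 * Real.exp (l / r))
    (ht : t ∈ Icc (-s) s) (ht' : t' ∈ Icc (-s) s) (hr : d + η + s < r) :
    |timeDiff t t' (timeAverage η (timeKernel η) J.val) 0 r| ≤
      (∫ σ in -η..η, timeKernel η σ) * (2 * (B / l) / r ^ 2 * Real.exp (l / r)) := by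
  have hk := (isCutoff_timeKernel η).continuous
  have hs : 0 ≤ s := by linarith [ht.1.trans ht.2]
  have hmass : 0 ≤ ∫ σ in -η..η, timeKernel η σ :=
    intervalIntegral.integral_nonneg (by linarith) fun _ => timeKernel_nonneg
  refine ((h.decayingWave_timeDiff_timeAverage hf hd hη ht ht').abs_val_le
    (by positivity) (mul_nonneg hmass hB) hl (fun τ x hx => ?_)
    (fun ε hε => h.frequently_abs_timeDiff_timeAverage_mul_sq_le hη hk t t' hε) hr).trans_eq
      (by ring)
  rw [((h.coneContinuous_nonlinearity hf).mono hd.le).timeDiff_timeAverage hη hk ht ht' hx,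
    mul_div_assoc, mul_assoc]
  refine abs_integral_mul_le hη hk (fun _ => timeKernel_nonneg) fun σ hσ => ?_
  have hσ' : d + s + |τ + σ| < x := add_abs_add_lt_of_mem_Icc hσ (by linarith)
  exact hsource _ _ _ (add_abs_add_lt_of_mem_Icc ht hσ') (add_abs_add_lt_of_mem_Icc ht' hσ')

lemma abs_val_sub_val_le {B l : ℝ} (h : DispersingSolution f J) (hf : QuarticLipschitz f)
    (hd : 0 < d) (hl : 0 < l) (hB : 0 ≤ B)
    (hsource : ∀ t t' r, d + |t| < r → d + |t'| < r →
      |f (J.val t r) - f (J.val t' r)| ≤ B / r ^ 5 * Real.exp (l / r))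
    (hr : d + |t| < r) (hr' : d + |t'| < r) :
    |J.val t r - J.val t' r| ≤ 2 * (B / l) / r ^ 2 * Real.exp (l / r) := by
  set s := max |t| |t'|
  have ht : t ∈ Icc (-s) s := abs_le.1 (le_max_left _ _)
  have ht' : t' ∈ Icc (-s) s := abs_le.1 (le_max_right _ _)
  have hs : d + s < r := by linarith [max_lt (lt_sub_iff_add_lt'.2 hr) (lt_sub_iff_add_lt'.2 hr')]
  have hcont := (h.hasGradOn.coneContinuous.mono hd.le).timeDiff ht ht'
  refine le_of_forall_pos_le_add fun ε hε => ?_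
  have hsmall : ∀ᶠ η in 𝓝[>] (0 : ℝ), η < r - d - s :=
    nhdsWithin_le_nhds (eventually_lt_nhds (by linarith))
  obtain ⟨η, happrox, hηr, hη⟩ := ((hcont.eventually_abs_timeAverage_sub_le (t := 0) (r := r)
    (by rwa [abs_zero, add_zero]) hε).and (hsmall.and self_mem_nhdsWithin)).exists
  have hη0 : 0 < η := hη
  have hk := (isCutoff_timeKernel η).continuous
  set A := ∫ σ in -η..η, timeKernel η σ
  have hApos : 0 < A := integral_timeKernel_pos hη0
  have hbound := h.abs_timeDiff_timeAverage_le (r := r) hf hd hη0.le hl hB hsource ht ht'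
    (by linarith)
  rw [(h.hasGradOn.coneContinuous.mono hd.le).timeDiff_timeAverage hη0.le hk ht ht'
    (by rw [abs_zero]; linarith)] at hbound
  rw [abs_sub_comm] at happrox
  have htri := abs_sub_abs_le_abs_sub (A * timeDiff t t' J.val 0 r)
    (timeAverage η (timeKernel η) (timeDiff t t' J.val) 0 r)
  have hscaled : A * |J.val t r - J.val t' r| ≤
      A * (2 * (B / l) / r ^ 2 * Real.exp (l / r) + ε) := by
    rw [abs_mul, abs_of_pos hApos] at htri
    simp only [timeDiff, zero_add] at htri happrox hbound
    linarith
  exact le_of_mul_le_mul_left hscaled hApos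

lemma abs_val_sub_val_le_half {C l N : ℝ} (h : DispersingSolution f J) (hf : QuarticLipschitz f)
    (hd : 0 < d) (hN : 0 ≤ N) (hC : 0 ≤ C) (hl : 4 * C ≤ l * d) (hl0 : 0 < l)
    (hlip : ∀ t t' r, d + |t| < r → d + |t'| < r →
      |f (J.val t r) - f (J.val t' r)| ≤ C / r ^ 4 * |J.val t r - J.val t' r|)
    (hle : ∀ t t' r, d + |t| < r → d + |t'| < r →
      |J.val t r - J.val t' r| ≤ N / r * Real.exp (l / r))
    (hr : d + |t| < r) (hr' : d + |t'| < r) :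
    |J.val t r - J.val t' r| ≤ N / 2 / r * Real.exp (l / r) := by
  have hr0 := pos_of_add_abs_lt hd.le hr
  have hdr : d ≤ r := by linarith [abs_nonneg t]
  refine (h.abs_val_sub_val_le (B := C * N) hf hd hl0 (by positivity) (fun t t' x hx hx' => ?_)
    hr hr').trans (mul_le_mul_of_nonneg_right ?_ (Real.exp_pos _).le)
  · have hx0 := pos_of_add_abs_lt hd.le hx
    calc _ ≤ C / x ^ 4 * |J.val t x - J.val t' x| := hlip t t' x hx hx'
      _ ≤ C / x ^ 4 * (N / x * Real.exp (l / x)) := by gcongr; exact hle t t' x hx hx'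
      _ = C * N / x ^ 5 * Real.exp (l / x) := by field_simp
  · have hhalf : 2 * C / (l * r) ≤ 1 / 2 := by
      rw [div_le_div_iff₀ (by positivity) two_pos]
      nlinarith
    calc 2 * (C * N / l) / r ^ 2 = 2 * C / (l * r) * (N / r) := by field_simp
      _ ≤ 1 / 2 * (N / r) := by gcongr
      _ = N / 2 / r := by ring

lemma exists_forall_abs_nonlinearity_sub_le (h : DispersingSolution f J) (hf : QuarticLipschitz f)
    (hd : 0 < d) : ∃ C ≥ 0, ∀ t t' r, d + |t| < r → d + |t'| < r →
      |f (J.val t r) - f (J.val t' r)| ≤ C / r ^ 4 * |J.val t r - J.val t' r| := by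
  obtain ⟨C, hC, hle⟩ := h.exists_abs_val_le_div d hd
  obtain ⟨K, hK, hlip⟩ := hf.exists_abs_sub_le (C / d)
  refine ⟨K * C ^ 4, by positivity, fun t t' r hr hr' => ?_⟩
  have hdr : d ≤ r := by linarith [abs_nonneg t]
  rw [mul_div_assoc, ← div_pow]
  exact hlip _ _ _ (hle t r hr) (hle t' r hr') (div_le_div_of_nonneg_left hC.le hd hdr)

lemma val_eq_val_of_add_abs_lt (h : DispersingSolution f J) (hf : QuarticLipschitz f) (hd : 0 < d)
    (hr : d + |t| < r) (hr' : d + |t'| < r) : J.val t r = J.val t' r := by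
  obtain ⟨C, hC, hle⟩ := h.exists_abs_val_le_div d hd
  obtain ⟨K, hK, hlip⟩ := h.exists_forall_abs_nonlinearity_sub_le hf hd
  set l := 4 * K / d + 1 with hl
  have hl0 : 0 < l := by positivity
  have hKl : 4 * K ≤ l * d := by
    rw [hl, add_mul, div_mul_cancel₀ _ hd.ne']
    linarith
  have hiter : ∀ n : ℕ, ∀ t t' r, d + |t| < r → d + |t'| < r →
      |J.val t r - J.val t' r| ≤ 2 * C / 2 ^ n / r * Real.exp (l / r) := by
    intro n
    induction n with
    | zero =>
      intro t t' r hr hr'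
      have hr0 := pos_of_add_abs_lt hd.le hr
      calc |J.val t r - J.val t' r| ≤ C / r + C / r :=
            (abs_sub _ _).trans (add_le_add (hle t r hr) (hle t' r hr'))
        _ = 2 * C / 2 ^ 0 / r * 1 := by ring
        _ ≤ 2 * C / 2 ^ 0 / r * Real.exp (l / r) := by
          gcongr
          exact Real.one_le_exp (by positivity)
    | succ n ih =>
      intro t t' r hr hr'
      rw [pow_succ, ← div_div]
      exact h.abs_val_sub_val_le_half hf hd (by positivity) hK hKl hl0 hlip ih hr hr'
  have hlim : Tendsto (fun n : ℕ => 2 * C / 2 ^ n / r * Real.exp (l / r)) atTop (𝓝 0) := by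
    have hgeom : Tendsto (fun n : ℕ => 2 * C / (2 : ℝ) ^ n) atTop (𝓝 0) :=
      tendsto_const_nhds.div_atTop (tendsto_pow_atTop_atTop_of_one_lt one_lt_two)
    simpa using (hgeom.div_const r).mul_const (Real.exp (l / r))
  have hzero := ge_of_tendsto' hlim fun n => hiter n t t' r hr hr'
  exact sub_eq_zero.1 (abs_nonpos_iff.1 hzero)

lemma val_eq_val (h : DispersingSolution f J) (hf : QuarticLipschitz f) (hr : |t| < r)
    (hr' : |t'| < r) : J.val t r = J.val t' r := by
  have hmax : max |t| |t'| < r := max_lt hr hr'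
  exact h.val_eq_val_of_add_abs_lt hf (d := (r - max |t| |t'|) / 2) (by linarith)
    (by linarith [le_max_left |t| |t'|]) (by linarith [le_max_right |t| |t'|])

end DispersingSolution

/-! ### The Emden–Fowler equation -/

/-- `(y, w)` solves `y' = w`, `w' = -c w + b y - |y|^n y` on the whole line, the autonomous form
of the radial stationary equation with nonlinearity `|Z|^n Z`. -/
structure EmdenFowlerSolution (n : ℕ) (b c : ℝ) (y w : ℝ → ℝ) : Prop where
  hasDerivAt_fst : ∀ s, HasDerivAt y (w s) s
  hasDerivAt_snd : ∀ s, HasDerivAt w (-c * w s + b * y s - |y s| ^ n * y s) s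

/-- The mechanical energy of the Emden–Fowler equation, dissipated at rate `c w²`. -/
noncomputable def emdenFowlerEnergy (n : ℕ) (b : ℝ) (y w : ℝ → ℝ) (s : ℝ) : ℝ :=
  w s ^ 2 / 2 - b * y s ^ 2 / 2 + |y s| ^ (n + 2) / (n + 2)

/-- The virial functional of the Emden–Fowler equation, chosen so that its derivative
`w² + b y² - |y|^(n + 2)` does not contain `c`. -/
noncomputable def emdenFowlerVirial (c : ℝ) (y w : ℝ → ℝ) (s : ℝ) : ℝ :=
  y s * w s + c / 2 * y s ^ 2

lemma hasDerivAt_abs_pow_add_two (n : ℕ) (x : ℝ) :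
    HasDerivAt (fun x : ℝ => |x| ^ (n + 2)) ((n + 2) * (|x| ^ n * x)) x := by
  have h := hasDerivAt_abs_rpow x (p := n + 2) (by linarith [n.cast_nonneg (α := ℝ)])
  simp only [add_sub_cancel_right, Real.rpow_natCast, mul_assoc] at h
  exact_mod_cast h

lemma tendsto_atBot_atBot_of_eventually_le_deriv {f f' : ℝ → ℝ} {e : ℝ}
    (hf : ∀ x, HasDerivAt f (f' x) x) (he : 0 < e) (hf' : ∀ᶠ x in atBot, e ≤ f' x) :
    Tendsto f atBot atBot := by
  obtain ⟨a, ha⟩ := eventually_atBot.1 hf'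
  have hmono : MonotoneOn (fun x => f x - e * x) (Iic a) :=
    monotoneOn_of_hasDerivWithinAt_nonneg (convex_Iic a)
      (fun x _ => ((hf x).continuousAt.sub (by fun_prop)).continuousWithinAt)
      (fun x _ => ((hf x).sub ((hasDerivAt_id x).const_mul e)).hasDerivWithinAt)
      fun x hx => by
        rw [mul_one, sub_nonneg]
        exact ha x (interior_subset (s := Iic a) hx)
  have hline : Tendsto (fun x => (f a - e * a) + e * x) atBot atBot :=
    tendsto_atBot_add_const_left _ _ (tendsto_id.const_mul_atBot he)
  refine tendsto_atBot_mono' _ ?_ hline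
  filter_upwards [eventually_le_atBot a] with x hx
  linarith [hmono hx self_mem_Iic hx]

lemma abs_pow_add_two_le {n : ℕ} (hn : 2 ≤ n) {b : ℝ} (hb : 0 < b) (y : ℝ) :
    |y| ^ (n + 2) ≤ b * y ^ 2 + (1 + 1 / b) * |y| ^ (2 * n) := by
  have hsq : y ^ 2 ≤ 1 + |y| ^ n := by
    rw [← sq_abs]
    rcases le_total |y| 1 with h | h
    · linarith [pow_le_one₀ (n := 2) (abs_nonneg y) h, pow_nonneg (abs_nonneg y) n]
    · linarith [pow_le_pow_right₀ h hn]
  have hX := pow_nonneg (abs_nonneg y) n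
  have hY := sq_nonneg y
  rw [pow_add, sq_abs, mul_comm 2 n, pow_mul]
  generalize |y| ^ n = X at *
  generalize y ^ 2 = Y at *
  rcases le_total X b with h | h
  · have := mul_le_mul_of_nonneg_right h hY
    have : 0 ≤ (1 + 1 / b) * X ^ 2 := by positivity
    linarith
  · have hXsq : X ≤ 1 / b * X ^ 2 := by
      rw [div_mul_eq_mul_div, one_mul, le_div_iff₀ hb]
      nlinarith
    have := mul_le_mul_of_nonneg_left hsq hX
    have : 0 ≤ b * Y := by positivity
    linarith

namespace EmdenFowlerSolution

variable {n : ℕ} {b c : ℝ} {y w Φ : ℝ → ℝ}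

lemma hasDerivAt_energy (h : EmdenFowlerSolution n b c y w) (s : ℝ) :
    HasDerivAt (emdenFowlerEnergy n b y w) (-c * w s ^ 2) s := by
  have hpow := (hasDerivAt_abs_pow_add_two n (y s)).comp s (h.hasDerivAt_fst s)
  refine (((((h.hasDerivAt_snd s).pow 2).div_const 2).sub
    ((((h.hasDerivAt_fst s).pow 2).const_mul b).div_const 2)).add
      (hpow.div_const (n + 2))).congr_deriv ?_
  have : (n : ℝ) + 2 ≠ 0 := by positivity
  push_cast
  field_simp
  ring

lemma antitone_energy (h : EmdenFowlerSolution n b c y w) (hc : 0 ≤ c) :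
    Antitone (emdenFowlerEnergy n b y w) :=
  antitone_of_hasDerivAt_nonpos h.hasDerivAt_energy fun s =>
    by have := mul_nonneg hc (sq_nonneg (w s)); simp only [Pi.zero_apply]; linarith

lemma energy_nonneg (h : EmdenFowlerSolution n b c y w) (hc : 0 ≤ c)
    (hlim : Tendsto y atTop (𝓝 0)) (s : ℝ) : 0 ≤ emdenFowlerEnergy n b y w s := by
  have hpot : Tendsto (fun x => -(b * y x ^ 2 / 2)) atTop (𝓝 0) := by
    simpa using (((hlim.pow 2).const_mul b).div_const 2).neg
  refine le_of_tendsto hpot ?_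
  filter_upwards [eventually_ge_atTop s] with x hx
  have hpow : 0 ≤ |y x| ^ (n + 2) / (n + 2) := by positivity
  have hanti := h.antitone_energy hc hx
  rw [emdenFowlerEnergy] at hanti
  linarith [sq_nonneg (w x)]

lemma hasDerivAt_virial (h : EmdenFowlerSolution n b c y w) (s : ℝ) :
    HasDerivAt (emdenFowlerVirial c y w) (w s ^ 2 + b * y s ^ 2 - |y s| ^ (n + 2)) s := by
  refine (((h.hasDerivAt_fst s).mul (h.hasDerivAt_snd s)).add
    (((h.hasDerivAt_fst s).pow 2).const_mul (c / 2))).congr_deriv ?_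
  rw [pow_add, sq_abs]
  push_cast
  ring

lemma two_mul_energy_le (hn : 2 ≤ n) (hb : 0 < b) (s : ℝ) :
    2 * emdenFowlerEnergy n b y w s - 2 * (1 + 1 / b) * |y s| ^ (2 * n) ≤
      w s ^ 2 + b * y s ^ 2 - |y s| ^ (n + 2) := by
  have hpow := abs_pow_add_two_le hn hb (y s)
  have hdiv : |y s| ^ (n + 2) / (n + 2) ≤ |y s| ^ (n + 2) / 2 := by
    gcongr
    linarith [n.cast_nonneg (α := ℝ)]
  rw [emdenFowlerEnergy]
  linarith

lemma tendsto_virial_atBot (h : EmdenFowlerSolution n b c y w) (hn : 2 ≤ n) (hb : 0 < b)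
    (hc : 0 ≤ c) (hΦ : ∀ s, HasDerivAt Φ (|y s| ^ (2 * n)) s) (hbdd : BddBelow (range Φ)) {s₁ : ℝ}
    (hE : 0 < emdenFowlerEnergy n b y w s₁) : Tendsto (emdenFowlerVirial c y w) atBot atBot := by
  set C := 2 * (1 + 1 / b)
  have hsum : Tendsto (fun s => emdenFowlerVirial c y w s + C * Φ s) atBot atBot := by
    refine tendsto_atBot_atBot_of_eventually_le_deriv
      (fun s => (h.hasDerivAt_virial s).add ((hΦ s).const_mul C)) (mul_pos two_pos hE) ?_
    filter_upwards [eventually_le_atBot s₁] with s hs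
    linarith [h.antitone_energy hc hs, two_mul_energy_le (y := y) (w := w) hn hb s]
  obtain ⟨K, hK⟩ := hbdd
  refine tendsto_atBot_mono (fun s => ?_) (tendsto_atBot_add_const_right _ (-(C * K)) hsum)
  have : C * K ≤ C * Φ s := mul_le_mul_of_nonneg_left (hK (mem_range_self s)) (by positivity)
  linarith

lemma tendsto_sq_atBot_atTop (h : EmdenFowlerSolution n b c y w) (hc : 0 ≤ c)
    (hvirial : Tendsto (emdenFowlerVirial c y w) atBot atBot) :
    Tendsto (fun s => y s ^ 2) atBot atTop := by
  refine tendsto_neg_atBot_iff.1 (tendsto_atBot_atBot_of_eventually_le_deriv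
    (fun s => ((h.hasDerivAt_fst s).pow 2).neg) two_pos ?_)
  filter_upwards [hvirial.eventually_le_atBot (-1)] with s hs
  have : 0 ≤ c / 2 * y s ^ 2 := by positivity
  rw [emdenFowlerVirial] at hs
  norm_num
  linarith

lemma energy_nonpos (h : EmdenFowlerSolution n b c y w) (hn : 2 ≤ n) (hb : 0 < b) (hc : 0 ≤ c)
    (hΦ : ∀ s, HasDerivAt Φ (|y s| ^ (2 * n)) s) (hbdd : BddBelow (range Φ)) (s : ℝ) :
    emdenFowlerEnergy n b y w s ≤ 0 := by
  by_contra! hE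
  have hsq := h.tendsto_sq_atBot_atTop hc (h.tendsto_virial_atBot hn hb hc hΦ hbdd hE)
  have hΦlim : Tendsto Φ atBot atBot := by
    refine tendsto_atBot_atBot_of_eventually_le_deriv hΦ one_pos ?_
    filter_upwards [hsq.eventually_ge_atTop 1] with s hs
    rw [pow_mul, sq_abs]
    exact one_le_pow₀ hs
  exact not_bddBelow_of_tendsto_atBot hΦlim hbdd

lemma eq_zero (h : EmdenFowlerSolution n b c y w) (hn : 2 ≤ n) (hb : 0 < b) (hc : 0 < c)
    (hΦ : ∀ s, HasDerivAt Φ (|y s| ^ (2 * n)) s) (hbdd : BddBelow (range Φ))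
    (hlim : Tendsto y atTop (𝓝 0)) (s : ℝ) : y s = 0 := by
  have henergy : emdenFowlerEnergy n b y w = fun _ => 0 := funext fun s =>
    le_antisymm (h.energy_nonpos hn hb hc.le hΦ hbdd s) (h.energy_nonneg hc.le hlim s)
  have hw : ∀ s, w s = 0 := fun s => by
    have hderiv := h.hasDerivAt_energy s
    rw [henergy] at hderiv
    simpa [hc.ne'] using hderiv.unique (hasDerivAt_const s 0)
  have hconst : ∀ x, y x = y s := fun x =>
    is_const_of_deriv_eq_zero (fun z => (h.hasDerivAt_fst z).differentiableAt)
      (fun z => by rw [(h.hasDerivAt_fst z).deriv, hw]) x s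
  exact tendsto_nhds_unique (tendsto_const_nhds.congr fun x => (hconst x).symm) hlim

end EmdenFowlerSolution

/-! ### Radial stationary solutions -/

/-- The Emden–Fowler change of variables `y(s) = r^a Z(r)` with `r = e^s`. -/
noncomputable def emdenFowlerTransform (a : ℝ) (Z : ℝ → ℝ) (s : ℝ) : ℝ :=
  Real.exp (a * s) * Z (Real.exp s)

section StationarySolutions

variable {n : ℕ} {a : ℝ} {Z Z' : ℝ → ℝ}

lemma hasDerivAt_emdenFowlerTransform (a : ℝ) (hZ : ∀ r > 0, HasDerivAt Z (Z' r) r) (s : ℝ) :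
    HasDerivAt (emdenFowlerTransform a Z)
      (emdenFowlerTransform a (fun r => a * Z r + r * Z' r) s) s := by
  have hexp : HasDerivAt (fun s => Real.exp (a * s)) (Real.exp (a * s) * (a * 1)) s :=
    ((hasDerivAt_id s).const_mul a).exp
  refine (hexp.mul ((hZ _ (Real.exp_pos s)).comp s (Real.hasDerivAt_exp s))).congr_deriv ?_
  simp only [emdenFowlerTransform, Function.comp]
  ring

lemma abs_emdenFowlerTransform_pow {k m : ℕ} (ha : a * k = m) (Z : ℝ → ℝ) (s : ℝ) :
    |emdenFowlerTransform a Z s| ^ k = Real.exp s ^ m * |Z (Real.exp s)| ^ k := by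
  rw [emdenFowlerTransform, abs_mul, Real.abs_exp, mul_pow, ← Real.exp_nat_mul, ← Real.exp_nat_mul]
  congr 2
  rw [← ha]
  ring

lemma emdenFowlerSolution_transform (ha : a * n = 2) (hZ : ∀ r > 0, HasDerivAt Z (Z' r) r)
    (hZ' : ∀ r > 0, HasDerivAt Z' (-(3 / r * Z' r) - |Z r| ^ n * Z r) r) :
    EmdenFowlerSolution n (a * (2 - a)) (2 - 2 * a) (emdenFowlerTransform a Z)
      (emdenFowlerTransform a fun r => a * Z r + r * Z' r) where
  hasDerivAt_fst := hasDerivAt_emdenFowlerTransform a hZ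
  hasDerivAt_snd s := by
    refine (hasDerivAt_emdenFowlerTransform a (fun r hr => ((hZ r hr).const_mul a).add
      ((hasDerivAt_id r).mul (hZ' r hr))) s).congr_deriv ?_
    rw [abs_emdenFowlerTransform_pow (m := 2) (by simpa using ha)]
    have := (Real.exp_pos s).ne'
    simp only [emdenFowlerTransform, Pi.add_apply, Pi.mul_apply, id]
    field_simp
    ring

lemma exists_nonneg_primitive {F : ℝ → ℝ} (hcont : ContinuousOn F (Ioi 0))
    (hint : IntegrableOn F (Ioi 0)) (hF : ∀ r > 0, 0 ≤ F r) :
    ∃ Ψ : ℝ → ℝ, ∀ r > 0, HasDerivAt Ψ (F r) r ∧ 0 ≤ Ψ r := by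
  refine ⟨fun r => ∫ x in 0..r, F x, fun r hr => ⟨?_, ?_⟩⟩
  · exact intervalIntegral.integral_hasDerivAt_right
      ((intervalIntegrable_iff_integrableOn_Ioc_of_le hr.le).2 (hint.mono_set Ioc_subset_Ioi_self))
      (hcont.stronglyMeasurableAtFilter isOpen_Ioi r hr) (hcont.continuousAt (Ioi_mem_nhds hr))
  · simp only [intervalIntegral.integral_of_le hr.le]
    exact setIntegral_nonneg measurableSet_Ioc fun x hx => hF x hx.1

lemma integrableOn_abs_pow_mul_pow {k m : ℕ} (hcont : ContinuousOn Z (Ioi 0))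
    (hint : ∫⁻ r in Ioi (0 : ℝ), ENNReal.ofReal (|Z r| ^ k * r ^ m) < ⊤) :
    IntegrableOn (fun r => |Z r| ^ k * r ^ m) (Ioi 0) := by
  refine ⟨((hcont.abs.pow k).mul (by fun_prop)).aestronglyMeasurable measurableSet_Ioi, ?_⟩
  rwa [hasFiniteIntegral_iff_ofReal (ae_restrict_of_forall_mem measurableSet_Ioi
    fun r (hr : 0 < r) => by positivity)]

lemma exists_primitive_abs_emdenFowlerTransform (ha : a * n = 2) (hcont : ContinuousOn Z (Ioi 0))
    (hint : ∫⁻ r in Ioi (0 : ℝ), ENNReal.ofReal (|Z r| ^ (2 * n) * r ^ 3) < ⊤) :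
    ∃ Φ : ℝ → ℝ, (∀ s, HasDerivAt Φ (|emdenFowlerTransform a Z s| ^ (2 * n)) s) ∧
      BddBelow (range Φ) := by
  obtain ⟨Ψ, hΨ⟩ := exists_nonneg_primitive (F := fun r => |Z r| ^ (2 * n) * r ^ 3)
    ((hcont.abs.pow (2 * n)).mul (by fun_prop)) (integrableOn_abs_pow_mul_pow hcont hint)
    fun r hr => by positivity
  refine ⟨Ψ ∘ Real.exp, fun s => ?_, 0, forall_mem_range.2 fun s => (hΨ _ (Real.exp_pos s)).2⟩
  refine ((hΨ _ (Real.exp_pos s)).1.comp s (Real.hasDerivAt_exp s)).congr_deriv ?_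
  rw [abs_emdenFowlerTransform_pow (m := 4) (by push_cast; linarith)]
  ring

lemma tendsto_emdenFowlerTransform_atTop (ha : a < 1) (hdecay : Z =O[atTop] fun r => r⁻¹) :
    Tendsto (emdenFowlerTransform a Z) atTop (𝓝 0) := by
  have hexp : Tendsto (fun s => Real.exp (a * s) * (Real.exp s)⁻¹) atTop (𝓝 0) := by
    simp only [← Real.exp_neg, ← Real.exp_add]
    refine Real.tendsto_exp_atBot.comp ?_
    convert tendsto_id.const_mul_atTop_of_neg (sub_neg.2 ha) using 2
    simp only [id]
    ring
  exact ((Asymptotics.isBigO_refl _ _).mul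
    (hdecay.comp_tendsto Real.tendsto_exp_atTop)).trans_tendsto hexp

lemma stationary_eq_zero (hn : 3 ≤ n) (hZ : ∀ r > 0, HasDerivAt Z (Z' r) r)
    (hZ' : ∀ r > 0, HasDerivAt Z' (-(3 / r * Z' r) - |Z r| ^ n * Z r) r)
    (hint : ∫⁻ r in Ioi (0 : ℝ), ENNReal.ofReal (|Z r| ^ (2 * n) * r ^ 3) < ⊤)
    (hdecay : Z =O[atTop] fun r => r⁻¹) {r : ℝ} (hr : 0 < r) : Z r = 0 := by
  have hn3 : (3 : ℝ) ≤ n := mod_cast hn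
  obtain ⟨a, ha⟩ : ∃ a : ℝ, a * n = 2 := ⟨2 / n, by field_simp⟩
  have ha0 : 0 < a := by nlinarith
  have ha1 : a < 1 := by nlinarith
  obtain ⟨Φ, hΦ, hbdd⟩ := exists_primitive_abs_emdenFowlerTransform ha
    (fun r hr => (hZ r hr).continuousAt.continuousWithinAt) hint
  have hzero := (emdenFowlerSolution_transform ha hZ hZ').eq_zero (by omega)
    (mul_pos ha0 (by linarith)) (by linarith) hΦ hbdd
    (tendsto_emdenFowlerTransform_atTop ha1 hdecay) (Real.log r)
  rw [emdenFowlerTransform, Real.exp_log hr] at hzero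
  exact (mul_eq_zero.1 hzero).resolve_left (Real.exp_pos _).ne'

end StationarySolutions

/-! ### Rigidity of dispersing solutions -/

lemma abs_abs_pow_mul_sub_le (n : ℕ) {a b N : ℝ} (ha : |a| ≤ N) (hb : |b| ≤ N) :
    |(|a| ^ (n + 2) * a - |b| ^ (n + 2) * b)| ≤ (n + 3) * N ^ (n + 2) * |a - b| := by
  have hderiv : ∀ x : ℝ,
      HasDerivAt (fun x : ℝ => |x| ^ (n + 2) * x) ((n + 3) * |x| ^ (n + 2)) x := fun x => by
    refine ((hasDerivAt_abs_pow_add_two n x).mul (hasDerivAt_id x)).congr_deriv ?_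
    rw [pow_add, sq_abs, id]
    ring
  refine (convex_Icc (-N) N).norm_image_sub_le_of_norm_hasDerivWithin_le
    (fun x _ => (hderiv x).hasDerivWithinAt) (fun x hx => ?_) (abs_le.1 hb) (abs_le.1 ha)
  rw [Real.norm_of_nonneg (by positivity)]
  gcongr
  exact abs_le.2 hx

lemma quarticLipschitz_abs_pow_mul {n : ℕ} (hn : 4 ≤ n) :
    QuarticLipschitz fun x : ℝ => |x| ^ n * x where
  map_zero := mul_zero _
  exists_abs_sub_le M := by
    obtain ⟨m, rfl⟩ := Nat.exists_eq_add_of_le' hn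
    refine ⟨((m + 2 : ℕ) + 3) * |M| ^ m, by positivity, fun a b N ha hb hN => ?_⟩
    have hN0 : 0 ≤ N := (abs_nonneg a).trans ha
    refine (abs_abs_pow_mul_sub_le (m + 2) ha hb).trans ?_
    rw [show m + 2 + 2 = m + 4 from rfl, pow_add, ← mul_assoc]
    gcongr
    exact hN.trans (le_abs_self M)

namespace DispersingSolution

variable {f : ℝ → ℝ} {J : TwoJet} {t r : ℝ}

lemma dt_eq_zero (h : DispersingSolution f J) (hf : QuarticLipschitz f) (hr : |t| < r) :
    J.dt t r = 0 := by
  refine (h.hasGradOn.hasDerivAt_left (by simpa using hr)).unique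
    ((hasDerivAt_const t (J.val t r)).congr_of_eventuallyEq ?_)
  filter_upwards [continuous_abs.continuousAt.eventually_lt_const hr] with s hs
  exact h.val_eq_val hf hs hr

lemma dtt_eq_zero (h : DispersingSolution f J) (hf : QuarticLipschitz f) (hr : |t| < r) :
    J.dtt t r = 0 := by
  refine (h.hasGradOn_dt.hasDerivAt_left (by simpa using hr)).unique
    ((hasDerivAt_const t 0).congr_of_eventuallyEq ?_)
  filter_upwards [continuous_abs.continuousAt.eventually_lt_const hr] with s hs
  exact h.dt_eq_zero hf hs

lemma val_eq_zero {n : ℕ} (h : DispersingSolution (fun x => |x| ^ n * x) J) (hn : 4 ≤ n)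
    (hint : ∫⁻ r in Ioi (0 : ℝ), ENNReal.ofReal (|J.val 0 r| ^ (2 * n) * r ^ 3) < ⊤)
    (hr : |t| < r) : J.val t r = 0 := by
  have hf := quarticLipschitz_abs_pow_mul hn
  have hr0 : 0 < r := (abs_nonneg t).trans_lt hr
  have hcone : ∀ r > 0, (0 : ℝ) + |0| < r := fun r hr => by simpa using hr
  rw [h.val_eq_val hf hr (t' := 0) (by simpa using hr0)]
  refine stationary_eq_zero (by omega) (fun r hr => h.hasGradOn.hasDerivAt_right (hcone r hr))
    (fun r hr => (h.hasGradOn_dr.hasDerivAt_right (hcone r hr)).congr_deriv ?_) hint ?_ hr0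
  · have heq := h.eq 0 r (by simpa using hr)
    rw [h.dtt_eq_zero hf (by simpa using hr)] at heq
    linarith
  · obtain ⟨C, -, hC⟩ := h.exists_abs_val_le_div 1 one_pos
    refine Asymptotics.IsBigO.of_bound C ?_
    filter_upwards [eventually_gt_atTop 1] with r hr
    simpa [abs_of_pos (one_pos.trans hr), div_eq_mul_inv] using hC 0 r (by simpa using hr)

end DispersingSolution

lemma IsExtSol.exteriorSolution {p : ℕ} {u : ℝ → ℝ → ℝ} (h : IsExtSol p 2 0 u) :
    ExteriorSolution (fun x => |x| ^ (p - 1) * x) (TwoJet.ofFun u) where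
  toIsJetOn := TwoJet.isJetOn_ofFun h.1
  eq t r hr := by
    have heq := h.2 t r (by simpa using hr)
    simp only [TwoJet.ofFun]
    change dtu (dtu u) t r - _ - _ = _ at heq
    linarith

theorem stmt10_general {p : ℕ} (hp : 5 ≤ p) {C : NNReal} {u : ℝ → ℝ → ℝ} (hsol : IsExtSol p 2 0 u)
    (hdata : ∀ R > 0, eH R (u 0) (dtu u 0) < ⊤)
    (hcrit : ∫⁻ r in Ioi (0 : ℝ), ENNReal.ofReal (|u 0 r| ^ (2 * (p - 1)) * r ^ 3) < ⊤)
    (hsup : ∀ R > 0, supH R u ≤ C * eH R (u 0) (dtu u 0))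
    (hvan : ∀ R > 0, ExtEnergyVanishes R u) {t r : ℝ} (hr : |t| < r) : u t r = 0 := by
  have hext := hsol.exteriorSolution
  have henergy := dispersingEnergy_ofFun hext.toIsJetOn hdata hsup hvan
  have hdisp : DispersingSolution (fun x => |x| ^ (p - 1) * x) (TwoJet.ofFun u) :=
    ⟨hext, henergy, fun _ hd => henergy.exists_forall_abs_val_le_div hext.toIsJetOn
      (fun _ hε => frequently_abs_le_of_lintegral_lt_top hcrit hε) hd⟩
  exact hdisp.val_eq_zero (by omega) hcrit hr

/-- a non-radiative solution on `{r > |t|}` whose data lies in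
`L^{2(p-1)}(r³dr)` vanishes at some time `t₀` outside a ball: there exist `t₀` and
`R > 0` with `u(t₀,r) = 0` for all `r > |t₀| + R`. -/
theorem stmt10 (p : ℕ) (hodd : Odd p) (hp5 : 5 ≤ p) (C₀ : ℝ) (hC₀ : 0 < C₀)
    (u : ℝ → ℝ → ℝ)
    (hsol : IsExtSol p 2 0 u)
    (hdata : ∀ R₀ : ℝ, 0 < R₀ → eH R₀ (u 0) (fun r => dtu u 0 r) < ⊤)
    (hcrit : (∫⁻ r in Ioi (0:ℝ),
        ENNReal.ofReal (|u 0 r| ^ (2 * (p - 1)) * r ^ 3)) < ⊤)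
    (hbd : ∀ R₀ : ℝ, 0 < R₀ → ∀ ρ : ℝ, R₀ ≤ ρ →
      eLL 2 8 ρ u + eLL 3 6 ρ u + supH ρ u
        ≤ ENNReal.ofReal C₀ * eH ρ (u 0) (fun r => dtu u 0 r))
    (hvan : ∀ R₀ : ℝ, 0 < R₀ → ExtEnergyVanishes R₀ u) :
    ∃ t₀ : ℝ, ∃ R > (0:ℝ), ∀ r : ℝ, |t₀| + R < r → u t₀ r = 0 :=
  ⟨0, 1, one_pos, fun _ hr => stmt10_general hp5 hsol hdata hcrit
    (fun ρ hρ => le_add_self.trans (hbd ρ hρ ρ le_rfl)) hvan (by linarith)⟩
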